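/- arXiv:2012.06529 — 2 statements merged into one kernel-verified Lean document; each statement's English description precedes it below -/
import Mathlib

section
/- Let Φ = {f_i(x) = r_i x + t_i}_{i=1}^n be a Diophantine self-similar IFS on a compact interval I, and let ν be a self-similar measure for Φ. Then there exist α > 0, C > 0 and Q > 0 such that |F_q(ν)| ≤ C·(log|q|)^{−α} for all q ∈ ℝ with |q| ≥ Q. -/
/-!
Write `ν̂` for the characteristic function of `ν` and `G s = ‖ν̂ (exp s)‖²`. Self-similarity gives
`ν̂ q = ∑ pᵢ e(q tᵢ) ν̂ (rᵢ q)`, so by convexity `G s ≤ ∑ pᵢ G (s - aᵢ)` with `aᵢ = -log |rᵢ|`: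
the function `G` is subharmonic for the random walk on `ℝ` that moves down by `aᵢ` with
probability `pᵢ`.

Two distinct fixed points force `ν s ≤ C (diam s) ^ c`, and hence the average of `G` over a window
of fixed length at height `y` is `O(exp (-c' y))`: the Gaussian-weighted mean square of `ν̂` is,
by Parseval, a Gaussian energy of `ν`.

Pointwise decay comes from averaging. Given a threshold `K`, the function `G` has a majorant `u`
which is harmonic beyond `K`, Lipschitz with constant `O(exp K)`, and inherits the window bound at
height `K`, namely `O(exp (-c' K))`, at all heights above `K`. Since `u s` is the average of `u`
over the position of the walk after `n` steps, adding an independent Gaussian of variance `v` to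
that position bounds `u s` by the sup of the smoothed density times the integral of `u` over a
window, plus a Chebyshev error and a Lipschitz error `O(exp K * √v)`. The Diophantine condition
gives `|χ t| ≤ exp (-c t² / (1 + t²) ^ m)` for the characteristic function `χ` of a step, so that
the smoothed density is still `O(n ^ (-1 / 2))` when `v = n ^ (-2 a)` with `a` small. The choices
`exp K = n ^ (a / 2)`, a window of radius `n ^ (1 / 2 + ε)`, and `n` comparable to `s` give
`G s = O(s ^ (-ε))`, where `s = log |q|`.
-/

open MeasureTheory Filter Set
open scoped ENNReal Topology

noncomputable section

/-- The Fourier transform of a Borel measure on `ℝ` at frequency `q`. -/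
def fourierTransform (ν : Measure ℝ) (q : ℝ) : ℂ :=
  ∫ x, Complex.exp (((2 * Real.pi * q * x : ℝ) : ℂ) * Complex.I) ∂ν

/-- `ν` is a Rajchman measure: its Fourier transform vanishes at infinity. -/
def Rajchman (ν : Measure ℝ) : Prop :=
  Tendsto (fun q : ℝ => fourierTransform ν q) (cocompact ℝ) (nhds 0)

section

open ProbabilityTheory
open scoped NNReal

/-- The law of the sum of `n` independent random variables of law `μ`. -/
def convPow (μ : Measure ℝ) : ℕ → Measure ℝ
  | 0 => .dirac 0
  | n + 1 => μ ∗ convPow μ n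

variable {μ ν : Measure ℝ} [IsProbabilityMeasure μ] [IsProbabilityMeasure ν]

instance isProbabilityMeasure_convPow (n : ℕ) : IsProbabilityMeasure (convPow μ n) := by
  induction n with
  | zero => exact Measure.dirac.isProbabilityMeasure
  | succ n ih => exact Measure.probabilitymeasure_of_probabilitymeasures_conv μ (convPow μ n)

lemma charFun_convPow (n : ℕ) (t : ℝ) : charFun (convPow μ n) t = charFun μ t ^ n := by
  induction n with
  | zero => simp [convPow]
  | succ n ih => rw [convPow, charFun_conv, ih, pow_succ']

lemma memLp_id_conv (hμ : MemLp id 2 μ) (hν : MemLp id 2 ν) : MemLp id 2 (μ ∗ ν) := by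
  rw [Measure.conv, memLp_map_measure_iff aestronglyMeasurable_id (by fun_prop)]
  exact (hμ.comp_fst ν).add (hν.comp_snd μ)

lemma integral_id_conv (hμ : MemLp id 2 μ) (hν : MemLp id 2 ν) :
    ∫ x, x ∂(μ ∗ ν) = ∫ x, x ∂μ + ∫ x, x ∂ν := by
  have hμ₁ : Integrable (fun x : ℝ => x) μ := hμ.integrable one_le_two
  have hν₁ : Integrable (fun x : ℝ => x) ν := hν.integrable one_le_two
  have hμν : Integrable (fun x : ℝ => x) (μ ∗ ν) := (memLp_id_conv hμ hν).integrable one_le_two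
  have hinner (x : ℝ) : ∫ y, (x + y) ∂ν = x + ∫ y, y ∂ν := by
    simp [integral_add (integrable_const x) hν₁]
  simp [integral_conv hμν, hinner, integral_add hμ₁ (integrable_const _)]

lemma variance_id_conv (hμ : MemLp id 2 μ) (hν : MemLp id 2 ν) :
    Var[id; μ ∗ ν] = Var[id; μ] + Var[id; ν] := by
  rw [← variance_add_prod hμ hν, Measure.conv, variance_map aemeasurable_id (by fun_prop)]
  rfl

lemma memLp_id_convPow (hμ : MemLp id 2 μ) (n : ℕ) : MemLp id 2 (convPow μ n) := by
  induction n with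
  | zero => exact (memLp_const (0 : ℝ)).ae_eq (ae_eq_dirac id).symm
  | succ n ih => exact memLp_id_conv hμ ih

lemma integral_id_convPow (hμ : MemLp id 2 μ) (n : ℕ) :
    ∫ x, x ∂convPow μ n = n * ∫ x, x ∂μ := by
  induction n with
  | zero => simp [convPow]
  | succ n ih =>
    rw [convPow, integral_id_conv hμ (memLp_id_convPow hμ n), ih]
    push_cast
    ring

lemma variance_id_convPow (hμ : MemLp id 2 μ) (n : ℕ) :
    Var[id; convPow μ n] = n * Var[id; μ] := by
  induction n with
  | zero => simp [convPow]
  | succ n ih =>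
    rw [convPow, variance_id_conv hμ (memLp_id_convPow hμ n), ih]
    push_cast
    ring

/-- The averaging operator of the random walk with step law `μ`: the expected value of `v` after
one step to the left. -/
def walkAvg (μ : Measure ℝ) (v : ℝ → ℝ) (x : ℝ) : ℝ := ∫ a, v (x - a) ∂μ

variable {v : ℝ → ℝ}

lemma integrable_comp_sub (hv : Measurable v) (hv01 : ∀ x, v x ∈ Icc (0 : ℝ) 1) (x : ℝ) :
    Integrable (fun a => v (x - a)) μ :=
  .of_mem_Icc 0 1 (by fun_prop) (.of_forall fun a => hv01 (x - a))

lemma walkAvg_mem_Icc (hv : Measurable v) (hv01 : ∀ x, v x ∈ Icc (0 : ℝ) 1) (x : ℝ) :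
    walkAvg μ v x ∈ Icc (0 : ℝ) 1 := by
  refine ⟨integral_nonneg fun a => (hv01 _).1, ?_⟩
  calc walkAvg μ v x ≤ ∫ _, (1 : ℝ) ∂μ :=
        integral_mono (integrable_comp_sub hv hv01 x) (integrable_const 1) fun a => (hv01 (x - a)).2
    _ = 1 := by simp

lemma measurable_walkAvg (hv : Measurable v) : Measurable (walkAvg μ v) :=
  (StronglyMeasurable.integral_prod_right' (f := fun p : ℝ × ℝ => v (p.1 - p.2))
    (by fun_prop : Measurable fun p : ℝ × ℝ => v (p.1 - p.2)).stronglyMeasurable).measurable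

lemma walkAvg_conv (hv : Measurable v) (hv01 : ∀ x, v x ∈ Icc (0 : ℝ) 1) (x : ℝ) :
    walkAvg (μ ∗ ν) v x = walkAvg μ (walkAvg ν v) x := by
  rw [walkAvg, integral_conv (integrable_comp_sub hv hv01 x)]
  simp only [walkAvg, sub_sub]

lemma lipschitzOnWith_walkAvg {L : ℝ≥0} {s t : Set ℝ} (hv : Measurable v)
    (hv01 : ∀ x, v x ∈ Icc (0 : ℝ) 1) (hL : LipschitzOnWith L v s)
    (hst : ∀ x ∈ t, ∀ᵐ a ∂μ, x - a ∈ s) : LipschitzOnWith L (walkAvg μ v) t := by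
  refine LipschitzOnWith.of_dist_le_mul fun x hx y hy => ?_
  rw [Real.dist_eq, walkAvg, walkAvg, ← integral_sub (integrable_comp_sub hv hv01 x)
    (integrable_comp_sub hv hv01 y), ← Real.norm_eq_abs]
  refine (norm_integral_le_of_norm_le_const (C := L * dist x y) ?_).trans_eq (by simp)
  filter_upwards [hst x hx, hst y hy] with a hxa hya
  simpa [← Real.dist_eq] using hL.dist_le_mul _ hxa _ hya

lemma intervalIntegral_walkAvg (hv : Measurable v) (hv01 : ∀ x, v x ∈ Icc (0 : ℝ) 1) (y z : ℝ) :
    ∫ x in y..z, walkAvg μ v x = ∫ a, (∫ x in y - a..z - a, v x) ∂μ := by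
  have : IsFiniteMeasure (volume.restrict (uIoc y z)) :=
    inferInstanceAs (IsFiniteMeasure (volume.restrict (Ioc _ _)))
  have hint : Integrable (fun p : ℝ × ℝ => v (p.1 - p.2)) ((volume.restrict (uIoc y z)).prod μ) :=
    .of_mem_Icc 0 1 (by fun_prop) (.of_forall fun p => hv01 (p.1 - p.2))
  simp only [walkAvg]
  rw [intervalIntegral_integral_swap hint]
  simp only [intervalIntegral.integral_comp_sub_right]

lemma intervalIntegral_walkAvg_le {y z E : ℝ} (hv : Measurable v)
    (hv01 : ∀ x, v x ∈ Icc (0 : ℝ) 1) (hyz : y ≤ z)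
    (hE : ∀ᵐ a ∂μ, ∫ x in y - a..z - a, v x ≤ E) : ∫ x in y..z, walkAvg μ v x ≤ E := by
  rw [intervalIntegral_walkAvg hv hv01]
  refine (integral_mono_of_nonneg (.of_forall fun a => ?_) (integrable_const E) hE).trans_eq
    (by simp)
  exact intervalIntegral.integral_nonneg (by linarith) fun x _ => (hv01 x).1

lemma intervalIntegrable_of_mem_Icc (hv : Measurable v) (hv01 : ∀ x, v x ∈ Icc (0 : ℝ) 1)
    (y z : ℝ) : IntervalIntegrable v volume y z := by
  have hint (y z : ℝ) : IntegrableOn v (Ioc y z) :=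
    .of_mem_Icc 0 1 hv.aemeasurable (.of_forall hv01)
  exact ⟨hint y z, hint z y⟩

/-! ### Harmonic majorants -/

section Majorant

/-- The trapezoidal cutoff equal to `1` on `(-∞, K - ℓ]` and to `0` on `[K, ∞)`. -/
def cutoff (ℓ K x : ℝ) : ℝ := projIcc (0 : ℝ) 1 zero_le_one ((K - x) / ℓ)

/-- The function equal to `G` on `(-∞, K - ℓ]` and to `w` on `[K, ∞)`, interpolating linearly in
between. -/
def blend (ℓ K : ℝ) (G w : ℝ → ℝ) (x : ℝ) : ℝ :=
  cutoff ℓ K x * G x + (1 - cutoff ℓ K x) * w x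

/-- The `k`-th approximation from above to the solution of the Dirichlet problem for the walk with
step law `μ` on `[K, ∞)` with boundary values `G`. The transition zone `[K - ℓ, K]` keeps the
approximations Lipschitz. -/
def majorant (μ : Measure ℝ) (ℓ K : ℝ) (G : ℝ → ℝ) : ℕ → ℝ → ℝ
  | 0 => blend ℓ K G 1
  | k + 1 => blend ℓ K G (walkAvg μ (majorant μ ℓ K G k))

variable {μ : Measure ℝ} {ℓ A K : ℝ} {G w : ℝ → ℝ}

lemma cutoff_mem_Icc (x : ℝ) : cutoff ℓ K x ∈ Icc (0 : ℝ) 1 := Subtype.property _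

lemma cutoff_of_le (hℓ : 0 < ℓ) {x : ℝ} (hx : x ≤ K - ℓ) : cutoff ℓ K x = 1 := by
  rw [cutoff, projIcc_of_right_le _ ((one_le_div hℓ).2 (by linarith))]

lemma cutoff_of_ge (hℓ : 0 < ℓ) {x : ℝ} (hx : K ≤ x) : cutoff ℓ K x = 0 := by
  rw [cutoff, projIcc_of_le_left _ (div_nonpos_of_nonpos_of_nonneg (by linarith) hℓ.le)]

lemma continuous_cutoff : Continuous (cutoff ℓ K) := by
  unfold cutoff
  fun_prop

lemma lipschitzWith_cutoff (hℓ : 0 < ℓ) : LipschitzWith ℓ⁻¹.toNNReal (cutoff ℓ K) := by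
  have haff : LipschitzWith ℓ⁻¹.toNNReal fun x : ℝ => (K - x) / ℓ := by
    refine LipschitzWith.of_dist_le_mul fun x y => ?_
    rw [Real.dist_eq, Real.dist_eq, ← sub_div, abs_div, div_eq_inv_mul, sub_sub_sub_cancel_left,
      abs_sub_comm, abs_of_pos hℓ, Real.coe_toNNReal _ (inv_nonneg.2 hℓ.le)]
  have hcomp := (LipschitzWith.subtype_val _).comp ((LipschitzWith.projIcc zero_le_one).comp haff)
  rwa [one_mul, one_mul] at hcomp

lemma blend_of_le (hℓ : 0 < ℓ) {x : ℝ} (hx : x ≤ K - ℓ) : blend ℓ K G w x = G x := by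
  simp [blend, cutoff_of_le hℓ hx]

lemma blend_of_ge (hℓ : 0 < ℓ) {x : ℝ} (hx : K ≤ x) : blend ℓ K G w x = w x := by
  simp [blend, cutoff_of_ge hℓ hx]

lemma measurable_blend (hG : Measurable G) (hw : Measurable w) : Measurable (blend ℓ K G w) :=
  (continuous_cutoff.measurable.mul hG).add ((continuous_cutoff.measurable.const_sub 1).mul hw)

lemma blend_mem_Icc {x : ℝ} (hG : G x ∈ Icc (0 : ℝ) 1) (hw : w x ∈ Icc (0 : ℝ) 1) :
    blend ℓ K G w x ∈ Icc (0 : ℝ) 1 := by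
  have hc := cutoff_mem_Icc (ℓ := ℓ) (K := K) x
  exact convex_Icc (0 : ℝ) 1 hG hw hc.1 (by linarith [hc.2]) (by ring)

lemma le_blend {x : ℝ} (h : G x ≤ w x) : G x ≤ blend ℓ K G w x := by
  have hc := cutoff_mem_Icc (ℓ := ℓ) (K := K) x
  rw [blend]
  nlinarith [hc.2]

lemma blend_le_add {x : ℝ} (hG : 0 ≤ G x) (hw : 0 ≤ w x) : blend ℓ K G w x ≤ G x + w x := by
  have hc := cutoff_mem_Icc (ℓ := ℓ) (K := K) x
  exact add_le_add (mul_le_of_le_one_left hG hc.2) (mul_le_of_le_one_left hw (by linarith [hc.1]))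

lemma lipschitzOnWith_Iic_blend {Λ : ℝ≥0} (hℓ : 0 < ℓ) (hG01 : ∀ x, G x ∈ Icc (0 : ℝ) 1)
    (hw01 : ∀ x, w x ∈ Icc (0 : ℝ) 1) (hG : LipschitzOnWith Λ G (Iic K))
    (hw : LipschitzOnWith Λ w (Iic K)) :
    LipschitzOnWith (Λ + ℓ⁻¹.toNNReal) (blend ℓ K G w) (Iic K) := by
  refine LipschitzOnWith.of_dist_le_mul fun x hx y hy => ?_
  have hcy := cutoff_mem_Icc (ℓ := ℓ) (K := K) y
  have hGw : |G x - w x| ≤ 1 := by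
    rw [abs_le]
    constructor <;> linarith [(hG01 x).1, (hG01 x).2, (hw01 x).1, (hw01 x).2]
  have hc := (lipschitzWith_cutoff (K := K) hℓ).dist_le_mul x y
  have hGxy := hG.dist_le_mul x hx y hy
  have hwxy := hw.dist_le_mul x hx y hy
  rw [Real.dist_eq] at hc hGxy hwxy ⊢
  calc |blend ℓ K G w x - blend ℓ K G w y|
      = |(cutoff ℓ K x - cutoff ℓ K y) * (G x - w x) + (cutoff ℓ K y * (G x - G y) +
          (1 - cutoff ℓ K y) * (w x - w y))| := by
        rw [blend, blend]
        ring_nf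
    _ ≤ |cutoff ℓ K x - cutoff ℓ K y| * |G x - w x| + (cutoff ℓ K y * |G x - G y| +
          (1 - cutoff ℓ K y) * |w x - w y|) := by
        refine (abs_add_le _ _).trans (add_le_add (abs_mul _ _).le ((abs_add_le _ _).trans ?_))
        rw [abs_mul, abs_mul, abs_of_nonneg hcy.1, abs_of_nonneg (sub_nonneg.2 hcy.2)]
    _ ≤ ℓ⁻¹.toNNReal * dist x y * 1 + (cutoff ℓ K y * (Λ * dist x y) +
          (1 - cutoff ℓ K y) * (Λ * dist x y)) := by
        gcongr
        · exact hcy.1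
        · exact sub_nonneg.2 hcy.2
    _ = (Λ + ℓ⁻¹.toNNReal : ℝ≥0) * dist x y := by
        push_cast
        ring

lemma lipschitzOnWith_of_eqOn {L : ℝ≥0} {s : Set ℝ} {u v : ℝ → ℝ} (hv : LipschitzOnWith L v s)
    (h : EqOn u v s) : LipschitzOnWith L u s := fun x hx y hy => by
  rw [h hx, h hy]
  exact hv hx hy

lemma lipschitzWith_of_Iic_of_Ici {L : ℝ≥0} {u : ℝ → ℝ} (h₁ : LipschitzOnWith L u (Iic K))
    (h₂ : LipschitzOnWith L u (Ici K)) : LipschitzWith L u := by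
  have hle (x y : ℝ) (hxy : x ≤ y) : dist (u x) (u y) ≤ L * dist x y := by
    rcases le_total y K with hy | hy
    · exact h₁.dist_le_mul x (hxy.trans hy) y hy
    rcases le_total K x with hx | hx
    · exact h₂.dist_le_mul x hx y hy
    calc dist (u x) (u y) ≤ L * dist x K + L * dist K y :=
          (dist_triangle _ (u K) _).trans
            (add_le_add (h₁.dist_le_mul x hx K self_mem_Iic) (h₂.dist_le_mul K self_mem_Ici y hy))
      _ = L * dist x y := by
          rw [Real.dist_eq, Real.dist_eq, Real.dist_eq, abs_of_nonpos (by linarith),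
            abs_of_nonpos (by linarith), abs_of_nonpos (by linarith)]
          ring
  refine LipschitzWith.of_dist_le_mul fun x y => ?_
  rcases le_total x y with hxy | hxy
  · exact hle x y hxy
  · rw [dist_comm, dist_comm x]
    exact hle y x hxy

lemma majorant_of_le (hℓ : 0 < ℓ) (k : ℕ) {x : ℝ} (hx : x ≤ K - ℓ) :
    majorant μ ℓ K G k x = G x := by
  cases k <;> exact blend_of_le hℓ hx

lemma majorant_succ_of_ge (hℓ : 0 < ℓ) (k : ℕ) {x : ℝ} (hx : K ≤ x) :
    majorant μ ℓ K G (k + 1) x = walkAvg μ (majorant μ ℓ K G k) x := blend_of_ge hℓ hx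

lemma walkAvg_majorant_of_le (hℓ : 0 < ℓ) (hμ : ∀ᵐ a ∂μ, a ∈ Icc ℓ A) (k : ℕ) {x : ℝ}
    (hx : x ≤ K) : walkAvg μ (majorant μ ℓ K G k) x = walkAvg μ G x := by
  refine integral_congr_ae ?_
  filter_upwards [hμ] with a ha
  exact majorant_of_le hℓ k (by linarith [ha.1])

variable [IsProbabilityMeasure μ]

lemma pos_of_ae_mem_Icc (hℓ : 0 < ℓ) (hμ : ∀ᵐ a ∂μ, a ∈ Icc ℓ A) : 0 < A :=
  have ⟨_, ha⟩ := hμ.exists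
  hℓ.trans_le (ha.1.trans ha.2)

lemma measurable_majorant (hG : Measurable G) (k : ℕ) : Measurable (majorant μ ℓ K G k) := by
  induction k with
  | zero => exact measurable_blend hG measurable_const
  | succ k ih => exact measurable_blend hG (measurable_walkAvg ih)

lemma majorant_mem_Icc (hG : Measurable G) (hG01 : ∀ x, G x ∈ Icc (0 : ℝ) 1) (k : ℕ) (x : ℝ) :
    majorant μ ℓ K G k x ∈ Icc (0 : ℝ) 1 := by
  induction k generalizing x with
  | zero => exact blend_mem_Icc (hG01 x) ⟨zero_le_one, le_rfl⟩
  | succ k ih => exact blend_mem_Icc (hG01 x) (walkAvg_mem_Icc (measurable_majorant hG k) ih x)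

lemma le_majorant (hG : Measurable G) (hG01 : ∀ x, G x ∈ Icc (0 : ℝ) 1)
    (hsub : ∀ x, G x ≤ walkAvg μ G x) (k : ℕ) (x : ℝ) : G x ≤ majorant μ ℓ K G k x := by
  induction k generalizing x with
  | zero => exact le_blend (hG01 x).2
  | succ k ih =>
    refine le_blend ((hsub x).trans
      (integral_mono (integrable_comp_sub hG hG01 x) ?_ fun a => ih _))
    exact integrable_comp_sub (measurable_majorant hG k) (majorant_mem_Icc hG hG01 k) x

lemma majorant_add_eq_walkAvg (hℓ : 0 < ℓ) (hμ : ∀ᵐ a ∂μ, a ∈ Icc ℓ A)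
    (hG : Measurable G) (hG01 : ∀ x, G x ∈ Icc (0 : ℝ) 1) (k n : ℕ) {x : ℝ} (hx : K + n * A ≤ x) :
    majorant μ ℓ K G (k + n) x = walkAvg (convPow μ n) (majorant μ ℓ K G k) x := by
  have hA : 0 < A := pos_of_ae_mem_Icc hℓ hμ
  induction n generalizing x with
  | zero => simp [walkAvg, convPow]
  | succ n ih =>
    push_cast at hx
    have hn : 0 ≤ n * A := by positivity
    rw [← add_assoc, majorant_succ_of_ge hℓ _ (by linarith), convPow,
      walkAvg_conv (measurable_majorant hG k) (majorant_mem_Icc hG hG01 k)]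
    refine integral_congr_ae ?_
    filter_upwards [hμ] with a ha
    exact ih (by linarith [ha.2])

lemma lipschitzWith_majorant {Λ : ℝ≥0} (hℓ : 0 < ℓ) (hμ : ∀ᵐ a ∂μ, a ∈ Icc ℓ A)
    (hG : Measurable G) (hG01 : ∀ x, G x ∈ Icc (0 : ℝ) 1) (hGΛ : LipschitzOnWith Λ G (Iic K))
    (k : ℕ) : LipschitzWith (Λ + ℓ⁻¹.toNNReal) (majorant μ ℓ K G k) := by
  have hTG : LipschitzOnWith Λ (walkAvg μ G) (Iic K) := by
    refine lipschitzOnWith_walkAvg hG hG01 hGΛ fun x (hx : x ≤ K) => ?_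
    filter_upwards [hμ] with a ha
    exact (by linarith [ha.1] : x - a ≤ K)
  induction k with
  | zero =>
    have hone (L : ℝ≥0) (s : Set ℝ) : LipschitzOnWith L (1 : ℝ → ℝ) s :=
      ((LipschitzWith.const 1).weaken zero_le).lipschitzOnWith
    exact lipschitzWith_of_Iic_of_Ici
      (lipschitzOnWith_Iic_blend hℓ hG01 (fun _ => ⟨zero_le_one, le_rfl⟩) hGΛ (hone _ _))
      (lipschitzOnWith_of_eqOn (hone _ _) fun x hx => blend_of_ge hℓ hx)
  | succ k ih =>
    have hv := measurable_majorant (μ := μ) (ℓ := ℓ) (K := K) hG k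
    have hv01 := majorant_mem_Icc (μ := μ) (ℓ := ℓ) (K := K) hG hG01 k
    have hbelow : LipschitzOnWith Λ (walkAvg μ (majorant μ ℓ K G k)) (Iic K) :=
      lipschitzOnWith_of_eqOn hTG fun x hx => walkAvg_majorant_of_le hℓ hμ k hx
    have habove : LipschitzOnWith (Λ + ℓ⁻¹.toNNReal) (walkAvg μ (majorant μ ℓ K G k)) (Ici K) :=
      lipschitzOnWith_walkAvg (s := univ) hv hv01 ih.lipschitzOnWith (by simp)
    exact lipschitzWith_of_Iic_of_Ici
      (lipschitzOnWith_Iic_blend hℓ hG01 (walkAvg_mem_Icc hv hv01) hGΛ hbelow)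
      (lipschitzOnWith_of_eqOn habove fun x hx => majorant_succ_of_ge hℓ k hx)

variable {E : ℝ}

lemma intervalIntegral_majorant_le_two_mul (hℓ : 0 < ℓ) (hμ : ∀ᵐ a ∂μ, a ∈ Icc ℓ A)
    (hG : Measurable G) (hG01 : ∀ x, G x ∈ Icc (0 : ℝ) 1)
    (hE : ∀ y, K - 2 * A ≤ y → ∫ x in y - ℓ..y, G x ≤ E) (k : ℕ) {y : ℝ}
    (hy : y ∈ Icc (K - A) K) : ∫ x in y - ℓ..y, majorant μ ℓ K G (k + 1) x ≤ 2 * E := by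
  have hA : 0 < A := pos_of_ae_mem_Icc hℓ hμ
  have hTG := measurable_walkAvg (μ := μ) hG
  have hTG01 := walkAvg_mem_Icc (μ := μ) hG hG01
  have hTGE : ∫ x in y - ℓ..y, walkAvg μ G x ≤ E := by
    refine intervalIntegral_walkAvg_le hG hG01 (by linarith) ?_
    filter_upwards [hμ] with a ha
    rw [sub_right_comm]
    exact hE _ (by linarith [ha.2, hy.1])
  have hGi := intervalIntegrable_of_mem_Icc hG hG01 (y - ℓ) y
  have hTGi := intervalIntegrable_of_mem_Icc hTG hTG01 (y - ℓ) y
  calc ∫ x in y - ℓ..y, majorant μ ℓ K G (k + 1) x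
      ≤ ∫ x in y - ℓ..y, (G x + walkAvg μ G x) := by
        refine intervalIntegral.integral_mono_on (by linarith)
          (intervalIntegrable_of_mem_Icc (measurable_majorant hG _)
            (majorant_mem_Icc hG hG01 _) _ _)
          (hGi.add hTGi) fun x hx => ?_
        rw [← walkAvg_majorant_of_le hℓ hμ k (hx.2.trans hy.2)]
        exact blend_le_add (hG01 x).1
          (walkAvg_mem_Icc (measurable_majorant hG k) (majorant_mem_Icc hG hG01 k) x).1
    _ = (∫ x in y - ℓ..y, G x) + ∫ x in y - ℓ..y, walkAvg μ G x :=
        intervalIntegral.integral_add hGi hTGi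
    _ ≤ 2 * E := by linarith [hE y (by linarith [hy.1])]

lemma intervalIntegral_mono_interval_of_nonneg {v : ℝ → ℝ} (hv : Measurable v)
    (hv01 : ∀ x, v x ∈ Icc (0 : ℝ) 1) {a b c d : ℝ} (hca : c ≤ a) (hab : a ≤ b) (hbd : b ≤ d) :
    ∫ x in a..b, v x ≤ ∫ x in c..d, v x :=
  intervalIntegral.integral_mono_interval hca hab hbd (.of_forall fun x => (hv01 x).1)
    (intervalIntegrable_of_mem_Icc hv hv01 c d)

lemma intervalIntegral_majorant_le_of_mem_Icc (hℓ : 0 < ℓ) (hμ : ∀ᵐ a ∂μ, a ∈ Icc ℓ A)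
    (hG : Measurable G) (hG01 : ∀ x, G x ∈ Icc (0 : ℝ) 1)
    (hE : ∀ y, K - 2 * A ≤ y → ∫ x in y - ℓ..y, G x ≤ E) (k : ℕ) {y : ℝ}
    (hy : y ∈ Icc K (K + ℓ)) : ∫ x in y - ℓ..y, majorant μ ℓ K G (k + 2) x ≤ 4 * E := by
  have hA : 0 < A := pos_of_ae_mem_Icc hℓ hμ
  have hv (j : ℕ) : Measurable (majorant μ ℓ K G j) := measurable_majorant hG j
  have hv01 (j : ℕ) := majorant_mem_Icc (μ := μ) (ℓ := ℓ) (K := K) hG hG01 j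
  have hbelow (j : ℕ) {y : ℝ} (hy : y ∈ Icc (K - A) K) :
      ∫ x in y - ℓ..y, majorant μ ℓ K G (j + 1) x ≤ 2 * E :=
    intervalIntegral_majorant_le_two_mul hℓ hμ hG hG01 hE j hy
  have hleft : ∫ x in y - ℓ..K, majorant μ ℓ K G (k + 2) x ≤ 2 * E :=
    (intervalIntegral_mono_interval_of_nonneg (hv _) (hv01 _) (by linarith [hy.1])
      (by linarith [hy.2]) le_rfl).trans (hbelow (k + 1) ⟨by linarith, le_rfl⟩)
  have hright : ∫ x in K..y, majorant μ ℓ K G (k + 2) x ≤ 2 * E := by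
    rw [intervalIntegral.integral_congr fun x hx =>
      majorant_succ_of_ge hℓ (k + 1) (uIcc_of_le hy.1 ▸ hx).1]
    refine intervalIntegral_walkAvg_le (hv _) (hv01 _) hy.1 ?_
    filter_upwards [hμ] with a ha
    exact (intervalIntegral_mono_interval_of_nonneg (hv _) (hv01 _) (by linarith [hy.2])
      (by linarith [hy.1]) le_rfl).trans
        (hbelow k ⟨by linarith [ha.2, hy.1], by linarith [ha.1, hy.2]⟩)
  rw [← intervalIntegral.integral_add_adjacent_intervals
    (intervalIntegrable_of_mem_Icc (hv _) (hv01 _) (y - ℓ) K)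
    (intervalIntegrable_of_mem_Icc (hv _) (hv01 _) K y)]
  linarith

lemma intervalIntegral_majorant_le (hℓ : 0 < ℓ) (hμ : ∀ᵐ a ∂μ, a ∈ Icc ℓ A)
    (hG : Measurable G) (hG01 : ∀ x, G x ∈ Icc (0 : ℝ) 1)
    (hE : ∀ y, K - 2 * A ≤ y → ∫ x in y - ℓ..y, G x ≤ E) (k : ℕ) {y : ℝ}
    (hy : y ∈ Icc (K - A) (K + k * ℓ)) :
    ∫ x in y - ℓ..y, majorant μ ℓ K G (k + 1) x ≤ 4 * E := by
  have hA : 0 < A := pos_of_ae_mem_Icc hℓ hμ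
  have hE0 : 0 ≤ E := (intervalIntegral.integral_nonneg (by linarith) fun x _ => (hG01 x).1).trans
    (hE K (by linarith))
  have hbelow (j : ℕ) {z : ℝ} (hz : z ∈ Icc (K - A) K) :
      ∫ x in z - ℓ..z, majorant μ ℓ K G (j + 1) x ≤ 4 * E :=
    (intervalIntegral_majorant_le_two_mul hℓ hμ hG hG01 hE j hz).trans (by linarith)
  induction k generalizing y with
  | zero => exact hbelow 0 (by simpa using hy)
  | succ k ih =>
    push_cast at hy
    rcases le_total y K with hyK | hKy
    · exact hbelow (k + 1) ⟨hy.1, hyK⟩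
    rcases le_total y (K + ℓ) with hyℓ | hℓy
    · exact intervalIntegral_majorant_le_of_mem_Icc hℓ hμ hG hG01 hE k ⟨hKy, hyℓ⟩
    rw [intervalIntegral.integral_congr fun x hx => majorant_succ_of_ge hℓ (k + 1)
      (by linarith [(uIcc_of_le (show y - ℓ ≤ y by linarith) ▸ hx).1])]
    refine intervalIntegral_walkAvg_le (measurable_majorant hG _) (majorant_mem_Icc hG hG01 _)
      (by linarith) ?_
    filter_upwards [hμ] with a ha
    rw [sub_right_comm]
    exact ih ⟨by linarith [ha.2], by linarith [ha.1, hy.2]⟩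

end Majorant

/-! ### Gaussian smoothing -/

section Localisation

variable {μ ρ : Measure ℝ} {v : ℝ → ℝ}

lemma intervalIntegral_le_of_forall_window {ℓ E p q : ℝ} (hv : Measurable v)
    (hv01 : ∀ x, v x ∈ Icc (0 : ℝ) 1) (hℓ : 0 < ℓ) (hpq : p ≤ q)
    (hE : ∀ y ∈ Icc p (q + ℓ), ∫ x in y - ℓ..y, v x ≤ E) :
    ∫ x in p..q, v x ≤ ((q - p) / ℓ + 1) * E := by
  have hi (y z : ℝ) := intervalIntegrable_of_mem_Icc hv hv01 y z
  have hE0 : 0 ≤ E := (intervalIntegral.integral_nonneg (by linarith) fun x _ => (hv01 x).1).trans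
    (hE q ⟨hpq, by linarith⟩)
  have hmul (N : ℕ) (hN : p + N * ℓ ≤ q + ℓ) : ∫ x in p..p + N * ℓ, v x ≤ N * E := by
    induction N with
    | zero => simp
    | succ N ih =>
      push_cast at hN ⊢
      have hN0 : 0 ≤ N * ℓ := by positivity
      have hlast := hE (p + (N + 1) * ℓ) ⟨by linarith, hN⟩
      rw [show p + (N + 1) * ℓ - ℓ = p + N * ℓ by ring] at hlast
      rw [← intervalIntegral.integral_add_adjacent_intervals (hi p (p + N * ℓ)) (hi _ _)]
      linarith [ih (by linarith)]
  have hquot : 0 ≤ (q - p) / ℓ := div_nonneg (by linarith) hℓ.le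
  have hle : q - p ≤ ⌈(q - p) / ℓ⌉₊ * ℓ := (div_le_iff₀ hℓ).1 (Nat.le_ceil _)
  have hlt := (Nat.ceil_lt_add_one hquot).le
  have hlt' : ⌈(q - p) / ℓ⌉₊ * ℓ ≤ q - p + ℓ := by
    calc ⌈(q - p) / ℓ⌉₊ * ℓ ≤ ((q - p) / ℓ + 1) * ℓ := by gcongr
      _ = q - p + ℓ := by rw [add_mul, div_mul_cancel₀ _ hℓ.ne', one_mul]
  calc ∫ x in p..q, v x ≤ ∫ x in p..p + ⌈(q - p) / ℓ⌉₊ * ℓ, v x :=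
        intervalIntegral_mono_interval_of_nonneg hv hv01 le_rfl hpq (by linarith)
    _ ≤ ⌈(q - p) / ℓ⌉₊ * E := hmul _ (by linarith)
    _ ≤ ((q - p) / ℓ + 1) * E := by gcongr

lemma setIntegral_comp_sub_le {S : ℝ} (hS : 0 ≤ S) (hρS : ρ ≤ ENNReal.ofReal S • volume)
    (hv : Measurable v) (hv01 : ∀ x, v x ∈ Icc (0 : ℝ) 1) (x : ℝ) {c d : ℝ} (hcd : c ≤ d) :
    ∫ y in Ioc c d, v (x - y) ∂ρ ≤ S * ∫ y in x - d..x - c, v y := by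
  have hvol : IntegrableOn (fun y => v (x - y)) (Ioc c d) :=
    .of_mem_Icc 0 1 (by fun_prop) (.of_forall fun y => hv01 (x - y))
  have hint : Integrable (fun y => v (x - y)) ((ENNReal.ofReal S • volume).restrict (Ioc c d)) := by
    rw [Measure.restrict_smul]
    exact Integrable.smul_measure hvol ENNReal.ofReal_ne_top
  calc ∫ y in Ioc c d, v (x - y) ∂ρ ≤ ∫ y in Ioc c d, v (x - y) ∂(ENNReal.ofReal S • volume) :=
        integral_mono_measure (Measure.restrict_mono le_rfl hρS) (.of_forall fun y => (hv01 _).1)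
          hint
    _ = S * ∫ y in x - d..x - c, v y := by
        rw [Measure.restrict_smul, integral_smul_measure, ENNReal.toReal_ofReal hS,
          ← intervalIntegral.integral_of_le hcd, intervalIntegral.integral_comp_sub_left,
          smul_eq_mul]

variable [IsProbabilityMeasure μ] [IsProbabilityMeasure ρ]

lemma walkAvg_le_of_le_smul_volume {S B : ℝ} (hρ : MemLp id 2 ρ) (hS : 0 ≤ S)
    (hρS : ρ ≤ ENNReal.ofReal S • volume) (hB : 0 < B) (hv : Measurable v)
    (hv01 : ∀ x, v x ∈ Icc (0 : ℝ) 1) (x : ℝ) :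
    walkAvg ρ v x ≤ S * (∫ y in x - (∫ z, z ∂ρ) - B..x - (∫ z, z ∂ρ) + B, v y) +
      Var[id; ρ] / B ^ 2 := by
  set m := ∫ z, z ∂ρ
  set near := Ioc (m - B) (m + B)
  set far := {y : ℝ | B ≤ |y - m|}
  have hfar : MeasurableSet far := measurableSet_le measurable_const (by fun_prop)
  have hcheb : ρ.real far ≤ Var[id; ρ] / B ^ 2 := by
    rw [measureReal_def]
    refine ENNReal.toReal_le_of_le_ofReal (div_nonneg (variance_nonneg _ _) (sq_nonneg B)) ?_
    exact meas_ge_le_variance_div_sq hρ hB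
  have hnear : ∫ y in near, v (x - y) ∂ρ ≤ S * ∫ y in x - m - B..x - m + B, v y := by
    have h := setIntegral_comp_sub_le hS hρS hv hv01 x (show m - B ≤ m + B by linarith)
    rwa [sub_add_eq_sub_sub, sub_sub_eq_add_sub, add_sub_right_comm] at h
  have hpt (y : ℝ) : v (x - y) ≤ near.indicator (fun y => v (x - y)) y + far.indicator 1 y := by
    by_cases hy : y ∈ near
    · simpa [hy] using indicator_nonneg (s := far) (f := (1 : ℝ → ℝ)) (fun _ _ => zero_le_one) y
    · have : y ∈ far := by
        by_contra hlt
        obtain ⟨h₁, h₂⟩ := abs_lt.1 (not_le.1 (show ¬B ≤ |y - m| from hlt))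
        exact hy ⟨by linarith, by linarith⟩
      simpa [hy, this] using (hv01 (x - y)).2
  have hi₁ : Integrable (near.indicator fun y => v (x - y)) ρ :=
    (integrable_comp_sub hv hv01 x).indicator measurableSet_Ioc
  have hi₂ : Integrable (far.indicator (1 : ℝ → ℝ)) ρ := (integrable_const 1).indicator hfar
  calc walkAvg ρ v x ≤ ∫ y, (near.indicator (fun y => v (x - y)) y + far.indicator 1 y) ∂ρ :=
        integral_mono (integrable_comp_sub hv hv01 x) (hi₁.add hi₂) hpt
    _ = ∫ y in near, v (x - y) ∂ρ + ρ.real far := by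
        rw [integral_add hi₁ hi₂, integral_indicator measurableSet_Ioc, integral_indicator_one hfar]
    _ ≤ _ := add_le_add hnear hcheb

lemma integral_abs_le_sqrt_integral_sq (hρ : MemLp id 2 ρ) :
    ∫ x, |x| ∂ρ ≤ √(∫ x, x ^ 2 ∂ρ) := by
  have hvar := variance_nonneg |(id : ℝ → ℝ)| ρ
  rw [variance_eq_sub hρ.abs] at hvar
  refine Real.le_sqrt_of_sq_le ?_
  simpa using hvar

lemma walkAvg_le_walkAvg_conv_add {L : ℝ≥0} (hρ : MemLp id 2 ρ) (hL : LipschitzWith L v)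
    (hv01 : ∀ x, v x ∈ Icc (0 : ℝ) 1) (x : ℝ) :
    walkAvg μ v x ≤ walkAvg (μ ∗ ρ) v x + L * √(∫ y, y ^ 2 ∂ρ) := by
  have hv : Measurable v := hL.continuous.measurable
  have habs : Integrable (fun z : ℝ => |z|) ρ := (hρ.integrable one_le_two).abs
  have hsmooth (y : ℝ) : v y ≤ walkAvg ρ v y + L * √(∫ y, y ^ 2 ∂ρ) := by
    have hi := integrable_comp_sub (μ := ρ) hv hv01 y
    calc v y = ∫ _, v y ∂ρ := by simp
      _ ≤ ∫ z, (v (y - z) + L * |z|) ∂ρ := by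
          refine integral_mono (integrable_const _) (hi.add (habs.const_mul _)) fun z => ?_
          have hyz := (le_abs_self _).trans (hL.dist_le_mul y (y - z))
          rw [Real.dist_eq, sub_sub_cancel] at hyz
          linarith
      _ = walkAvg ρ v y + L * ∫ z, |z| ∂ρ := by
          rw [integral_add hi (habs.const_mul _), integral_const_mul, walkAvg]
      _ ≤ walkAvg ρ v y + L * √(∫ y, y ^ 2 ∂ρ) := by
          gcongr
          exact integral_abs_le_sqrt_integral_sq hρ
  have hi := integrable_comp_sub (μ := μ) (measurable_walkAvg (μ := ρ) hv)
    (walkAvg_mem_Icc hv hv01) x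
  calc walkAvg μ v x ≤ ∫ a, (walkAvg ρ v (x - a) + L * √(∫ y, y ^ 2 ∂ρ)) ∂μ :=
        integral_mono (integrable_comp_sub hv hv01 x) (hi.add (integrable_const _))
          fun a => hsmooth (x - a)
    _ = walkAvg (μ ∗ ρ) v x + L * √(∫ y, y ^ 2 ∂ρ) := by
        rw [walkAvg_conv hv hv01, integral_add hi (integrable_const _)]
        simp [walkAvg]

end Localisation

section GaussianParseval

lemma integral_charFun_comm {F : Type*} [NormedAddCommGroup F] [InnerProductSpace ℝ F]
    [MeasurableSpace F] [OpensMeasurableSpace F] [SecondCountableTopology F] (μ ρ : Measure F)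
    [IsFiniteMeasure μ] [IsFiniteMeasure ρ] : ∫ t, charFun μ t ∂ρ = ∫ x, charFun ρ x ∂μ := by
  have hint : Integrable (fun p : F × F => Complex.exp (inner ℝ p.2 p.1 * Complex.I))
      (ρ.prod μ) :=
    .of_bound (by fun_prop) 1 (.of_forall fun p => (Complex.norm_exp_ofReal_mul_I _).le)
  simp only [charFun_apply]
  rw [integral_integral_swap hint]
  simp only [real_inner_comm]

lemma norm_charFun_map_const_sub (μ : Measure ℝ) (x t : ℝ) :
    ‖charFun (μ.map fun y => x - y) t‖ = ‖charFun μ t‖ := by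
  have hmap : (μ.map fun y => x - y) = (μ.map fun y => -1 * y).map fun y => x + y := by
    rw [Measure.map_map (by fun_prop) (by fun_prop)]
    congr 1
    ext y
    simp [sub_eq_add_neg]
  rw [hmap, charFun_map_const_add, charFun_map_mul, norm_mul, neg_one_mul, charFun_neg,
    RCLike.norm_conj, Complex.norm_exp_ofReal_mul_I, mul_one]

variable {μ : Measure ℝ} [IsProbabilityMeasure μ]

lemma integral_exp_neg_sq_eq_integral_charFun (w : ℝ≥0) :
    ((∫ x, Real.exp (-(w * x ^ 2 / 2)) ∂μ : ℝ) : ℂ) = ∫ t, charFun μ t ∂gaussianReal 0 w := by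
  rw [integral_charFun_comm, ← integral_complex_ofReal]
  refine integral_congr_ae (.of_forall fun x => ?_)
  simp [charFun_gaussianReal]

lemma integral_gaussianPDFReal_le {v : ℝ≥0} (x : ℝ) :
    ∫ y, gaussianPDFReal y v x ∂μ ≤
      (√(2 * Real.pi * v))⁻¹ * ∫ t, ‖charFun μ t‖ ∂gaussianReal 0 v⁻¹ := by
  have : IsProbabilityMeasure (μ.map fun y => x - y) :=
    Measure.isProbabilityMeasure_map (by fun_prop)
  have hexp (y : ℝ) : gaussianPDFReal y v x =
      (√(2 * Real.pi * v))⁻¹ * Real.exp (-((v⁻¹ : ℝ≥0) * (x - y) ^ 2 / 2)) := by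
    rw [gaussianPDFReal, NNReal.coe_inv]
    ring_nf
  have hparseval : ∫ y, Real.exp (-((v⁻¹ : ℝ≥0) * (x - y) ^ 2 / 2)) ∂μ ≤
      ∫ t, ‖charFun μ t‖ ∂gaussianReal 0 v⁻¹ := by
    have h := integral_exp_neg_sq_eq_integral_charFun (μ := μ.map fun y => x - y) v⁻¹
    rw [integral_map (by fun_prop) (by fun_prop)] at h
    refine (le_abs_self _).trans ?_
    rw [← Real.norm_eq_abs, ← Complex.norm_real, h]
    refine (norm_integral_le_integral_norm _).trans_eq ?_
    simp only [norm_charFun_map_const_sub]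
  simp only [hexp, integral_const_mul]
  gcongr

lemma conv_gaussianReal_le_smul_volume {v : ℝ≥0} (hv : v ≠ 0) :
    μ ∗ gaussianReal 0 v ≤ ENNReal.ofReal
      ((√(2 * Real.pi * v))⁻¹ * ∫ t, ‖charFun μ t‖ ∂gaussianReal 0 v⁻¹) • volume := by
  have hmeas : Measurable fun p : ℝ × ℝ => gaussianPDF p.1 v p.2 := by
    unfold gaussianPDF gaussianPDFReal
    fun_prop
  have hdens (x : ℝ) : ∫⁻ y, gaussianPDF y v x ∂μ ≤ ENNReal.ofReal
      ((√(2 * Real.pi * v))⁻¹ * ∫ t, ‖charFun μ t‖ ∂gaussianReal 0 v⁻¹) := by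
    have hint : Integrable (fun y => gaussianPDFReal y v x) μ := by
      refine .of_mem_Icc 0 (√(2 * Real.pi * v))⁻¹ ?_ (.of_forall fun y =>
        ⟨gaussianPDFReal_nonneg y v x, ?_⟩)
      · unfold gaussianPDFReal
        fun_prop
      · exact mul_le_of_le_one_right (by positivity)
          (Real.exp_le_one_iff.2 (div_nonpos_of_nonpos_of_nonneg (by simp [sq_nonneg]) (by simp)))
    unfold gaussianPDF
    rw [← ofReal_integral_eq_lintegral_ofReal hint
      (.of_forall fun y => gaussianPDFReal_nonneg y v x)]
    exact ENNReal.ofReal_le_ofReal (integral_gaussianPDFReal_le x)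
  refine Measure.le_intro fun s hs _ => ?_
  calc (μ ∗ gaussianReal 0 v) s = ∫⁻ y, gaussianReal y v s ∂μ := by
        rw [← lintegral_indicator_one hs, Measure.lintegral_conv (measurable_one.indicator hs)]
        refine lintegral_congr fun y => ?_
        have hshift := gaussianReal_map_const_add (μ := 0) (v := v) y
        rw [zero_add] at hshift
        rw [← hshift, Measure.map_apply (by fun_prop) hs,
          ← lintegral_indicator_one (measurableSet_preimage (by fun_prop) hs)]
        rfl
    _ = ∫⁻ y, (∫⁻ x in s, gaussianPDF y v x) ∂μ := by
        simp only [gaussianReal_apply _ hv]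
    _ = ∫⁻ x in s, (∫⁻ y, gaussianPDF y v x ∂μ) := lintegral_lintegral_swap hmeas.aemeasurable
    _ ≤ ∫⁻ _ in s, ENNReal.ofReal
          ((√(2 * Real.pi * v))⁻¹ * ∫ t, ‖charFun μ t‖ ∂gaussianReal 0 v⁻¹) :=
        lintegral_mono hdens
    _ = _ := by simp

end GaussianParseval

section Density

lemma exp_neg_le_factorial_div_pow (k : ℕ) {x : ℝ} (hx : 0 < x) :
    Real.exp (-x) ≤ k.factorial / x ^ k := by
  rw [Real.exp_neg, ← inv_div]
  exact inv_anti₀ (by positivity) (Real.pow_div_factorial_le_exp x hx.le k)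

lemma exp_neg_mul_exp_neg_le {c v : ℝ} {m n : ℕ} (hc : 0 < c) (hv : 0 < v) (hm : 1 ≤ m)
    (hn : 0 < n) (hnv : 1 ≤ n * v ^ (2 * m - 1)) {t : ℝ} (ht : 1 ≤ t ^ 2) :
    Real.exp (-(n * (c * t ^ 2 / (1 + t ^ 2) ^ m))) * Real.exp (-(v * t ^ 2 / 2)) ≤
      8 * (2 * m - 1).factorial * 4 ^ (2 * m - 1) / c ^ 2 / n * (1 + t ^ 2)⁻¹ := by
  obtain ⟨j, rfl⟩ := Nat.exists_eq_add_of_le' hm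
  have hk : 2 * (j + 1) - 1 = 2 * j + 1 := by omega
  rw [hk] at hnv ⊢
  have : (0 : ℝ) < n := by exact_mod_cast hn
  set s := 1 + t ^ 2
  have hs : 0 < s := by positivity
  have hts : s / 2 ≤ t ^ 2 := by simp only [s]; linarith
  have hstep : Real.exp (-(n * (c * t ^ 2 / s ^ (j + 1)))) ≤ 8 * s ^ (2 * j) / (c * n) ^ 2 :=
    calc Real.exp (-(n * (c * t ^ 2 / s ^ (j + 1))))
        ≤ Real.exp (-(c * n / (2 * s ^ j))) := by
          rw [Real.exp_le_exp, neg_le_neg_iff]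
          calc c * n / (2 * s ^ j) = n * (c * (s / 2) / s ^ (j + 1)) := by field_simp; ring
            _ ≤ _ := by gcongr
      _ ≤ (2).factorial / (c * n / (2 * s ^ j)) ^ 2 :=
          exp_neg_le_factorial_div_pow 2 (by positivity)
      _ = 8 * s ^ (2 * j) / (c * n) ^ 2 := by
          rw [Nat.factorial_two]
          field_simp
          ring
  have hgauss : Real.exp (-(v * t ^ 2 / 2)) ≤
      (2 * j + 1).factorial * 4 ^ (2 * j + 1) / (v * s) ^ (2 * j + 1) :=
    calc Real.exp (-(v * t ^ 2 / 2)) ≤ Real.exp (-(v * s / 4)) := by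
          rw [Real.exp_le_exp, neg_le_neg_iff]
          nlinarith
      _ ≤ (2 * j + 1).factorial / (v * s / 4) ^ (2 * j + 1) :=
          exp_neg_le_factorial_div_pow _ (by positivity)
      _ = _ := by rw [div_pow, div_div_eq_mul_div]
  calc _ ≤ 8 * s ^ (2 * j) / (c * n) ^ 2 *
          ((2 * j + 1).factorial * 4 ^ (2 * j + 1) / (v * s) ^ (2 * j + 1)) := by gcongr
    _ = 8 * (2 * j + 1).factorial * 4 ^ (2 * j + 1) / c ^ 2 / n * s⁻¹ *
          (n * v ^ (2 * j + 1))⁻¹ := by rw [mul_pow v]; field_simp; ring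
    _ ≤ _ := mul_le_of_le_one_right (by positivity) (inv_le_one_of_one_le₀ hnv)

lemma exp_neg_mul_exp_neg_le_add {c v : ℝ} {m n : ℕ} (hc : 0 < c) (hv : 0 < v) (hm : 1 ≤ m)
    (hn : 0 < n) (hnv : 1 ≤ n * v ^ (2 * m - 1)) (t : ℝ) :
    Real.exp (-(n * (c * t ^ 2 / (1 + t ^ 2) ^ m))) * Real.exp (-(v * t ^ 2 / 2)) ≤
      Real.exp (-(c * n / 2 ^ m) * t ^ 2) +
        8 * (2 * m - 1).factorial * 4 ^ (2 * m - 1) / c ^ 2 / n * (1 + t ^ 2)⁻¹ := by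
  rcases le_total 1 (t ^ 2) with ht | ht
  · exact (exp_neg_mul_exp_neg_le hc hv hm hn hnv ht).trans
      (le_add_of_nonneg_left (Real.exp_pos _).le)
  · calc _ ≤ Real.exp (-(n * (c * t ^ 2 / (1 + t ^ 2) ^ m))) :=
          mul_le_of_le_one_right (Real.exp_pos _).le
            (Real.exp_le_one_iff.2 (neg_nonpos.2 (by positivity)))
      _ ≤ Real.exp (-(c * n / 2 ^ m) * t ^ 2) := by
          rw [Real.exp_le_exp, neg_mul, neg_le_neg_iff]
          calc c * n / 2 ^ m * t ^ 2 = n * (c * t ^ 2 / 2 ^ m) := by ring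
            _ ≤ _ := by gcongr; linarith
      _ ≤ _ := le_add_of_nonneg_right (by positivity)

variable {μ : Measure ℝ} [IsProbabilityMeasure μ] {c : ℝ} {m : ℕ}

lemma integral_norm_charFun_gaussianReal_le {v : ℝ≥0} {n : ℕ} (hc : 0 < c) (hm : 1 ≤ m)
    (hμ : ∀ t, ‖charFun μ t‖ ≤ Real.exp (-(c * t ^ 2 / (1 + t ^ 2) ^ m))) (hv : v ≠ 0)
    (hn : 0 < n) (hnv : 1 ≤ n * (v : ℝ) ^ (2 * m - 1)) :
    (√(2 * Real.pi * v))⁻¹ * ∫ t, ‖charFun (convPow μ n) t‖ ∂gaussianReal 0 v⁻¹ ≤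
      (2 * Real.pi)⁻¹ * (√(Real.pi / (c * n / 2 ^ m)) +
        8 * (2 * m - 1).factorial * 4 ^ (2 * m - 1) / c ^ 2 / n * Real.pi) := by
  have hv' : (0 : ℝ) < v := NNReal.coe_pos.2 (pos_of_ne_zero hv)
  have : (0 : ℝ) < n := by exact_mod_cast hn
  set D := 8 * (2 * m - 1).factorial * 4 ^ (2 * m - 1) / c ^ 2 / (n : ℝ)
  have hpdf (t : ℝ) : (√(2 * Real.pi * v))⁻¹ * gaussianPDFReal 0 v⁻¹ t =
      (2 * Real.pi)⁻¹ * Real.exp (-(v * t ^ 2 / 2)) := by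
    have hsqrt : √(2 * Real.pi * v) * √(2 * Real.pi * (v : ℝ)⁻¹) = 2 * Real.pi := by
      rw [← Real.sqrt_mul (by positivity), mul_mul_mul_comm, mul_inv_cancel₀ hv'.ne', mul_one,
        Real.sqrt_mul_self (by positivity)]
    rw [gaussianPDFReal, NNReal.coe_inv, ← mul_assoc, ← mul_inv, hsqrt, sub_zero]
    congr 2
    field_simp
  rw [integral_gaussianReal_eq_integral_smul (inv_ne_zero hv), ← integral_const_mul]
  simp only [smul_eq_mul, ← mul_assoc, hpdf]
  simp only [mul_assoc, integral_const_mul]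
  gcongr
  have hexp := integrable_exp_neg_mul_sq (b := c * n / 2 ^ m) (by positivity)
  have hinv : Integrable fun t : ℝ => D * (1 + t ^ 2)⁻¹ := integrable_inv_one_add_sq.const_mul D
  calc ∫ t, Real.exp (-(v * t ^ 2 / 2)) * ‖charFun (convPow μ n) t‖
      ≤ ∫ t, (Real.exp (-(c * n / 2 ^ m) * t ^ 2) + D * (1 + t ^ 2)⁻¹) := by
        refine integral_mono_of_nonneg (.of_forall fun t => by positivity) (hexp.add hinv)
          (.of_forall fun t => ?_)
        dsimp only
        rw [charFun_convPow, norm_pow, mul_comm]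
        refine le_trans ?_ (exp_neg_mul_exp_neg_le_add hc hv' hm hn hnv t)
        gcongr
        rw [neg_mul_eq_mul_neg, Real.exp_nat_mul]
        gcongr
        exact hμ t
    _ = _ := by
        rw [integral_add hexp hinv, integral_gaussian, integral_const_mul,
          integral_univ_inv_one_add_sq]

lemma exists_convPow_conv_gaussianReal_le_smul_volume (hc : 0 < c) (hm : 1 ≤ m)
    (hμ : ∀ t, ‖charFun μ t‖ ≤ Real.exp (-(c * t ^ 2 / (1 + t ^ 2) ^ m))) :
    ∃ C, 0 < C ∧ ∀ (v : ℝ≥0) (n : ℕ), v ≠ 0 → 0 < n → 1 ≤ n * (v : ℝ) ^ (2 * m - 1) →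
      convPow μ n ∗ gaussianReal 0 v ≤ ENNReal.ofReal (C / √n) • volume := by
  set D := 8 * (2 * m - 1).factorial * 4 ^ (2 * m - 1) / c ^ 2
  refine ⟨(2 * Real.pi)⁻¹ * (√(Real.pi / (c / 2 ^ m)) + D * Real.pi), by positivity,
    fun v n hv hn hnv => (conv_gaussianReal_le_smul_volume hv).trans ?_⟩
  have hsqrt : 1 ≤ √(n : ℝ) := Real.one_le_sqrt.2 (by exact_mod_cast hn)
  have hsqrt_le : √(n : ℝ) ≤ n := by
    nlinarith [Real.mul_self_sqrt (Nat.cast_nonneg (α := ℝ) n)]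
  have hle : (2 * Real.pi)⁻¹ * (√(Real.pi / (c * n / 2 ^ m)) + D / n * Real.pi) ≤
      (2 * Real.pi)⁻¹ * (√(Real.pi / (c / 2 ^ m)) + D * Real.pi) / √n := by
    calc _ ≤ (2 * Real.pi)⁻¹ * (√(Real.pi / (c / 2 ^ m)) / √n + D / √n * Real.pi) := by
          rw [mul_div_right_comm c, ← div_div Real.pi, Real.sqrt_div' _ (Nat.cast_nonneg n)]
          gcongr
      _ = _ := by ring
  intro s
  simp only [Measure.smul_apply]
  gcongr
  exact (integral_norm_charFun_gaussianReal_le hc hm hμ hv hn hnv).trans hle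

end Density

/-! ### Decay of subharmonic functions -/

section Decay

variable {μ : Measure ℝ} [IsProbabilityMeasure μ] {ℓ A : ℝ} {G : ℝ → ℝ}

lemma walkAvg_majorant_le {ρ : Measure ℝ} [IsProbabilityMeasure ρ] {K B E S s : ℝ}
    (hℓ : 0 < ℓ) (hμ : ∀ᵐ a ∂μ, a ∈ Icc ℓ A) (hG : Measurable G)
    (hG01 : ∀ x, G x ∈ Icc (0 : ℝ) 1) (hE : ∀ y, K - 2 * A ≤ y → ∫ x in y - ℓ..y, G x ≤ E)
    (hρ : MemLp id 2 ρ) (hS : 0 ≤ S) (hρS : ρ ≤ ENNReal.ofReal S • volume) (hB : 0 < B) {k : ℕ}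
    (hs : s - (∫ z, z ∂ρ) ∈ Icc (K - A + B) (K + k * ℓ - B - ℓ)) :
    walkAvg ρ (majorant μ ℓ K G (k + 1)) s ≤
      S * ((2 * B / ℓ + 1) * (4 * E)) + Var[id; ρ] / B ^ 2 := by
  have hu := measurable_majorant (μ := μ) (ℓ := ℓ) (K := K) hG (k + 1)
  have hu01 := majorant_mem_Icc (μ := μ) (ℓ := ℓ) (K := K) hG hG01 (k + 1)
  set m := ∫ z, z ∂ρ
  have hnear : ∫ y in s - m - B..s - m + B, majorant μ ℓ K G (k + 1) y ≤
      (2 * B / ℓ + 1) * (4 * E) := by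
    have h := intervalIntegral_le_of_forall_window (p := s - m - B) (q := s - m + B) hu hu01 hℓ
      (by linarith) fun y hy => intervalIntegral_majorant_le hℓ hμ hG hG01 hE k
        ⟨by linarith [hy.1, hs.1], by linarith [hy.2, hs.2]⟩
    rwa [show s - m + B - (s - m - B) = 2 * B by ring] at h
  refine (walkAvg_le_of_le_smul_volume hρ hS hρS hB hu hu01 s).trans ?_
  gcongr

lemma le_of_convPow_conv_gaussianReal_le_smul_volume {K B E S s : ℝ} {Λ v : ℝ≥0} {n : ℕ}
    (hℓ : 0 < ℓ) (hμ : ∀ᵐ a ∂μ, a ∈ Icc ℓ A) (hG : Measurable G)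
    (hG01 : ∀ x, G x ∈ Icc (0 : ℝ) 1) (hsub : ∀ x, G x ≤ walkAvg μ G x)
    (hGΛ : LipschitzOnWith Λ G (Iic K)) (hE : ∀ y, K - 2 * A ≤ y → ∫ x in y - ℓ..y, G x ≤ E)
    (hS : 0 ≤ S) (hdens : convPow μ n ∗ gaussianReal 0 v ≤ ENNReal.ofReal S • volume)
    (hB : 0 < B) (hs : K + n * A + B ≤ s) :
    G s ≤ S * ((2 * B / ℓ + 1) * (4 * E)) + (n * Var[id; μ] + v) / B ^ 2 +
      (Λ + ℓ⁻¹) * √v := by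
  have hA : 0 < A := pos_of_ae_mem_Icc hℓ hμ
  have hμ₂ : MemLp id 2 μ := memLp_of_bounded hμ aestronglyMeasurable_id 2
  have hγ₂ : MemLp id 2 (gaussianReal 0 v) := memLp_id_gaussianReal 2
  have hμn₂ := memLp_id_convPow hμ₂ n
  have hmean : ∫ z, z ∂(convPow μ n ∗ gaussianReal 0 v) ≤ n * A := by
    rw [integral_id_conv hμn₂ hγ₂, integral_id_convPow hμ₂, integral_id_gaussianReal, add_zero]
    gcongr
    exact (integral_mono_ae (hμ₂.integrable one_le_two) (integrable_const A)
      (hμ.mono fun a ha => ha.2)).trans_eq (by simp)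
  have hvar : Var[id; convPow μ n ∗ gaussianReal 0 v] = n * Var[id; μ] + v := by
    rw [variance_id_conv hμn₂ hγ₂, variance_id_convPow hμ₂, variance_id_gaussianReal]
  have hsq : ∫ y, y ^ 2 ∂gaussianReal 0 v = v := by
    simpa using (variance_of_integral_eq_zero (X := id) (μ := gaussianReal 0 v)
      aemeasurable_id (by simp)).symm
  obtain ⟨k, hk⟩ := exists_nat_ge
    ((s - (∫ z, z ∂(convPow μ n ∗ gaussianReal 0 v)) + B + ℓ - K) / ℓ)
  rw [div_le_iff₀ hℓ] at hk
  have huL := lipschitzWith_majorant hℓ hμ hG hG01 hGΛ (k + 1)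
  calc G s ≤ majorant μ ℓ K G (k + 1 + n) s := le_majorant hG hG01 hsub _ s
    _ = walkAvg (convPow μ n) (majorant μ ℓ K G (k + 1)) s :=
        majorant_add_eq_walkAvg hℓ hμ hG hG01 (k + 1) n (by linarith)
    _ ≤ walkAvg (convPow μ n ∗ gaussianReal 0 v) (majorant μ ℓ K G (k + 1)) s +
          (Λ + ℓ⁻¹) * √v := by
        simpa [hsq, hℓ.le] using
          walkAvg_le_walkAvg_conv_add hγ₂ huL (majorant_mem_Icc hG hG01 (k + 1)) s
    _ ≤ _ := by
        rw [← hvar]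
        gcongr
        exact walkAvg_majorant_le hℓ hμ hG hG01 hE (memLp_id_conv hμn₂ hγ₂) hS hdens hB
          ⟨by linarith, by linarith⟩

end Decay

section Rate

lemma window_error_le {S C ℓ A c a ε x : ℝ} (hS : 0 ≤ S) (hC : 0 ≤ C) (hℓ : 0 < ℓ) (hx : 1 ≤ x)
    (hε : 0 ≤ ε) (hεa : 2 * ε ≤ c * (a / 2)) :
    S / √x * ((2 * x ^ (1 / 2 + ε) / ℓ + 1) *
        (4 * (C * Real.exp (-(c * (a / 2 * Real.log x - 2 * A)))))) ≤
      4 * S * C * (2 / ℓ + 1) * Real.exp (2 * A * c) * x ^ (-ε) := by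
  have hx0 : 0 < x := by linarith
  have hexp : Real.exp (-(c * (a / 2 * Real.log x - 2 * A))) =
      Real.exp (2 * A * c) * x ^ (-(c * (a / 2))) := by
    rw [Real.rpow_def_of_pos hx0, ← Real.exp_add]
    ring_nf
  have hwidth : 2 * x ^ (1 / 2 + ε) / ℓ + 1 ≤ (2 / ℓ + 1) * (√x * x ^ ε) := by
    rw [Real.sqrt_eq_rpow, ← Real.rpow_add hx0, add_mul, one_mul, mul_div_right_comm]
    gcongr
    exact Real.one_le_rpow hx (by positivity)
  calc _ ≤ S / √x * ((2 / ℓ + 1) * (√x * x ^ ε) *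
          (4 * (C * (Real.exp (2 * A * c) * x ^ (-(2 * ε)))))) := by
        rw [hexp]
        gcongr
    _ = 4 * S * C * (2 / ℓ + 1) * Real.exp (2 * A * c) * (x ^ ε * x ^ (-(2 * ε))) := by
        field_simp
    _ = _ := by rw [← Real.rpow_add hx0]; ring_nf

lemma variance_error_le {V a ε x : ℝ} (hV : 0 ≤ V) (hx : 1 ≤ x) (ha : 0 ≤ a) (hε : 0 ≤ ε) :
    (x * V + x ^ (-(2 * a))) / (x ^ (1 / 2 + ε)) ^ 2 ≤ (V + 1) * x ^ (-ε) := by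
  have hx0 : 0 < x := by linarith
  have hsmall : x ^ (-(2 * a)) ≤ x :=
    (Real.rpow_le_one_of_one_le_of_nonpos hx (by linarith)).trans hx
  calc _ ≤ (V + 1) * x / (x ^ (1 / 2 + ε)) ^ 2 := by
        gcongr
        linarith
    _ = (V + 1) * x ^ (-(2 * ε)) := by
        rw [← Real.rpow_mul_natCast hx0.le, mul_div_assoc]
        nth_rw 1 [← Real.rpow_one x]
        rw [← Real.rpow_sub hx0]
        push_cast
        ring_nf
    _ ≤ _ := by gcongr; linarith

lemma smoothing_error_le {Λ ℓ a ε x : ℝ} (hΛ : 0 ≤ Λ) (hℓ : 0 ≤ ℓ) (hx : 1 ≤ x)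
    (ha : 0 ≤ a) (hε : ε ≤ a / 2) :
    (Λ * Real.exp (a / 2 * Real.log x) + ℓ⁻¹) * √(x ^ (-(2 * a))) ≤ (Λ + ℓ⁻¹) * x ^ (-ε) := by
  have hx0 : 0 < x := by linarith
  rw [mul_comm (a / 2), ← Real.rpow_def_of_pos hx0, Real.sqrt_eq_rpow, ← Real.rpow_mul hx0.le]
  calc (Λ * x ^ (a / 2) + ℓ⁻¹) * x ^ (-(2 * a) * (1 / 2))
      ≤ (Λ * x ^ (a / 2) + ℓ⁻¹ * x ^ (a / 2)) * x ^ (-(2 * a) * (1 / 2)) := by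
        gcongr
        exact le_mul_of_one_le_right (by positivity) (Real.one_le_rpow hx (by positivity))
    _ = (Λ + ℓ⁻¹) * x ^ (-(a / 2)) := by
        rw [← add_mul, mul_assoc, ← Real.rpow_add hx0]
        ring_nf
    _ ≤ _ := by gcongr

lemma eventually_log_add_rpow_le {A a b : ℝ} (hA : 0 < A) (hb : b < 1) :
    ∀ᶠ x : ℝ in atTop, a * Real.log x + x ^ b ≤ A * x := by
  have hlog := (Real.isLittleO_log_id_atTop.const_mul_left a).bound (half_pos hA)
  have hpow := (tendsto_rpow_atTop (sub_pos.2 hb)).eventually_ge_atTop (2 / A)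
  filter_upwards [hlog, hpow, eventually_gt_atTop 0] with x hlog hpow hx
  rw [id, Real.norm_of_nonneg hx.le] at hlog
  have hxb : x ^ b ≤ A / 2 * x :=
    calc x ^ b = A / 2 * (2 / A * x ^ b) := by field_simp
      _ ≤ A / 2 * (x ^ (1 - b) * x ^ b) := by gcongr
      _ = A / 2 * x := by rw [← Real.rpow_add hx, sub_add_cancel, Real.rpow_one]
  linarith [Real.le_norm_self (a * Real.log x)]

lemma mul_rpow_neg_two_mul_inv_pow {x : ℝ} (hx : 0 < x) {k : ℕ} (hk : k ≠ 0) :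
    x * (x ^ (-(2 * (2 * (k : ℝ))⁻¹))) ^ k = 1 := by
  rw [← Real.rpow_mul_natCast hx.le, show -(2 * (2 * (k : ℝ))⁻¹) * k = -1 by field_simp,
    Real.rpow_neg_one, mul_inv_cancel₀ hx.ne']

variable {μ : Measure ℝ} [IsProbabilityMeasure μ] {ℓ A c c' C : ℝ} {m : ℕ} {Λ : ℝ≥0} {G : ℝ → ℝ}

lemma exists_eventually_forall_le_natCast_rpow (hℓ : 0 < ℓ) (hμ : ∀ᵐ a ∂μ, a ∈ Icc ℓ A) (hc : 0 < c)
    (hm : 1 ≤ m) (hχ : ∀ t, ‖charFun μ t‖ ≤ Real.exp (-(c * t ^ 2 / (1 + t ^ 2) ^ m)))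
    (hG : Measurable G) (hG01 : ∀ x, G x ∈ Icc (0 : ℝ) 1) (hsub : ∀ x, G x ≤ walkAvg μ G x)
    (hGΛ : ∀ K, LipschitzOnWith (Λ * (Real.exp K).toNNReal) G (Iic K)) (hc' : 0 < c')
    (hwin : ∀ y, 0 ≤ y → ∫ x in y - ℓ..y, G x ≤ C * Real.exp (-(c' * y))) :
    ∃ ε D : ℝ, 0 < ε ∧ ∀ᶠ n : ℕ in atTop, ∀ s, 2 * A * n ≤ s → G s ≤ D * (n : ℝ) ^ (-ε) := by
  have hA : 0 < A := pos_of_ae_mem_Icc hℓ hμ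
  have hC : 0 ≤ C := by
    simpa using (intervalIntegral.integral_nonneg (by linarith) fun x _ => (hG01 x).1).trans
      (hwin 0 le_rfl)
  obtain ⟨S, hS, hdens⟩ := exists_convPow_conv_gaussianReal_le_smul_volume hc hm hχ
  have hk : 1 ≤ ((2 * m - 1 : ℕ) : ℝ) := by exact_mod_cast (by omega : 1 ≤ 2 * m - 1)
  -- The largest `a` for which smoothing with variance `n ^ (-2 a)` keeps the density
  -- `O(n ^ (-1 / 2))`.
  set a : ℝ := (2 * ((2 * m - 1 : ℕ) : ℝ))⁻¹
  have ha : 0 < a := by positivity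
  have ha₁ : a ≤ 2⁻¹ := inv_anti₀ two_pos (by linarith)
  -- With `exp K = n ^ (a / 2)` the window error is `O(n ^ (ε - c' * a / 2))` and the smoothing
  -- error is `O(n ^ (-a / 2))`.
  set ε := min (c' * a / 4) (a / 2)
  have hε : 0 < ε := by positivity
  have hε₁ : ε ≤ c' * a / 4 := min_le_left _ _
  have hε₂ : ε ≤ a / 2 := min_le_right _ _
  refine ⟨ε, 4 * S * C * (2 / ℓ + 1) * Real.exp (2 * A * c') + (Var[id; μ] + 1) + (Λ + ℓ⁻¹),
    hε, ?_⟩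
  have hfit := tendsto_natCast_atTop_atTop.eventually
    (eventually_log_add_rpow_le (a := a / 2) (b := 1 / 2 + ε) hA (by linarith))
  have hK := (Real.tendsto_log_atTop.comp tendsto_natCast_atTop_atTop).eventually_ge_atTop
    (2 * A / (a / 2))
  filter_upwards [hfit, hK, eventually_ge_atTop 1] with n hfit hK hn s hs
  rw [Function.comp_apply, div_le_iff₀' (by positivity)] at hK
  have hn₁ : (1 : ℝ) ≤ n := by exact_mod_cast hn
  have hv : 1 ≤ n * (((n : ℝ≥0) ^ (-(2 * a)) : ℝ≥0) : ℝ) ^ (2 * m - 1) := by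
    rw [NNReal.coe_rpow, NNReal.coe_natCast,
      mul_rpow_neg_two_mul_inv_pow (by positivity) (by omega)]
  have hbound := le_of_convPow_conv_gaussianReal_le_smul_volume (n := n) (s := s)
    (B := (n : ℝ) ^ (1 / 2 + ε)) hℓ hμ hG hG01 hsub (hGΛ (a / 2 * Real.log n))
    (fun y hy => (hwin y (by linarith)).trans (mul_le_mul_of_nonneg_left (Real.exp_le_exp.2
      (neg_le_neg (mul_le_mul_of_nonneg_left hy hc'.le))) hC)) (by positivity)
    (hdens _ n (by positivity) hn hv) (by positivity) (by linarith)
  push_cast [Real.coe_toNNReal _ (Real.exp_pos _).le] at hbound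
  rw [add_mul, add_mul]
  refine hbound.trans (add_le_add (add_le_add ?_ ?_) ?_)
  · exact window_error_le hS.le hC hℓ hn₁ hε.le (by linarith)
  · exact variance_error_le (variance_nonneg _ _) hn₁ ha.le hε.le
  · exact smoothing_error_le Λ.coe_nonneg hℓ.le hn₁ ha.le hε₂

lemma exists_eventually_le_rpow (hℓ : 0 < ℓ) (hμ : ∀ᵐ a ∂μ, a ∈ Icc ℓ A) (hc : 0 < c)
    (hm : 1 ≤ m) (hχ : ∀ t, ‖charFun μ t‖ ≤ Real.exp (-(c * t ^ 2 / (1 + t ^ 2) ^ m)))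
    (hG : Measurable G) (hG01 : ∀ x, G x ∈ Icc (0 : ℝ) 1) (hsub : ∀ x, G x ≤ walkAvg μ G x)
    (hGΛ : ∀ K, LipschitzOnWith (Λ * (Real.exp K).toNNReal) G (Iic K)) (hc' : 0 < c')
    (hwin : ∀ y, 0 ≤ y → ∫ x in y - ℓ..y, G x ≤ C * Real.exp (-(c' * y))) :
    ∃ ε D : ℝ, 0 < ε ∧ ∀ᶠ s in atTop, G s ≤ D * s ^ (-ε) := by
  have hA : 0 < A := pos_of_ae_mem_Icc hℓ hμ
  obtain ⟨ε, D, hε, hev⟩ :=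
    exists_eventually_forall_le_natCast_rpow hℓ hμ hc hm hχ hG hG01 hsub hGΛ hc' hwin
  have hfloor : Tendsto (fun s : ℝ => ⌊s / (2 * A)⌋₊) atTop atTop :=
    tendsto_nat_floor_atTop.comp (tendsto_id.atTop_div_const (by positivity))
  refine ⟨ε, |D| * (4 * A) ^ ε, hε, ?_⟩
  filter_upwards [hfloor.eventually hev, eventually_ge_atTop (4 * A)] with s hs hsA
  have hs0 : 0 < s := by linarith
  have hquot : 2 ≤ s / (2 * A) := by rw [le_div_iff₀ (by positivity)]; linarith
  have hlow : s / (4 * A) ≤ ⌊s / (2 * A)⌋₊ := by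
    have hhalf : s / (4 * A) = s / (2 * A) / 2 := by rw [div_div]; ring_nf
    linarith [Nat.lt_floor_add_one (s / (2 * A))]
  calc G s ≤ D * (⌊s / (2 * A)⌋₊ : ℝ) ^ (-ε) := by
        refine hs s ?_
        rw [← le_div_iff₀' (by positivity)]
        exact Nat.floor_le (by positivity)
    _ ≤ |D| * (s / (4 * A)) ^ (-ε) := by
        exact mul_le_mul (le_abs_self D)
          (Real.rpow_le_rpow_of_nonpos (by positivity) hlow (by linarith)) (by positivity)
          (abs_nonneg D)
    _ = |D| * (4 * A) ^ ε * s ^ (-ε) := by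
        rw [Real.div_rpow hs0.le (by positivity), Real.rpow_neg (x := 4 * A) (by positivity)]
        field_simp

end Rate

/-! ### The Diophantine condition -/

section Diophantine

variable {ι : Type*} {a : ι → ℝ}

/-- The Diophantine condition on the logarithms `a i = log |r i|` of the contraction ratios of an
IFS. The distance to the nearest integer is written with `round`. -/
def IsDiophantine (a : ι → ℝ) : Prop :=
  ∃ l C₀ X : ℝ, 0 < l ∧ 0 < C₀ ∧ 0 < X ∧ ∀ x, X ≤ |x| → ∀ y, ∃ i, C₀ * |x| ^ (-l) ≤
    |x * a i + y - (round (x * a i + y) : ℝ)|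

lemma IsDiophantine.neg (ha : IsDiophantine a) : IsDiophantine fun i => -a i := by
  obtain ⟨l, C₀, X, hl, hC₀, hX, h⟩ := ha
  refine ⟨l, C₀, X, hl, hC₀, hX, fun x hx y => ?_⟩
  simpa using h (-x) (by rwa [abs_neg]) y

lemma abs_natCast_mul_sub_round_le (n : ℕ) (θ : ℝ) :
    |n * θ - round (n * θ)| ≤ n * |θ - round θ| := by
  refine (round_le _ ((n : ℤ) * round θ)).trans_eq ?_
  rw [← Nat.abs_cast n, ← abs_mul, Nat.abs_cast]
  push_cast
  ring_nf

-- A small frequency has an integer multiple in `[X, 2 * X]`.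
lemma exists_mul_abs_le_abs_sub_round {δ X : ℝ} (hX : 0 < X)
    (h : ∀ x, X ≤ |x| → |x| ≤ 2 * X → ∀ y, ∃ i, δ ≤ |x * a i + y - round (x * a i + y)|)
    {x : ℝ} (hx0 : x ≠ 0) (hx : |x| ≤ X) (y : ℝ) :
    ∃ i, δ * |x| / (2 * X) ≤ |x * a i + y - round (x * a i + y)| := by
  have hpos : 0 < |x| := abs_pos.2 hx0
  set N := ⌈X / |x|⌉₊
  have hN₁ : X ≤ N * |x| := (div_le_iff₀ hpos).1 (Nat.le_ceil _)
  have hN₂ : N * |x| ≤ 2 * X :=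
    calc N * |x| ≤ (X / |x| + 1) * |x| := by
          gcongr
          exact (Nat.ceil_lt_add_one (by positivity)).le
      _ = X + |x| := by field_simp
      _ ≤ 2 * X := by linarith
  have habs : |N * x| = N * |x| := by rw [abs_mul, Nat.abs_cast]
  obtain ⟨i, hi⟩ := h (N * x) (habs ▸ hN₁) (habs ▸ hN₂) (N * y)
  refine ⟨i, ?_⟩
  rw [mul_assoc, ← mul_add] at hi
  rw [div_le_iff₀ (by positivity)]
  calc δ * |x| ≤ N * |x * a i + y - round (x * a i + y)| * |x| := by
        gcongr
        exact hi.trans (abs_natCast_mul_sub_round_le N _)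
    _ = |x * a i + y - round (x * a i + y)| * (N * |x|) := by ring
    _ ≤ _ := by gcongr

lemma sq_div_one_add_sq_pow_le_rpow {x l : ℝ} (hx : x ≠ 0) (hl : 0 ≤ l) :
    x ^ 2 / (1 + x ^ 2) ^ (⌈l⌉₊ + 1) ≤ (|x| ^ (-l)) ^ 2 := by
  have hpos : 0 < |x| := abs_pos.2 hx
  calc x ^ 2 / (1 + x ^ 2) ^ (⌈l⌉₊ + 1) ≤ (1 + x ^ 2) / (1 + x ^ 2) ^ (⌈l⌉₊ + 1) := by
        gcongr
        linarith
    _ = ((1 + x ^ 2) ^ (⌈l⌉₊ : ℝ))⁻¹ := by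
        rw [Real.rpow_natCast, pow_succ' (1 + x ^ 2), div_mul_cancel_left₀ (by positivity)]
    _ ≤ ((1 + x ^ 2) ^ l)⁻¹ := by
        gcongr
        · exact le_add_of_nonneg_right (sq_nonneg x)
        · exact Nat.le_ceil l
    _ ≤ ((x ^ 2) ^ l)⁻¹ := by
        gcongr
        linarith
    _ = (|x| ^ (-l)) ^ 2 := by
        rw [Real.rpow_neg hpos.le, inv_pow, ← sq_abs, ← Real.rpow_natCast_mul hpos.le,
          ← Real.rpow_mul_natCast hpos.le, mul_comm l]

lemma IsDiophantine.exists_forall_le_sq (ha : IsDiophantine a) :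
    ∃ c m, 0 < c ∧ 1 ≤ m ∧ ∀ x y, ∃ i,
      c * x ^ 2 / (1 + x ^ 2) ^ m ≤ |x * a i + y - round (x * a i + y)| ^ 2 := by
  obtain ⟨l, C₀, X, hl, hC₀, hX, h⟩ := ha
  set κ := C₀ * (2 * X) ^ (-l) / (2 * X)
  have : 0 < κ := by positivity
  refine ⟨min (C₀ ^ 2) (κ ^ 2), ⌈l⌉₊ + 1, by positivity, by omega, fun x y => ?_⟩
  rcases eq_or_ne x 0 with rfl | hx0
  · obtain ⟨i, -⟩ := h X (le_abs_self X) 0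
    exact ⟨i, by simpa using sq_nonneg _⟩
  have : 0 < |x| := abs_pos.2 hx0
  rcases le_total X |x| with hx | hx
  · obtain ⟨i, hi⟩ := h x hx y
    refine ⟨i, ?_⟩
    calc _ ≤ C₀ ^ 2 * (x ^ 2 / (1 + x ^ 2) ^ (⌈l⌉₊ + 1)) := by
          rw [mul_div_assoc]
          gcongr
          exact min_le_left _ _
      _ ≤ C₀ ^ 2 * (|x| ^ (-l)) ^ 2 := by
          gcongr
          exact sq_div_one_add_sq_pow_le_rpow hx0 hl.le
      _ = (C₀ * |x| ^ (-l)) ^ 2 := (mul_pow _ _ _).symm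
      _ ≤ _ := by gcongr
  · obtain ⟨i, hi⟩ := exists_mul_abs_le_abs_sub_round (δ := C₀ * (2 * X) ^ (-l)) hX
      (fun x hx₁ hx₂ y => (h x hx₁ y).imp fun i hi => le_trans (mul_le_mul_of_nonneg_left
        (Real.rpow_le_rpow_of_nonpos (hX.trans_le hx₁) hx₂ (by linarith)) hC₀.le) hi) hx0 hx y
    refine ⟨i, ?_⟩
    calc _ ≤ κ ^ 2 * x ^ 2 := by
          refine div_le_of_le_mul₀ (by positivity) (by positivity) ?_
          calc _ ≤ κ ^ 2 * x ^ 2 := by gcongr; exact min_le_right _ _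
            _ ≤ _ := le_mul_of_one_le_right (by positivity)
                (one_le_pow₀ (le_add_of_nonneg_right (sq_nonneg x)))
      _ = (κ * |x|) ^ 2 := by rw [mul_pow, sq_abs]
      _ ≤ _ := by
          gcongr
          rwa [div_mul_eq_mul_div]

lemma cos_two_pi_mul_le (θ : ℝ) : Real.cos (2 * Real.pi * θ) ≤ 1 - 8 * |θ - round θ| ^ 2 := by
  have hperiod : Real.cos (2 * Real.pi * θ) = Real.cos (2 * Real.pi * (θ - round θ)) := by
    rw [← Real.cos_sub_int_mul_two_pi _ (round θ)]
    ring_nf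
  have hpi : |2 * Real.pi * (θ - round θ)| ≤ Real.pi := by
    rw [abs_mul, abs_of_pos Real.two_pi_pos]
    nlinarith [Real.pi_pos, abs_sub_round θ]
  rw [hperiod, sq_abs]
  refine (Real.cos_le_one_sub_mul_cos_sq hpi).trans_eq ?_
  field_simp
  ring

variable {μ : Measure ℝ} [IsProbabilityMeasure μ]

lemma exists_norm_charFun_eq_integral_cos (t : ℝ) :
    ∃ y, ‖charFun μ t‖ = ∫ x, Real.cos (2 * Real.pi * (t / (2 * Real.pi) * x + y)) ∂μ := by
  refine ⟨-(charFun μ t).arg / (2 * Real.pi), ?_⟩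
  have hrot : (‖charFun μ t‖ : ℂ) = ∫ x, Complex.exp
      ((2 * Real.pi * (t / (2 * Real.pi) * x + -(charFun μ t).arg / (2 * Real.pi)) : ℝ) *
        Complex.I) ∂μ := by
    have hpolar : (‖charFun μ t‖ : ℂ) =
        charFun μ t * Complex.exp ((-(charFun μ t).arg : ℝ) * Complex.I) := by
      conv_rhs => rw [← Complex.norm_mul_exp_arg_mul_I (charFun μ t)]
      rw [mul_assoc, ← Complex.exp_add]
      simp
    rw [hpolar]
    nth_rw 1 [charFun_apply_real]
    rw [← integral_mul_const]
    refine integral_congr_ae (.of_forall fun x => ?_)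
    dsimp only
    rw [← Complex.exp_add, ← add_mul]
    congr 2
    push_cast
    field_simp
  have hre := congrArg Complex.re hrot
  rw [Complex.ofReal_re, ← RCLike.re_eq_complex_re, ← integral_re] at hre
  · rw [hre]
    exact integral_congr_ae (.of_forall fun x => Complex.exp_ofReal_mul_I_re _)
  · exact .of_bound (by fun_prop) 1 (.of_forall fun x => (Complex.norm_exp_ofReal_mul_I _).le)

lemma norm_charFun_le_exp_neg {π₀ δ t : ℝ} (hμ : ∀ i, π₀ ≤ μ.real {a i}) (hδ : 0 ≤ δ)
    (h : ∀ y, ∃ i, δ ≤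
      |t / (2 * Real.pi) * a i + y - round (t / (2 * Real.pi) * a i + y)| ^ 2) :
    ‖charFun μ t‖ ≤ Real.exp (-(8 * π₀ * δ)) := by
  obtain ⟨y, hy⟩ := exists_norm_charFun_eq_integral_cos (μ := μ) t
  obtain ⟨i, hi⟩ := h y
  have hind : Integrable (({a i} : Set ℝ).indicator fun _ => 8 * δ) μ :=
    (integrable_const _).indicator (measurableSet_singleton _)
  calc ‖charFun μ t‖ ≤ ∫ x, (1 - ({a i} : Set ℝ).indicator (fun _ => 8 * δ) x) ∂μ := by
        rw [hy]
        refine integral_mono (.of_mem_Icc (-1) 1 (by fun_prop)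
          (.of_forall fun x => Real.cos_mem_Icc _)) ((integrable_const 1).sub hind) fun x => ?_
        by_cases hx : x = a i
        · subst hx
          simpa using (cos_two_pi_mul_le _).trans (by linarith)
        · simpa [hx] using Real.cos_le_one _
    _ = 1 - 8 * μ.real {a i} * δ := by
        rw [integral_sub (integrable_const 1) hind, integral_indicator_const _
          (measurableSet_singleton _)]
        simp
        ring
    _ ≤ 1 - 8 * π₀ * δ := by
        gcongr
        exact hμ i
    _ ≤ _ := Real.one_sub_le_exp_neg _

lemma IsDiophantine.exists_norm_charFun_le_exp_neg (ha : IsDiophantine a) {π₀ : ℝ} (hπ₀ : 0 < π₀)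
    (hμ : ∀ i, π₀ ≤ μ.real {a i}) :
    ∃ c m, 0 < c ∧ 1 ≤ m ∧
      ∀ t, ‖charFun μ t‖ ≤ Real.exp (-(c * t ^ 2 / (1 + t ^ 2) ^ m)) := by
  obtain ⟨c, m, hc, hm, h⟩ := ha.exists_forall_le_sq
  refine ⟨8 * π₀ * c / (2 * Real.pi) ^ 2, m, by positivity, hm, fun t => ?_⟩
  refine (norm_charFun_le_exp_neg hμ (by positivity) (h (t / (2 * Real.pi)))).trans ?_
  have hle : (t / (2 * Real.pi)) ^ 2 ≤ t ^ 2 := by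
    rw [div_pow]
    exact div_le_self (sq_nonneg t) (one_le_pow₀ (by linarith [Real.pi_gt_three]))
  rw [Real.exp_le_exp, neg_le_neg_iff]
  calc 8 * π₀ * c / (2 * Real.pi) ^ 2 * t ^ 2 / (1 + t ^ 2) ^ m
      = 8 * π₀ * (c * (t / (2 * Real.pi)) ^ 2 / (1 + t ^ 2) ^ m) := by
        rw [div_pow]
        ring
    _ ≤ _ := by gcongr

end Diophantine

/-! ### Stationary measures -/

section Stationary

variable {X ι : Type*} [Fintype ι] [MeasurableSpace X] {p : ι → ℝ≥0∞} {f : ι → X → X}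
  {ν : Measure X}

/-- The measure `ν` is stationary for the maps `f i` applied with weights `p i`; a self-similar
measure is a stationary probability measure of an affine IFS. -/
def IsStationaryMeasure (p : ι → ℝ≥0∞) (f : ι → X → X) (ν : Measure X) : Prop :=
  ν = ∑ i, p i • ν.map (f i)

lemma IsStationaryMeasure.integral_eq {E : Type*} [NormedAddCommGroup E] [NormedSpace ℝ E]
    (hν : IsStationaryMeasure p f ν) (hf : ∀ i, Measurable (f i)) {φ : X → E}
    (hφ : StronglyMeasurable φ) (hint : Integrable φ ν) :
    ∫ x, φ x ∂ν = ∑ i, (p i).toReal • ∫ x, φ (f i x) ∂ν := by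
  rw [hν, integrable_finsetSum_measure] at hint
  conv_lhs => rw [hν]
  rw [integral_finsetSum_measure hint]
  refine Finset.sum_congr rfl fun i _ => ?_
  rw [integral_smul_measure, integral_map (hf i).aemeasurable hφ.aestronglyMeasurable]

variable [IsProbabilityMeasure ν]

lemma IsStationaryMeasure.measureReal_eq (hν : IsStationaryMeasure p f ν)
    (hf : ∀ i, Measurable (f i)) {s : Set X} (hs : MeasurableSet s) :
    ν.real s = ∑ i, (p i).toReal * ν.real (f i ⁻¹' s) := by
  have h := hν.integral_eq hf (φ := s.indicator (1 : X → ℝ)) (stronglyMeasurable_one.indicator hs)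
    ((integrable_const (1 : ℝ)).indicator hs)
  have hpre (i : ι) :
      ∫ x, s.indicator (1 : X → ℝ) (f i x) ∂ν = ν.real (f i ⁻¹' s) :=
    integral_indicator_one (hf i hs)
  simpa only [hpre, integral_indicator_one hs, smul_eq_mul] using h

lemma IsStationaryMeasure.sum_toReal_eq_one (hν : IsStationaryMeasure p f ν)
    (hf : ∀ i, Measurable (f i)) :
    ∑ i, (p i).toReal = 1 := by
  simpa using (hν.measureReal_eq hf .univ).symm

lemma IsStationaryMeasure.measureReal_le (hν : IsStationaryMeasure p f ν)
    (hf : ∀ i, Measurable (f i)) {s : Set X} (hs : MeasurableSet s) {M : ℝ}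
    (hM : ∀ j, ν.real (f j ⁻¹' s) ≤ M) (i : ι) :
    ν.real s ≤ (p i).toReal * ν.real (f i ⁻¹' s) + (1 - (p i).toReal) * M := by
  classical
  rw [hν.measureReal_eq hf hs, ← hν.sum_toReal_eq_one hf, ← Finset.sum_erase_eq_sub
    (Finset.mem_univ i), Finset.sum_mul, ← Finset.add_sum_erase _ _ (Finset.mem_univ i)]
  gcongr with j
  exact hM j

end Stationary

section Support

variable {X ι : Type*} [Fintype ι] [PseudoMetricSpace X]

lemma infDist_le_mul_infDist {g : X → X} {R : ℝ≥0} (hg : LipschitzWith R g) {K : Set X}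
    (hmaps : MapsTo g K K) (hne : K.Nonempty) (x : X) :
    Metric.infDist (g x) K ≤ R * Metric.infDist x K := by
  have := hne.to_subtype
  rw [Metric.infDist_eq_iInf (x := x), Real.mul_iInf_of_nonneg R.coe_nonneg]
  exact le_ciInf fun y => (Metric.infDist_le_dist_of_mem (hmaps y.2)).trans
    (hg.dist_le_mul x y)

variable [MeasurableSpace X] [BorelSpace X] {p : ι → ℝ≥0∞} {f : ι → X → X} {ν : Measure X}
  [IsProbabilityMeasure ν]

lemma IsStationaryMeasure.ae_mem (hν : IsStationaryMeasure p f ν) {R : ℝ≥0} (hR : R < 1)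
    (hf : ∀ i, LipschitzWith R (f i)) {K : Set X} (hK : IsClosed K) (hne : K.Nonempty)
    (hmaps : ∀ i, MapsTo (f i) K K) : ∀ᵐ x ∂ν, x ∈ K := by
  have hint {φ : X → ℝ} (hφ : Continuous φ) : Integrable (fun x => Real.arctan (φ x)) ν :=
    .of_mem_Icc (-(Real.pi / 2)) (Real.pi / 2) (by fun_prop)
      (.of_forall fun x => Ioo_subset_Icc_self (Real.arctan_mem_Ioo _))
  have hcont : Continuous fun x => Metric.infDist x K := Metric.continuous_infDist_pt K
  have hcontR : Continuous fun x => R * Metric.infDist x K := by fun_prop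
  have hle : ∀ᵐ x ∂ν, Real.arctan (R * Metric.infDist x K) ≤ Real.arctan (Metric.infDist x K) :=
    .of_forall fun x => Real.arctan_mono
      (mul_le_of_le_one_left Metric.infDist_nonneg (by exact_mod_cast hR.le))
  -- On average the maps bring every point closer to `K`, strictly so for points outside `K`.
  have hge : ∫ x, Real.arctan (Metric.infDist x K) ∂ν ≤
      ∫ x, Real.arctan (R * Metric.infDist x K) ∂ν := by
    rw [hν.integral_eq (fun i => (hf i).continuous.measurable)
      (by fun_prop : Continuous _).stronglyMeasurable (hint hcont)]
    calc ∑ i, (p i).toReal • ∫ x, Real.arctan (Metric.infDist (f i x) K) ∂ν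
        ≤ ∑ i, (p i).toReal • ∫ x, Real.arctan (R * Metric.infDist x K) ∂ν := by
          gcongr with i
          · exact hint (hcont.comp (hf i).continuous)
          · exact hint hcontR
          · exact fun x => Real.arctan_mono (infDist_le_mul_infDist (hf i) (hmaps i) hne x)
      _ = _ := by
          rw [← Finset.sum_smul, hν.sum_toReal_eq_one fun i => (hf i).continuous.measurable,
            one_smul]
  have heq := (integral_eq_iff_of_ae_le (hint hcontR) (hint hcont) hle).1
    ((integral_mono_ae (hint hcontR) (hint hcont) hle).antisymm hge)
  filter_upwards [heq] with x hx
  rw [hK.mem_iff_infDist_zero hne]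
  have hfixed : R * Metric.infDist x K = Metric.infDist x K := Real.arctan_injective hx
  by_contra h0
  exact hR.ne (by exact_mod_cast (mul_eq_right₀ h0).1 hfixed)

end Support

/-! ### Concentration of stationary measures -/

lemma exists_le_mul_rpow_of_le_mul {Q : ℝ≥0 → ℝ} {β : ℝ} {κ δ₀ : ℝ≥0} (hβ₀ : 0 < β) (hβ₁ : β < 1)
    (hκ : 1 < κ) (hδ₀ : 0 < δ₀) (hQ : ∀ δ, Q δ ≤ 1)
    (hcontr : ∀ δ, δ ≤ δ₀ → Q δ ≤ β * Q (κ * δ)) :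
    ∃ C c : ℝ, 0 < c ∧ ∀ δ, 0 < δ → Q δ ≤ C * (δ : ℝ) ^ c := by
  have hκ' : (1 : ℝ) < κ := by exact_mod_cast hκ
  have hδ₀' : (0 : ℝ) < δ₀ := by exact_mod_cast hδ₀
  set c := Real.logb κ β⁻¹
  have hc : 0 < c := Real.logb_pos hκ' ((one_lt_inv₀ hβ₀).2 hβ₁)
  have hκc : β * (κ : ℝ) ^ c = 1 := by
    rw [Real.rpow_logb (by positivity) hκ'.ne' (by positivity), mul_inv_cancel₀ hβ₀.ne']
  have hlarge {δ : ℝ≥0} (hδ : δ₀ ≤ δ) : Q δ ≤ ((δ : ℝ) / δ₀) ^ c :=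
    (hQ δ).trans (Real.one_le_rpow ((one_le_div hδ₀').2 (by exact_mod_cast hδ)) hc.le)
  have hiter (n : ℕ) : ∀ δ, 0 < δ → δ₀ < κ ^ n * δ → Q δ ≤ ((δ : ℝ) / δ₀) ^ c := by
    induction n with
    | zero => exact fun δ _ hn => hlarge (by simpa using hn.le)
    | succ n ih =>
      intro δ hδ hn
      rcases le_or_gt δ δ₀ with hle | hlt
      · calc Q δ ≤ β * Q (κ * δ) := hcontr δ hle
          _ ≤ β * (((κ * δ : ℝ≥0) : ℝ) / δ₀) ^ c := by
              gcongr
              exact ih (κ * δ) (by positivity) (by rwa [← mul_assoc, ← pow_succ])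
          _ = _ := by
              rw [NNReal.coe_mul, mul_div_assoc, Real.mul_rpow (by positivity) (by positivity),
                ← mul_assoc, hκc, one_mul]
      · exact hlarge hlt.le
  refine ⟨((δ₀ : ℝ) ^ c)⁻¹, c, hc, fun δ hδ => ?_⟩
  obtain ⟨n, hn⟩ := pow_unbounded_of_one_lt (δ₀ / δ) hκ
  refine (hiter n δ hδ ((div_lt_iff₀ hδ).1 hn)).trans_eq ?_
  rw [Real.div_rpow (by positivity) (by positivity), div_eq_inv_mul]

section FixedPoints

variable {X : Type*} [PseudoMetricSpace X]

lemma dist_iterate_le_of_isFixedPt {g : X → X} {R : ℝ≥0} (hg : LipschitzWith R g) {y : X}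
    (hy : Function.IsFixedPt g y) (m : ℕ) (x : X) : dist (g^[m] x) y ≤ R ^ m * dist x y := by
  simpa [(hy.iterate m).eq] using (hg.iterate m).dist_le_mul x y

lemma disjoint_preimage_iterate_or {K s : Set X} (hK : Bornology.IsBounded K) {R δ : ℝ≥0}
    {g h : X → X} (hg : LipschitzWith R g) (hh : LipschitzWith R h) {y z : X} (hy : y ∈ K)
    (hz : z ∈ K) (hgy : Function.IsFixedPt g y) (hhz : Function.IsFixedPt h z) {m : ℕ}
    (hm : 2 * (R ^ m * Metric.diam K) + δ < dist y z) (hs : Metric.ediam s ≤ δ) :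
    Disjoint K (g^[m] ⁻¹' s) ∨ Disjoint K (h^[m] ⁻¹' s) := by
  by_contra! hmeet
  obtain ⟨⟨u, hu, hus⟩, v, hv, hvs⟩ := hmeet.imp not_disjoint_iff.1 not_disjoint_iff.1
  have hclose {g : X → X} (hg : LipschitzWith R g) {y u : X} (hy : y ∈ K) (hu : u ∈ K)
      (hgy : Function.IsFixedPt g y) : dist (g^[m] u) y ≤ R ^ m * Metric.diam K :=
    (dist_iterate_le_of_isFixedPt hg hgy m u).trans
      (by gcongr; exact Metric.dist_le_diam_of_mem hK hu hy)
  have hdiam : dist (g^[m] u) (h^[m] v) ≤ δ := by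
    rw [← coe_nndist, NNReal.coe_le_coe]
    exact edist_le_coe.1
      ((Metric.edist_le_ediam_of_mem (mem_preimage.1 hus) (mem_preimage.1 hvs)).trans hs)
  linarith [hclose hg hy hu hgy, hclose hh hz hv hhz,
    dist_triangle4_left (g^[m] u) (h^[m] v) y z]

end FixedPoints

section Concentration

variable {X ι : Type*} [PseudoMetricSpace X]

lemma ediam_preimage_le_mul {Y : Type*} [PseudoMetricSpace Y] {κ δ : ℝ≥0} {g : X → Y}
    (hg : AntilipschitzWith κ g) {s : Set Y} (hs : Metric.ediam s ≤ δ) :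
    Metric.ediam (g ⁻¹' s) ≤ (κ * δ : ℝ≥0) := by
  push_cast
  exact (hg.ediam_preimage_le s).trans (by gcongr)

variable [MeasurableSpace X] {ν : Measure X}

/-- The Lévy concentration function of `ν`: the largest mass that `ν` gives to a measurable set of
diameter at most `δ`. -/
def concentration (ν : Measure X) (δ : ℝ≥0) : ℝ :=
  ⨆ s : {s : Set X // MeasurableSet s ∧ Metric.ediam s ≤ δ}, ν.real s

lemma concentration_le {δ : ℝ≥0} {M : ℝ}
    (h : ∀ s, MeasurableSet s → Metric.ediam s ≤ δ → ν.real s ≤ M) : concentration ν δ ≤ M :=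
  have : Nonempty {s : Set X // MeasurableSet s ∧ Metric.ediam s ≤ δ} := ⟨⟨∅, by simp⟩⟩
  ciSup_le fun s => h s s.2.1 s.2.2

variable [IsProbabilityMeasure ν]

lemma measureReal_le_concentration {s : Set X} {δ : ℝ≥0} (hs : MeasurableSet s)
    (hδ : Metric.ediam s ≤ δ) : ν.real s ≤ concentration ν δ :=
  le_ciSup (f := fun s : {s : Set X // MeasurableSet s ∧ Metric.ediam s ≤ δ} => ν.real s)
    ⟨1, by rintro _ ⟨s, rfl⟩; exact measureReal_le_one⟩ ⟨s, hs, hδ⟩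

lemma concentration_mono {δ δ' : ℝ≥0} (h : δ ≤ δ') : concentration ν δ ≤ concentration ν δ' :=
  concentration_le fun _ hs hδ =>
    measureReal_le_concentration hs (hδ.trans (by exact_mod_cast h))

variable [Fintype ι] {p : ι → ℝ≥0∞} {f : ι → X → X}

lemma IsStationaryMeasure.measureReal_le_iterate (hν : IsStationaryMeasure p f ν)
    (hf : ∀ i, Measurable (f i)) {κ : ℝ≥0} (hκ : 1 ≤ κ) (hanti : ∀ i, AntilipschitzWith κ (f i))
    (i : ι) (m : ℕ) {δ : ℝ≥0} {s : Set X} (hs : MeasurableSet s) (hδ : Metric.ediam s ≤ δ) :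
    ν.real s ≤ (p i).toReal ^ m * ν.real ((f i)^[m] ⁻¹' s) +
      (1 - (p i).toReal ^ m) * concentration ν (κ ^ m * δ) := by
  induction m generalizing s δ with
  | zero => simp
  | succ m ih =>
    set π := (p i).toReal
    have hδ' (j : ι) : Metric.ediam (f j ⁻¹' s) ≤ (κ * δ : ℝ≥0) :=
      ediam_preimage_le_mul (hanti j) hδ
    have hbranch (j : ι) : ν.real (f j ⁻¹' s) ≤ concentration ν (κ ^ (m + 1) * δ) :=
      (measureReal_le_concentration (hf j hs) (hδ' j)).trans
        (concentration_mono (mul_le_mul_left (le_self_pow₀ hκ m.succ_ne_zero) δ))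
    calc ν.real s ≤ π * ν.real (f i ⁻¹' s) + (1 - π) * concentration ν (κ ^ (m + 1) * δ) :=
          hν.measureReal_le hf hs hbranch i
      _ ≤ π * (π ^ m * ν.real ((f i)^[m] ⁻¹' (f i ⁻¹' s)) +
            (1 - π ^ m) * concentration ν (κ ^ m * (κ * δ))) +
            (1 - π) * concentration ν (κ ^ (m + 1) * δ) := by
          gcongr
          exact ih (hf i hs) (hδ' i)
      _ = _ := by
          rw [← mul_assoc, ← pow_succ, ← preimage_comp, ← Function.iterate_succ']
          ring

end Concentration

section Frostman

variable {X ι : Type*} [PseudoMetricSpace X] [MeasurableSpace X] {ν : Measure X}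
  [IsProbabilityMeasure ν] [Fintype ι] {p : ι → ℝ≥0∞} {f : ι → X → X} {κ : ℝ≥0} {K : Set X}

lemma IsStationaryMeasure.measureReal_le_of_disjoint (hν : IsStationaryMeasure p f ν)
    (hf : ∀ i, Measurable (f i)) (hκ : 1 ≤ κ) (hanti : ∀ i, AntilipschitzWith κ (f i))
    (hK : ∀ᵐ x ∂ν, x ∈ K) {i : ι} {m : ℕ} {δ : ℝ≥0} {s : Set X} (hs : MeasurableSet s)
    (hδ : Metric.ediam s ≤ δ) (hdisj : Disjoint K ((f i)^[m] ⁻¹' s)) :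
    ν.real s ≤ (1 - (p i).toReal ^ m) * concentration ν (κ ^ m * δ) := by
  have hnull : ν.real ((f i)^[m] ⁻¹' s) = 0 :=
    (measureReal_eq_zero_iff (by finiteness)).2
      (measure_mono_null (subset_compl_iff_disjoint_left.2 hdisj) hK)
  simpa [hnull] using hν.measureReal_le_iterate hf hκ hanti i m hs hδ

variable [BorelSpace X] {R : ℝ≥0} {i j : ι} {y z : X}

lemma IsStationaryMeasure.exists_concentration_le_mul (hν : IsStationaryMeasure p f ν)
    (hp : ∀ i, 0 < (p i).toReal) (hR : R < 1) (hf : ∀ i, LipschitzWith R (f i))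
    (hκ : 1 ≤ κ) (hanti : ∀ i, AntilipschitzWith κ (f i)) (hKb : Bornology.IsBounded K)
    (hK : ∀ᵐ x ∂ν, x ∈ K) (hy : y ∈ K) (hz : z ∈ K) (hfy : Function.IsFixedPt (f i) y)
    (hfz : Function.IsFixedPt (f j) z) (hyz : 0 < dist y z) :
    ∃ β ∈ Ioo (0 : ℝ) 1, ∃ δ₀ > 0, ∃ m ≠ 0, ∀ δ ≤ δ₀,
      concentration ν δ ≤ β * concentration ν (κ ^ m * δ) := by
  have hmeas (i : ι) : Measurable (f i) := (hf i).continuous.measurable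
  have htend : Tendsto (fun m : ℕ => 2 * ((R : ℝ) ^ m * Metric.diam K)) atTop (𝓝 0) := by
    simpa using ((tendsto_pow_atTop_nhds_zero_of_lt_one R.coe_nonneg
      (by exact_mod_cast hR)).mul_const (Metric.diam K)).const_mul 2
  obtain ⟨m, hm, hm₀⟩ :=
    ((htend.eventually (gt_mem_nhds (half_pos hyz))).and (eventually_ne_atTop 0)).exists
  set β := max (1 / 2) (max (1 - (p i).toReal ^ m) (1 - (p j).toReal ^ m))
  have hβ : β ∈ Ioo (0 : ℝ) 1 :=
    ⟨one_half_pos.trans_le (le_max_left _ _), max_lt one_half_lt_one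
      (max_lt (sub_lt_self _ (pow_pos (hp i) m)) (sub_lt_self _ (pow_pos (hp j) m)))⟩
  refine ⟨β, hβ, nndist y z / 3, div_pos (by exact_mod_cast hyz) three_pos, m, hm₀, fun δ hδ => ?_⟩
  have : (δ : ℝ) ≤ dist y z / 3 := by exact_mod_cast hδ
  have hQ : 0 ≤ concentration ν (κ ^ m * δ) := by
    simpa using measureReal_le_concentration (ν := ν) .empty (by simp)
  refine concentration_le fun s hs hsδ => ?_
  rcases disjoint_preimage_iterate_or hKb (hf i) (hf j) hy hz hfy hfz (by linarith) hsδ with hd | hd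
  all_goals
    refine (hν.measureReal_le_of_disjoint hmeas hκ hanti hK hs hsδ hd).trans ?_
    gcongr
    simp [β]

lemma IsStationaryMeasure.exists_concentration_le_rpow (hν : IsStationaryMeasure p f ν)
    (hp : ∀ i, 0 < (p i).toReal) (hR : R < 1) (hf : ∀ i, LipschitzWith R (f i))
    (hκ : 1 < κ) (hanti : ∀ i, AntilipschitzWith κ (f i)) (hKb : Bornology.IsBounded K)
    (hK : ∀ᵐ x ∂ν, x ∈ K) (hy : y ∈ K) (hz : z ∈ K) (hfy : Function.IsFixedPt (f i) y)
    (hfz : Function.IsFixedPt (f j) z) (hyz : 0 < dist y z) :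
    ∃ C c : ℝ, 0 < c ∧ ∀ δ, 0 < δ → concentration ν δ ≤ C * (δ : ℝ) ^ c := by
  obtain ⟨β, ⟨hβ₀, hβ₁⟩, δ₀, hδ₀, m, hm, hcontr⟩ :=
    hν.exists_concentration_le_mul hp hR hf hκ.le hanti hKb hK hy hz hfy hfz hyz
  exact exists_le_mul_rpow_of_le_mul hβ₀ hβ₁ (one_lt_pow₀ hκ hm) hδ₀
    (fun δ => concentration_le fun s _ _ => measureReal_le_one) hcontr

end Frostman

/-! ### Energy and window averages -/

section Energy

variable {ν : Measure ℝ} [IsProbabilityMeasure ν] {δ M : ℝ}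

lemma integral_exp_neg_sq_le (w : ℝ≥0) (hδ : 0 ≤ δ) :
    ∫ x, Real.exp (-(w * x ^ 2 / 2)) ∂ν ≤
      ν.real (Metric.closedBall 0 δ) + Real.exp (-(w * δ ^ 2 / 2)) := by
  have hle (x : ℝ) : Real.exp (-(w * x ^ 2 / 2)) ≤
      (Metric.closedBall 0 δ).indicator 1 x + Real.exp (-(w * δ ^ 2 / 2)) := by
    by_cases hx : x ∈ Metric.closedBall 0 δ
    · simpa [hx] using (Real.exp_le_one_iff.2 (neg_nonpos.2 (by positivity))).trans
        (le_add_of_nonneg_right (Real.exp_nonneg _))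
    · rw [indicator_of_notMem hx, zero_add, ← sq_abs x]
      rw [mem_closedBall_zero_iff, Real.norm_eq_abs, not_le] at hx
      gcongr
  have hind : Integrable ((Metric.closedBall (0 : ℝ) δ).indicator (1 : ℝ → ℝ)) ν :=
    (integrable_const (1 : ℝ)).indicator measurableSet_closedBall
  calc ∫ x, Real.exp (-(w * x ^ 2 / 2)) ∂ν
      ≤ ∫ x, ((Metric.closedBall 0 δ).indicator 1 x + Real.exp (-(w * δ ^ 2 / 2))) ∂ν :=
        integral_mono_of_nonneg (.of_forall fun _ => Real.exp_nonneg _)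
          (hind.add (integrable_const _)) (.of_forall hle)
    _ = _ := by
        rw [integral_add hind (integrable_const _), integral_indicator_one measurableSet_closedBall]
        simp

lemma charFun_conv_map_neg (t : ℝ) :
    charFun (ν ∗ ν.map fun x => -x) t = ((‖charFun ν t‖ ^ 2 : ℝ) : ℂ) := by
  have := Measure.isProbabilityMeasure_map (μ := ν) (f := fun x : ℝ => -x) (by fun_prop)
  have hneg : charFun (ν.map fun x => -x) t = charFun ν (-t) := by
    simpa using charFun_map_mul (μ := ν) (-1) t
  rw [charFun_conv, hneg, charFun_neg, Complex.mul_conj, Complex.normSq_eq_norm_sq]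

-- Parseval turns the left-hand side into the Gaussian energy of `ν`.
lemma integral_sq_norm_charFun_le (w : ℝ≥0) (hδ : 0 ≤ δ)
    (hM : ∀ x, ν.real (Metric.closedBall x δ) ≤ M) :
    ∫ t, ‖charFun ν t‖ ^ 2 ∂gaussianReal 0 w ≤ M + Real.exp (-(w * δ ^ 2 / 2)) := by
  have hneg := Measure.isProbabilityMeasure_map (μ := ν) (f := fun x : ℝ => -x) (by fun_prop)
  have hparseval : ∫ t, ‖charFun ν t‖ ^ 2 ∂gaussianReal 0 w =
      ∫ x, Real.exp (-(w * x ^ 2 / 2)) ∂(ν ∗ ν.map fun x => -x) := by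
    have h := integral_exp_neg_sq_eq_integral_charFun (μ := ν ∗ ν.map fun x => -x) w
    simp only [charFun_conv_map_neg, integral_complex_ofReal] at h
    exact (Complex.ofReal_injective h).symm
  have hint : Integrable (fun x : ℝ => Real.exp (-(w * x ^ 2 / 2))) (ν ∗ ν.map fun x => -x) :=
    .of_mem_Icc 0 1 (by fun_prop) (.of_forall fun x =>
      ⟨Real.exp_nonneg _, Real.exp_le_one_iff.2 (neg_nonpos.2 (by positivity))⟩)
  have hinner (x : ℝ) : ∫ y, Real.exp (-(w * (x + y) ^ 2 / 2)) ∂(ν.map fun x => -x) ≤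
      M + Real.exp (-(w * δ ^ 2 / 2)) := by
    have := Measure.isProbabilityMeasure_map (μ := ν) (f := fun y => x - y) (by fun_prop)
    have hball : (ν.map fun y => x - y).real (Metric.closedBall 0 δ) ≤ M := by
      rw [map_measureReal_apply (by fun_prop) measurableSet_closedBall]
      convert hM x using 2
      ext y
      simp [abs_sub_comm, Real.dist_eq]
    calc ∫ y, Real.exp (-(w * (x + y) ^ 2 / 2)) ∂(ν.map fun x => -x)
        = ∫ y, Real.exp (-(w * y ^ 2 / 2)) ∂(ν.map fun y => x - y) := by
          rw [integral_map (by fun_prop) (by fun_prop), integral_map (by fun_prop) (by fun_prop)]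
          rfl
      _ ≤ _ := (integral_exp_neg_sq_le w hδ).trans (by gcongr)
  rw [hparseval, integral_conv hint]
  calc _ ≤ ∫ _, (M + Real.exp (-(w * δ ^ 2 / 2))) ∂ν :=
        integral_mono_of_nonneg (.of_forall fun x => integral_nonneg fun y => Real.exp_nonneg _)
          (integrable_const _) (.of_forall hinner)
    _ = _ := by simp

end Energy

section Window

variable {F : ℝ → ℝ}

lemma intervalIntegral_comp_exp_le (hF : Continuous F) (hF₀ : ∀ x, 0 ≤ F x) {a b : ℝ}
    (hab : a ≤ b) :
    ∫ s in a..b, F (Real.exp s) ≤ Real.exp (-a) * ∫ q in Real.exp a..Real.exp b, F q := by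
  have hsubst : ∫ s in a..b, F (Real.exp s) * Real.exp s = ∫ q in Real.exp a..Real.exp b, F q :=
    intervalIntegral.integral_comp_mul_deriv (fun s _ => Real.hasDerivAt_exp s)
      Real.continuous_exp.continuousOn hF
  rw [← hsubst, ← intervalIntegral.integral_const_mul]
  refine intervalIntegral.integral_mono_on hab (Continuous.intervalIntegrable (by fun_prop) _ _)
    (Continuous.intervalIntegrable (by fun_prop) _ _) fun s hs => ?_
  have hone : 1 ≤ Real.exp (-a) * Real.exp s := by
    rw [← Real.exp_add]
    exact Real.one_le_exp (by linarith [hs.1])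
  calc F (Real.exp s) ≤ F (Real.exp s) * (Real.exp (-a) * Real.exp s) :=
        le_mul_of_one_le_right (hF₀ _) hone
    _ = _ := by ring

lemma le_gaussianPDFReal {w : ℝ≥0} {q : ℝ} (hw : w ≠ 0) (hq : q ^ 2 ≤ w) :
    (√(2 * Real.pi * Real.exp 1 * w))⁻¹ ≤ gaussianPDFReal 0 w q := by
  have : (0 : ℝ) < w := NNReal.coe_pos.2 (pos_iff_ne_zero.2 hw)
  have hsqrt : √(2 * Real.pi * Real.exp 1 * w) = √(2 * Real.pi * w) * Real.exp (1 / 2) := by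
    rw [Real.exp_half, ← Real.sqrt_mul (by positivity)]
    ring_nf
  rw [hsqrt, mul_inv, ← Real.exp_neg, gaussianPDFReal, sub_zero]
  gcongr
  rw [neg_div, neg_le_neg_iff, div_le_div_iff₀ (by positivity) two_pos]
  linarith

lemma intervalIntegral_le_integral_gaussianReal {w : ℝ≥0} (hw : w ≠ 0)
    (hF : Integrable F (gaussianReal 0 w)) (hF₀ : ∀ x, 0 ≤ F x) {a b : ℝ} (hab : a ≤ b)
    (h : ∀ q ∈ Icc a b, q ^ 2 ≤ w) :
    ∫ q in a..b, F q ≤ √(2 * Real.pi * Real.exp 1 * w) * ∫ q, F q ∂gaussianReal 0 w := by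
  have hsqrt : 0 < √(2 * Real.pi * Real.exp 1 * w) := by positivity
  have hint : Integrable (fun q => gaussianPDFReal 0 w q * F q) := by
    rw [gaussianReal_of_var_ne_zero _ hw] at hF
    simpa using (integrable_withDensity_iff_integrable_smul₀'
      (by fun_prop) (.of_forall fun _ => gaussianPDF_lt_top)).1 hF
  rw [intervalIntegral.integral_of_le hab, integral_gaussianReal_eq_integral_smul hw,
    ← integral_const_mul]
  simp only [smul_eq_mul]
  calc ∫ q in Ioc a b, F q
      ≤ ∫ q in Ioc a b, √(2 * Real.pi * Real.exp 1 * w) * (gaussianPDFReal 0 w q * F q) := by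
        refine integral_mono_of_nonneg (.of_forall hF₀) (hint.const_mul _).integrableOn ?_
        filter_upwards [ae_restrict_mem measurableSet_Ioc] with q hq
        rw [← mul_assoc]
        exact le_mul_of_one_le_left (hF₀ q) ((inv_le_iff_one_le_mul₀' hsqrt).1
          (le_gaussianPDFReal hw (h q (Ioc_subset_Icc_self hq))))
    _ ≤ _ := setIntegral_le_integral (hint.const_mul _) (.of_forall fun q =>
        mul_nonneg hsqrt.le (mul_nonneg (gaussianPDFReal_nonneg _ _ _) (hF₀ q)))

end Window

section WindowDecay

variable {ν : Measure ℝ} [IsProbabilityMeasure ν]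

lemma intervalIntegral_sq_norm_charFun_exp_le {δ : ℝ≥0} {ℓ : ℝ} (hℓ : 0 ≤ ℓ) (y : ℝ) :
    ∫ s in y - ℓ..y, ‖charFun ν (Real.exp s)‖ ^ 2 ≤
      Real.exp ℓ * √(2 * Real.pi * Real.exp 1) *
        (concentration ν (2 * δ) + Real.exp (-((Real.exp y * δ) ^ 2 / 2))) := by
  set w : ℝ≥0 := (Real.exp y).toNNReal ^ 2 with hw
  have hwy : (w : ℝ) = Real.exp y ^ 2 := by simp [hw, Real.exp_nonneg]
  have hcont : Continuous fun t => ‖charFun ν t‖ ^ 2 := by fun_prop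
  have hnonneg (t : ℝ) : 0 ≤ ‖charFun ν t‖ ^ 2 := by positivity
  have hint : Integrable (fun t => ‖charFun ν t‖ ^ 2) (gaussianReal 0 w) :=
    .of_mem_Icc 0 1 (by fun_prop)
      (.of_forall fun t => ⟨hnonneg t, pow_le_one₀ (norm_nonneg _) (norm_charFun_le_one t)⟩)
  have hconc (x : ℝ) : ν.real (Metric.closedBall x δ) ≤ concentration ν (2 * δ) :=
    measureReal_le_concentration measurableSet_closedBall (by
      simpa [Metric.closedEBall_coe] using Metric.ediam_closedEBall_le (x := x) (r := δ))
  have henergy := integral_sq_norm_charFun_le w δ.2 hconc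
  have hsq {q : ℝ} (hq : q ∈ Icc (Real.exp (y - ℓ)) (Real.exp y)) : q ^ 2 ≤ w := by
    rw [hwy]
    gcongr
    exacts [(Real.exp_nonneg _).trans hq.1, hq.2]
  calc ∫ s in y - ℓ..y, ‖charFun ν (Real.exp s)‖ ^ 2
      ≤ Real.exp (-(y - ℓ)) * (√(2 * Real.pi * Real.exp 1 * w) *
          ∫ t, ‖charFun ν t‖ ^ 2 ∂gaussianReal 0 w) := by
        refine (intervalIntegral_comp_exp_le hcont hnonneg (by linarith)).trans ?_
        gcongr
        exact intervalIntegral_le_integral_gaussianReal (by simp [hw, Real.exp_pos]) hint hnonneg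
          (by gcongr; linarith) fun q hq => hsq hq
    _ ≤ Real.exp (-(y - ℓ)) * (√(2 * Real.pi * Real.exp 1 * w) *
          (concentration ν (2 * δ) + Real.exp (-(w * δ ^ 2 / 2)))) := by gcongr; exact henergy
    _ = _ := by
        have hexp : Real.exp (-(y - ℓ)) * Real.exp y = Real.exp ℓ := by
          rw [← Real.exp_add]
          ring_nf
        rw [hwy, Real.sqrt_mul (by positivity), Real.sqrt_sq (Real.exp_nonneg _), mul_pow, ← hexp]
        ring

lemma exists_intervalIntegral_sq_norm_charFun_exp_le {C c ℓ : ℝ} (hc : 0 < c) (hℓ : 0 ≤ ℓ)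
    (hν : ∀ δ, 0 < δ → concentration ν δ ≤ C * (δ : ℝ) ^ c) :
    ∃ C' c' : ℝ, 0 < c' ∧ ∀ y, 0 ≤ y →
      ∫ s in y - ℓ..y, ‖charFun ν (Real.exp s)‖ ^ 2 ≤ C' * Real.exp (-(c' * y)) := by
  refine ⟨Real.exp ℓ * √(2 * Real.pi * Real.exp 1) * (|C| * 2 ^ c + 1), min (c / 2) (1 / 2),
    by positivity, fun y hy => ?_⟩
  have hδ := hν (2 * (Real.exp (-(y / 2))).toNNReal) (by simp [Real.exp_pos])
  refine (intervalIntegral_sq_norm_charFun_exp_le (δ := (Real.exp (-(y / 2))).toNNReal)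
    hℓ y).trans ?_
  rw [mul_assoc _ (_ + _)]
  gcongr
  rw [add_mul, one_mul]
  gcongr
  · calc concentration ν (2 * (Real.exp (-(y / 2))).toNNReal)
        ≤ |C| * (2 * Real.exp (-(y / 2))) ^ c := by
          refine hδ.trans ?_
          simp only [NNReal.coe_mul, NNReal.coe_ofNat, Real.coe_toNNReal _ (Real.exp_nonneg _)]
          gcongr
          exact le_abs_self C
      _ = |C| * 2 ^ c * Real.exp (-(c / 2 * y)) := by
          rw [Real.mul_rpow two_pos.le (Real.exp_nonneg _), ← Real.exp_mul, ← mul_assoc]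
          ring_nf
      _ ≤ _ := by gcongr; exact min_le_left _ _
  · rw [Real.coe_toNNReal _ (Real.exp_nonneg _), ← Real.exp_add, ← Real.exp_nat_mul]
    calc min (c / 2) (1 / 2) * y ≤ 1 / 2 * y := by gcongr; exact min_le_right _ _
      _ ≤ Real.exp y / 2 := by linarith [Real.add_one_le_exp y]
      _ = _ := by push_cast; ring_nf

end WindowDecay

/-! ### Self-similar measures -/

section StepLaw

variable {ι : Type*} [Fintype ι] {p : ι → ℝ≥0∞} {a : ι → ℝ}

/-- The law of a step of the random walk on `ℝ` that moves by `a i` with probability `p i`. -/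
def stepLaw (p : ι → ℝ≥0∞) (a : ι → ℝ) : Measure ℝ :=
  ∑ i, p i • .dirac (a i)

lemma isProbabilityMeasure_stepLaw (hp : ∑ i, p i = 1) : IsProbabilityMeasure (stepLaw p a) :=
  ⟨by simp [stepLaw, Measure.finsetSum_apply, hp]⟩

lemma ae_mem_stepLaw {s : Set ℝ} (hs : MeasurableSet s) (ha : ∀ i, a i ∈ s) :
    ∀ᵐ x ∂stepLaw p a, x ∈ s := by
  rw [stepLaw, ae_finsetSum_measure_iff]
  exact fun i _ => Measure.ae_smul_measure ((ae_dirac_iff hs).2 (ha i)) _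

lemma toReal_le_measureReal_stepLaw (hp : ∑ i, p i = 1) (i : ι) :
    (p i).toReal ≤ (stepLaw p a).real {a i} := by
  have := isProbabilityMeasure_stepLaw (a := a) hp
  refine ENNReal.toReal_mono (measure_ne_top _ _) ?_
  calc p i = (p i • Measure.dirac (a i)) {a i} := by simp
    _ ≤ ∑ j, (p j • Measure.dirac (a j)) {a i} :=
      Finset.single_le_sum (f := fun j => (p j • Measure.dirac (a j)) {a i})
        (fun _ _ => zero_le) (Finset.mem_univ i)
    _ = stepLaw p a {a i} := by rw [stepLaw, Measure.finsetSum_apply]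

lemma walkAvg_stepLaw (hp : ∀ i, p i ≠ ∞) (v : ℝ → ℝ) (x : ℝ) :
    walkAvg (stepLaw p a) v x = ∑ i, (p i).toReal * v (x - a i) := by
  have hint (i : ι) : Integrable (fun y => v (x - y)) (p i • Measure.dirac (a i)) :=
    (integrable_dirac (by simp)).smul_measure (hp i)
  simp [walkAvg, stepLaw, integral_finsetSum_measure fun i _ => hint i]

end StepLaw

section Lipschitz

lemma lipschitzWith_charFun {E : Type*} [NormedAddCommGroup E] [InnerProductSpace ℝ E]
    [MeasurableSpace E] [OpensMeasurableSpace E] [SecondCountableTopology E] {ν : Measure E}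
    [IsProbabilityMeasure ν] {M : ℝ≥0} (hM : ∀ᵐ x ∂ν, ‖x‖ ≤ M) : LipschitzWith M (charFun ν) := by
  refine LipschitzWith.of_dist_le_mul fun s t => ?_
  have hint (t : E) : Integrable (fun x => Complex.exp (inner ℝ x t * Complex.I)) ν :=
    .of_bound (by fun_prop) 1 (by simp)
  rw [dist_eq_norm, dist_eq_norm, charFun_apply, charFun_apply, ← integral_sub (hint s) (hint t)]
  refine (norm_integral_le_of_norm_le_const (C := M * ‖s - t‖) ?_).trans (by simp)
  filter_upwards [hM] with x hx
  have hfactor : Complex.exp (inner ℝ x s * Complex.I) - Complex.exp (inner ℝ x t * Complex.I) =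
      Complex.exp (inner ℝ x t * Complex.I) *
        (Complex.exp (Complex.I * inner ℝ x (s - t)) - 1) := by
    rw [mul_sub, ← Complex.exp_add, inner_sub_right]
    push_cast
    ring_nf
  rw [hfactor, norm_mul, Complex.norm_exp_ofReal_mul_I, one_mul]
  calc _ ≤ ‖inner ℝ x (s - t)‖ := Real.norm_exp_I_mul_ofReal_sub_one_le
    _ ≤ ‖x‖ * ‖s - t‖ := norm_inner_le_norm x (s - t)
    _ ≤ M * ‖s - t‖ := by gcongr

lemma lipschitzOnWith_exp_Iic (K : ℝ) :
    LipschitzOnWith (Real.exp K).toNNReal Real.exp (Iic K) :=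
  (convex_Iic K).lipschitzOnWith_of_nnnorm_deriv_le (fun _ _ => Real.differentiableAt_exp)
    fun x hx => by
      rw [Real.deriv_exp, ← NNReal.coe_le_coe, coe_nnnorm, Real.norm_of_nonneg (Real.exp_nonneg x),
        Real.coe_toNNReal _ (Real.exp_nonneg K)]
      exact Real.exp_le_exp.2 hx

lemma lipschitzOnWith_sq_norm_charFun_exp {ν : Measure ℝ} [IsProbabilityMeasure ν] {M : ℝ≥0}
    (hM : ∀ᵐ x ∂ν, ‖x‖ ≤ M) (K : ℝ) :
    LipschitzOnWith (2 * M * (Real.exp K).toNNReal)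
      (fun s => ‖charFun ν (Real.exp s)‖ ^ 2) (Iic K) := by
  have hnorm : LipschitzOnWith (M * (Real.exp K).toNNReal)
      (fun s => ‖charFun ν (Real.exp s)‖) (Iic K) := by
    rw [← one_mul M]
    exact (lipschitzWith_one_norm.comp (lipschitzWith_charFun hM)).comp_lipschitzOnWith
      (lipschitzOnWith_exp_Iic K)
  refine LipschitzOnWith.of_dist_le_mul fun s hs t ht => ?_
  have hle := hnorm.dist_le_mul s hs t ht
  have hs₁ := norm_charFun_le_one (μ := ν) (Real.exp s)
  have ht₁ := norm_charFun_le_one (μ := ν) (Real.exp t)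
  rw [Real.dist_eq] at hle ⊢
  rw [sq_sub_sq, abs_mul, abs_of_nonneg (by positivity), mul_assoc 2, NNReal.coe_mul, mul_assoc]
  gcongr
  exact (add_le_add hs₁ ht₁).trans (by norm_num)

end Lipschitz

section AffineIFS

lemma norm_charFun_abs_mul (ν : Measure ℝ) (c u : ℝ) :
    ‖charFun ν (|c| * u)‖ = ‖charFun ν (c * u)‖ := by
  rcases abs_choice c with h | h
  · rw [h]
  · rw [h, neg_mul, charFun_neg, RCLike.norm_conj]

variable {ι : Type*} [Fintype ι] {r t : ι → ℝ} {p : ι → ℝ≥0∞} {ν : Measure ℝ}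
  [IsProbabilityMeasure ν]

lemma IsStationaryMeasure.charFun_eq (hν : IsStationaryMeasure p (fun i x => r i * x + t i) ν)
    (u : ℝ) : charFun ν u = ∑ i, (p i).toReal •
      (Complex.exp (u * t i * Complex.I) * charFun ν (r i * u)) := by
  have hint : Integrable (fun x : ℝ => Complex.exp (u * x * Complex.I)) ν :=
    .of_bound (by fun_prop) 1 (.of_forall fun x => by
      rw [← Complex.ofReal_mul, Complex.norm_exp_ofReal_mul_I])
  simp only [charFun_apply_real]
  rw [hν.integral_eq (by fun_prop) (by fun_prop : Continuous _).stronglyMeasurable hint]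
  refine Finset.sum_congr rfl fun i _ => ?_
  rw [← integral_const_mul]
  congr 2 with x
  rw [← Complex.exp_add]
  push_cast
  ring_nf

lemma IsStationaryMeasure.sq_norm_charFun_exp_le_walkAvg (hr : ∀ i, r i ≠ 0)
    (hp : ∀ i, p i ≠ ∞) (hν : IsStationaryMeasure p (fun i x => r i * x + t i) ν) (s : ℝ) :
    ‖charFun ν (Real.exp s)‖ ^ 2 ≤ walkAvg (stepLaw p fun i => -Real.log |r i|)
      (fun s => ‖charFun ν (Real.exp s)‖ ^ 2) s := by
  have hscale (i : ι) : ‖charFun ν (Real.exp (s - -Real.log |r i|))‖ =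
      ‖charFun ν (r i * Real.exp s)‖ := by
    rw [sub_neg_eq_add, Real.exp_add, Real.exp_log (abs_pos.2 (hr i)), mul_comm,
      norm_charFun_abs_mul]
  have hnorm : ‖charFun ν (Real.exp s)‖ ≤
      ∑ i, (p i).toReal * ‖charFun ν (r i * Real.exp s)‖ := by
    rw [hν.charFun_eq]
    refine (norm_sum_le _ _).trans_eq (Finset.sum_congr rfl fun i _ => ?_)
    rw [norm_smul, norm_mul, ← Complex.ofReal_mul, Complex.norm_exp_ofReal_mul_I, one_mul,
      Real.norm_of_nonneg ENNReal.toReal_nonneg]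
  simp only [walkAvg_stepLaw hp, hscale]
  exact (pow_le_pow_left₀ (norm_nonneg _) hnorm 2).trans
    (Real.pow_arith_mean_le_arith_mean_pow _ _ _ (fun i _ => ENNReal.toReal_nonneg)
      (hν.sum_toReal_eq_one (by fun_prop)) (fun i _ => norm_nonneg _) 2)

lemma lipschitzWith_mul_add_const (r t : ℝ) : LipschitzWith ‖r‖₊ fun x => r * x + t :=
  LipschitzWith.of_dist_le_mul fun x y => by simp [dist_eq_norm, ← mul_sub]

lemma antilipschitzWith_mul_add_const {ρ : ℝ≥0} {r : ℝ} (hρ : 0 < ρ) (hr : ρ ≤ ‖r‖₊) (t : ℝ) :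
    AntilipschitzWith ρ⁻¹ fun x => r * x + t :=
  AntilipschitzWith.of_le_mul_dist fun x y => by
    have hr' : (ρ : ℝ) ≤ |r| := hr
    rw [NNReal.coe_inv, le_inv_mul_iff₀ (NNReal.coe_pos.2 hρ), Real.dist_eq, Real.dist_eq,
      add_sub_add_right_eq_sub, ← mul_sub, abs_mul]
    gcongr

variable {ρ R : ℝ≥0} {K : Set ℝ} {i j : ι} {y z : ℝ}

lemma IsStationaryMeasure.exists_forall_intervalIntegral_le (hρ : 0 < ρ) (hR : R < 1)
    (hr : ∀ i, ‖r i‖₊ ∈ Icc ρ R) (hp : ∀ i, 0 < (p i).toReal)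
    (hν : IsStationaryMeasure p (fun i x => r i * x + t i) ν) (hK : Bornology.IsBounded K)
    (hνK : ∀ᵐ x ∂ν, x ∈ K) (hy : y ∈ K) (hz : z ∈ K) (hfy : r i * y + t i = y)
    (hfz : r j * z + t j = z) (hyz : y ≠ z) {ℓ : ℝ} (hℓ : 0 ≤ ℓ) :
    ∃ C c : ℝ, 0 < c ∧ ∀ u, 0 ≤ u →
      ∫ s in u - ℓ..u, ‖charFun ν (Real.exp s)‖ ^ 2 ≤ C * Real.exp (-(c * u)) := by
  have hκ : 1 < ρ⁻¹ := (one_lt_inv₀ hρ).2 (((hr i).1.trans (hr i).2).trans_lt hR)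
  obtain ⟨C, c, hc, hconc⟩ := hν.exists_concentration_le_rpow hp hR
    (fun i => (lipschitzWith_mul_add_const (r i) (t i)).weaken (hr i).2) hκ
    (fun i => antilipschitzWith_mul_add_const hρ (hr i).1 (t i)) hK hνK hy hz hfy hfz
    (dist_pos.2 hyz)
  exact exists_intervalIntegral_sq_norm_charFun_exp_le hc hℓ hconc

lemma IsStationaryMeasure.exists_eventually_sq_norm_charFun_exp_le
    (hr : ∀ i, 0 < |r i| ∧ |r i| < 1) (hDio : IsDiophantine fun i => Real.log |r i|)
    (hp : ∀ i, 0 < p i) (hp₁ : ∑ i, p i = 1)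
    (hν : IsStationaryMeasure p (fun i x => r i * x + t i) ν) (hK : IsCompact K)
    (hmaps : ∀ i, MapsTo (fun x => r i * x + t i) K K) (hy : y ∈ K) (hz : z ∈ K)
    (hfy : r i * y + t i = y) (hfz : r j * z + t j = z) (hyz : y ≠ z) :
    ∃ ε D : ℝ, 0 < ε ∧ ∀ᶠ s in atTop, ‖charFun ν (Real.exp s)‖ ^ 2 ≤ D * s ^ (-ε) := by
  have : Nonempty ι := ⟨i⟩
  have hp_top (i : ι) : p i ≠ ∞ :=
    ENNReal.sum_ne_top.1 (hp₁ ▸ ENNReal.one_ne_top) i (Finset.mem_univ i)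
  have hp_pos (i : ι) : 0 < (p i).toReal := ENNReal.toReal_pos (hp i).ne' (hp_top i)
  obtain ⟨iR, hiR⟩ := Finite.exists_max fun i => |r i|
  obtain ⟨iρ, hiρ⟩ := Finite.exists_min fun i => |r i|
  obtain ⟨iπ, hiπ⟩ := Finite.exists_min fun i => (p i).toReal
  have hνK : ∀ᵐ x ∂ν, x ∈ K := hν.ae_mem (R := ‖r iR‖₊) (hr iR).2
    (fun i => (lipschitzWith_mul_add_const (r i) (t i)).weaken (hiR i)) hK.isClosed ⟨y, hy⟩ hmaps
  obtain ⟨M, hM⟩ := hK.isBounded.exists_norm_le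
  have hνM : ∀ᵐ x ∂ν, ‖x‖ ≤ M.toNNReal := by
    filter_upwards [hνK] with x hx using (hM x hx).trans (Real.le_coe_toNNReal M)
  have hℓ : 0 < -Real.log |r iR| := neg_pos.2 (Real.log_neg (hr iR).1 (hr iR).2)
  have hstep : ∀ᵐ a ∂stepLaw p fun i => -Real.log |r i|,
      a ∈ Icc (-Real.log |r iR|) (-Real.log |r iρ|) :=
    ae_mem_stepLaw measurableSet_Icc fun i =>
      ⟨neg_le_neg (Real.log_le_log (hr i).1 (hiR i)),
        neg_le_neg (Real.log_le_log (hr iρ).1 (hiρ i))⟩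
  have := isProbabilityMeasure_stepLaw (a := fun i => -Real.log |r i|) hp₁
  obtain ⟨c, m, hc, hm, hχ⟩ := hDio.neg.exists_norm_charFun_le_exp_neg (hp_pos iπ) fun i =>
    (hiπ i).trans (toReal_le_measureReal_stepLaw hp₁ i)
  obtain ⟨C, c', hc', hwin⟩ := hν.exists_forall_intervalIntegral_le (ρ := ‖r iρ‖₊) (R := ‖r iR‖₊)
    (hr iρ).1 (hr iR).2 (fun i => ⟨hiρ i, hiR i⟩) hp_pos hK.isBounded hνK hy hz hfy hfz hyz hℓ.le
  exact exists_eventually_le_rpow hℓ hstep hc hm hχ (by fun_prop)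
    (fun s => ⟨by positivity, pow_le_one₀ (norm_nonneg _) (norm_charFun_le_one _)⟩)
    (hν.sq_norm_charFun_exp_le_walkAvg (fun i => abs_pos.1 (hr i).1) hp_top)
    (lipschitzOnWith_sq_norm_charFun_exp hνM) hc' hwin

end AffineIFS

lemma fourierTransform_eq_charFun (ν : Measure ℝ) (q : ℝ) :
    fourierTransform ν q = charFun ν (2 * Real.pi * q) := by
  simp [fourierTransform, charFun_apply_real]

lemma norm_fourierTransform_eq {ν : Measure ℝ} {q : ℝ} (hq : q ≠ 0) :
    ‖fourierTransform ν q‖ = ‖charFun ν (Real.exp (Real.log (2 * Real.pi * |q|)))‖ := by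
  rw [fourierTransform_eq_charFun, Real.exp_log (by positivity), mul_comm _ |q|,
    norm_charFun_abs_mul, mul_comm q]

lemma exists_norm_fourierTransform_le {ν : Measure ℝ} {ε D : ℝ} (hε : 0 < ε)
    (h : ∀ᶠ s in atTop, ‖charFun ν (Real.exp s)‖ ^ 2 ≤ D * s ^ (-ε)) :
    ∃ α C Q : ℝ, 0 < α ∧ 0 < C ∧ 0 < Q ∧ ∀ q : ℝ, Q ≤ |q| →
      ‖fourierTransform ν q‖ ≤ C * Real.log |q| ^ (-α) := by
  obtain ⟨S, hS⟩ := eventually_atTop.1 h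
  refine ⟨ε / 2, √(max D 1), Real.exp (max S 1), by positivity, by positivity, Real.exp_pos _,
    fun q hq => ?_⟩
  have hq₀ : 0 < |q| := (Real.exp_pos _).trans_le hq
  have hlog : max S 1 ≤ Real.log |q| := (Real.le_log_iff_exp_le hq₀).2 hq
  have hlog₀ : 0 < Real.log |q| := one_pos.trans_le ((le_max_right _ _).trans hlog)
  have hlog_le : Real.log |q| ≤ Real.log (2 * Real.pi * |q|) :=
    Real.log_le_log hq₀ (le_mul_of_one_le_left hq₀.le (by linarith [Real.two_le_pi]))
  rw [norm_fourierTransform_eq (abs_pos.1 hq₀)]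
  refine le_of_sq_le_sq ?_ (by positivity)
  calc ‖charFun ν (Real.exp (Real.log (2 * Real.pi * |q|)))‖ ^ 2
      ≤ D * Real.log (2 * Real.pi * |q|) ^ (-ε) :=
        hS _ ((le_max_left _ _).trans (hlog.trans hlog_le))
    _ ≤ max D 1 * Real.log |q| ^ (-ε) := by
        gcongr ?_ * ?_
        · exact Real.rpow_nonneg (hlog₀.le.trans hlog_le) _
        · exact le_max_left _ _
        · exact Real.rpow_le_rpow_of_nonpos hlog₀ hlog_le (neg_nonpos.2 hε.le)
    _ = (√(max D 1) * Real.log |q| ^ (-(ε / 2))) ^ 2 := by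
        rw [mul_pow, Real.sq_sqrt (by positivity), ← Real.rpow_mul_natCast hlog₀.le]
        ring_nf

end

theorem stmt4 {n : ℕ} (hn : 2 ≤ n) (r t : Fin n → ℝ) (f : Fin n → ℝ → ℝ)
    (hf : ∀ i x, f i x = r i * x + t i)
    (hr : ∀ i, 0 < |r i| ∧ |r i| < 1)
    (a b : ℝ) (hab : a < b)
    (hmaps : ∀ i, MapsTo (f i) (Icc a b) (Icc a b))
    (hfix : ∃ i j : Fin n, ∃ y ∈ Icc a b, ∃ z ∈ Icc a b, f i y = y ∧ f j z = z ∧ y ≠ z)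
    (hDio : ∃ l C₀ X : ℝ, 0 < l ∧ 0 < C₀ ∧ 0 < X ∧ ∀ x : ℝ, X ≤ |x| → ∀ y : ℝ,
      ∃ i : Fin n, C₀ * |x| ^ (-l) ≤
        |x * Real.log |r i| + y - (round (x * Real.log |r i| + y) : ℝ)|)
    (p : Fin n → ℝ≥0∞) (hp : ∀ i, 0 < p i) (hp1 : ∑ i, p i = 1)
    (ν : Measure ℝ) (hνP : IsProbabilityMeasure ν)
    (hν : ν = ∑ i, p i • ν.map (f i)) :
    ∃ α C Q : ℝ, 0 < α ∧ 0 < C ∧ 0 < Q ∧ ∀ q : ℝ, Q ≤ |q| →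
      ‖fourierTransform ν q‖ ≤ C * Real.log |q| ^ (-α) := by
  obtain rfl : f = fun i x => r i * x + t i := by ext i x; exact hf i x
  obtain ⟨i, j, y, hy, z, hz, hfy, hfz, hyz⟩ := hfix
  obtain ⟨ε, D, hε, hdecay⟩ := IsStationaryMeasure.exists_eventually_sq_norm_charFun_exp_le hr hDio
    hp hp1 hν isCompact_Icc hmaps hy hz hfy hfz hyz
  exact exists_norm_fourierTransform_le hε hdecay
end
end

section
/- Let μ be a self-similar measure on ℝ (for a self-similar IFS with two maps having distinct fixed points and a strictly positive probability vector). If μ is a Rajchman measure, then μ is pointwise absolutely normal. -/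
/-!
Cut `μ` along its iterated function system into affine copies `σ μ + s` that are so short that a
uniformly continuous function `F` is nearly constant on each of them. On such a copy
`exp (ε F (u))` can be pulled out of the integral of `exp (ε F (u)) * B (q u)`, while the rescaled
copy `q σ μ + q s` is still long when `q` is large. Iterating, the exponential moment of
`∑ k < N, F (q ^ k x)` is at most, up to a factor `exp (ε ^ 2)` for each scale, the `N`-th power
of the largest exponential moment of `F` over long copies. For a Rajchman measure and a
nontrivial character `F`, the mean of `F` over long copies is small and Hoeffding's lemma bounds
that moment by `exp (O (ε ^ 2))`, so by Borel-Cantelli the averages of `F (q ^ k x)` are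
eventually at most `O (ε)`. Taking `q = P ^ j` and splitting the orbit of `x` under
multiplication by `P` into residue classes modulo `j`, Weyl's criterion gives normality to base `P`.
-/

open MeasureTheory Filter Set
open scoped ENNReal Topology

noncomputable section

/-- `x` is normal to base `p`: the orbit of `x` under multiplication by `p`, taken mod 1,
equidistributes for the Haar (Lebesgue) measure on the circle `ℝ/ℤ`. -/
def PNormal (p : ℕ) (x : ℝ) : Prop :=
  ∀ g : C(UnitAddCircle, ℝ),
    Tendsto (fun N : ℕ => (N : ℝ)⁻¹ * ∑ k ∈ Finset.Icc 1 N, g (((p : ℝ) ^ k * x : ℝ)))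
      atTop (nhds (∫ z, g z))

/-- `x` is absolutely normal: normal to every integer base `p ≥ 2`. -/
def AbsolutelyNormal (x : ℝ) : Prop := ∀ p : ℕ, 2 ≤ p → PNormal p x

/-- A measure is pointwise absolutely normal if almost every point is absolutely normal. -/
def PointwiseAbsolutelyNormal (ν : Measure ℝ) : Prop :=
  ∀ᵐ x ∂ν, AbsolutelyNormal x

/-! ### Affine images of a measure -/

/-- The largest integral of `B` along an affine image `(x ↦ σ * x + s)_* μ` of slope `|σ| ≥ L`. -/
def affineSup (μ : Measure ℝ) (L : ℝ) (B : ℝ → ℝ≥0∞) : ℝ≥0∞ :=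
  ⨆ (σ : ℝ) (s : ℝ) (_ : L ≤ |σ|), ∫⁻ x, B (σ * x + s) ∂μ

/-- Multiplicative decoupling of scales for the affine images of `μ`: an observable `A` that varies
by at most the factor `c` on intervals of length `η` is almost independent of every observable `B`
whose averages are already controlled at slopes of order `κ * η`. -/
def DecouplesScales (μ : Measure ℝ) (κ : ℝ) : Prop :=
  ∀ ⦃A B : ℝ → ℝ≥0∞⦄, Measurable A → Measurable B → ∀ ⦃η : ℝ⦄, 0 < η → ∀ ⦃c : ℝ≥0∞⦄,
    (∀ u v, |u - v| ≤ η → A u ≤ c * A v) → ∀ ⦃l L : ℝ⦄, l ≤ κ * η → l ≤ L →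
      affineSup μ L (fun u => A u * B u) ≤ c * affineSup μ L A * affineSup μ l B

section AffineSup

variable {μ : Measure ℝ}

theorem lintegral_le_affineSup {L σ : ℝ} (hσ : L ≤ |σ|) (s : ℝ) (B : ℝ → ℝ≥0∞) :
    ∫⁻ x, B (σ * x + s) ∂μ ≤ affineSup μ L B :=
  le_iSup₂_of_le σ s <| le_iSup_of_le hσ le_rfl

theorem affineSup_le {L : ℝ} {B : ℝ → ℝ≥0∞} {K : ℝ≥0∞}
    (h : ∀ σ s : ℝ, L ≤ |σ| → ∫⁻ x, B (σ * x + s) ∂μ ≤ K) : affineSup μ L B ≤ K :=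
  iSup₂_le fun σ s => iSup_le fun hσ => h σ s hσ

theorem affineSup_comp_mul_left_le {q : ℝ} (hq : 0 < q) (L : ℝ) (B : ℝ → ℝ≥0∞) :
    affineSup μ (L / q) (fun u => B (q * u)) ≤ affineSup μ L B := by
  refine affineSup_le fun σ s hσ => ?_
  have hqσ : L ≤ |q * σ| := by rwa [abs_mul, abs_of_pos hq, ← div_le_iff₀' hq]
  simpa only [mul_add, mul_assoc] using lintegral_le_affineSup hqσ (q * s) B

theorem DecouplesScales.affineSup_prod_le [IsProbabilityMeasure μ] {κ : ℝ}
    (hμ : DecouplesScales μ κ) {A : ℝ → ℝ≥0∞} (hA : Measurable A) {η : ℝ} (hη : 0 < η) {c : ℝ≥0∞}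
    (hAc : ∀ u v, |u - v| ≤ η → A u ≤ c * A v) {L q : ℝ} (hL : 0 ≤ L) (hq : 1 ≤ q)
    (hLq : L ≤ κ * η * q) (N : ℕ) :
    affineSup μ L (fun u => ∏ k ∈ Finset.range N, A (q ^ k * u)) ≤ (c * affineSup μ L A) ^ N := by
  have hq0 : 0 < q := by linarith
  induction N with
  | zero => exact affineSup_le fun σ s _ => by simp
  | succ N ih =>
    set B : ℝ → ℝ≥0∞ := fun u => ∏ k ∈ Finset.range N, A (q ^ k * u) with hB
    have hBm : Measurable B := by fun_prop
    have hsplit : (fun u => ∏ k ∈ Finset.range (N + 1), A (q ^ k * u)) =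
        fun u => A u * B (q * u) := by
      funext u
      simp only [hB, Finset.prod_range_succ', pow_zero, one_mul, pow_succ, mul_assoc]
      exact mul_comm _ _
    calc affineSup μ L (fun u => ∏ k ∈ Finset.range (N + 1), A (q ^ k * u))
        ≤ c * affineSup μ L A * affineSup μ (L / q) (fun u => B (q * u)) := by
          rw [hsplit]
          exact hμ hA (by fun_prop) hη hAc ((div_le_iff₀ hq0).2 hLq) (div_le_self hL hq)
      _ ≤ c * affineSup μ L A * (c * affineSup μ L A) ^ N := by
          gcongr
          exact (affineSup_comp_mul_left_le hq0 L B).trans ih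
      _ = (c * affineSup μ L A) ^ (N + 1) := (pow_succ' _ _).symm

end AffineSup

/-! ### Self-similar measures -/

/-- `μ` is invariant under the iterated function system of the maps `x ↦ r i * x + t i` with
weights `p`. The index type may be infinite; the weights of a self-similar probability measure sum
to one, so only countably many of them are nonzero. -/
def IsSelfSimilar {ι : Type*} (r t : ι → ℝ) (p : ι → ℝ≥0∞) (μ : Measure ℝ) : Prop :=
  μ = Measure.sum fun i => p i • μ.map fun x => r i * x + t i

theorem lintegral_mul_le_of_ae_le {α : Type*} [MeasurableSpace α] {ν : Measure α}
    [IsProbabilityMeasure ν] {A B : α → ℝ≥0∞} (hA : Measurable A) (hB : Measurable B) {c : ℝ≥0∞}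
    (h : ∀ᵐ y ∂ν, ∀ᵐ x ∂ν, A x ≤ c * A y) :
    ∫⁻ x, A x * B x ∂ν ≤ c * (∫⁻ x, A x ∂ν) * ∫⁻ x, B x ∂ν := by
  have freeze : ∀ᵐ y ∂ν, ∫⁻ x, A x * B x ∂ν ≤ c * A y * ∫⁻ x, B x ∂ν := by
    filter_upwards [h] with y hy
    rw [← lintegral_const_mul _ hB]
    refine lintegral_mono_ae ?_
    filter_upwards [hy] with x hx
    gcongr
  calc ∫⁻ x, A x * B x ∂ν
      = ∫⁻ _, (∫⁻ x, A x * B x ∂ν) ∂ν := by simp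
    _ ≤ ∫⁻ y, c * A y * (∫⁻ x, B x ∂ν) ∂ν := lintegral_mono_ae freeze
    _ = c * (∫⁻ x, A x ∂ν) * ∫⁻ x, B x ∂ν := by
        rw [lintegral_mul_const _ (by fun_prop), lintegral_const_mul _ hA]

section SelfSimilar

variable {ι : Type*} {r t : ι → ℝ} {p : ι → ℝ≥0∞} {μ : Measure ℝ}

/-- Refine an affine image as long as its slope exceeds `τ`: each refinement shrinks the slope by a
factor in `[ρ', ρ]`, so the process stops at slopes in `[l, τ]`. -/
theorem affine_induction {ρ' ρ l τ : ℝ} (hρ1 : ρ < 1) (hr' : ∀ i, ρ' ≤ |r i|)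
    (hr : ∀ i, |r i| ≤ ρ) (hτ : 0 < τ) (hl : l ≤ ρ' * τ) {Q : ℝ → ℝ → Prop}
    (small : ∀ σ s, l ≤ |σ| → |σ| ≤ τ → Q σ s)
    (refinement : ∀ σ s, (∀ i, Q (σ * r i) (σ * t i + s)) → Q σ s) (σ s : ℝ) (hσ : l ≤ |σ|) :
    Q σ s := by
  rcases isEmpty_or_nonempty ι with _ | ⟨⟨i₀⟩⟩
  · exact refinement σ s isEmptyElim
  have hρ0 : 0 ≤ ρ := (abs_nonneg _).trans (hr i₀)
  obtain ⟨k, hk⟩ : ∃ k : ℕ, |σ| * ρ ^ k ≤ τ := by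
    obtain ⟨k, hk⟩ := exists_pow_lt_of_lt_one (show 0 < τ / (|σ| + 1) by positivity) hρ1
    rw [lt_div_iff₀ (by positivity)] at hk
    exact ⟨k, by linarith [pow_nonneg hρ0 k]⟩
  induction k generalizing σ s with
  | zero => exact small σ s hσ (by simpa only [pow_zero, mul_one] using hk)
  | succ k ih =>
    rcases le_or_gt |σ| τ with hτσ | hτσ
    · exact small σ s hσ hτσ
    refine refinement σ s fun i => ih _ _ ?_ ?_
    · calc l ≤ ρ' * τ := hl
        _ ≤ |r i| * |σ| := mul_le_mul (hr' i) hτσ.le hτ.le (abs_nonneg _)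
        _ = |σ * r i| := by rw [abs_mul, mul_comm]
    · calc |σ * r i| * ρ ^ k ≤ |σ| * ρ * ρ ^ k := by rw [abs_mul]; gcongr; exact hr i
        _ = |σ| * ρ ^ (k + 1) := by ring
        _ ≤ τ := hk

namespace IsSelfSimilar

theorem measure_eq_tsum (hμ : IsSelfSimilar r t p μ) {S : Set ℝ} (hS : MeasurableSet S) :
    μ S = ∑' i, p i * μ ((fun x => r i * x + t i) ⁻¹' S) := by
  conv_lhs => rw [hμ, Measure.sum_apply _ hS]
  simp only [Measure.smul_apply, smul_eq_mul]
  exact tsum_congr fun i => by rw [Measure.map_apply (by fun_prop) hS]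

theorem lintegral_eq_tsum (hμ : IsSelfSimilar r t p μ) {G : ℝ → ℝ≥0∞} (hG : Measurable G) :
    ∫⁻ x, G x ∂μ = ∑' i, p i * ∫⁻ x, G (r i * x + t i) ∂μ := by
  conv_lhs => rw [hμ, lintegral_sum_measure]
  simp only [lintegral_smul_measure, smul_eq_mul]
  exact tsum_congr fun i => by rw [lintegral_map hG (by fun_prop)]

theorem lintegral_mul_le_of_forall (hμ : IsSelfSimilar r t p μ) {A B : ℝ → ℝ≥0∞}
    (hA : Measurable A) (hB : Measurable B) {C : ℝ≥0∞} {σ s : ℝ}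
    (h : ∀ i, ∫⁻ x, A (σ * r i * x + (σ * t i + s)) * B (σ * r i * x + (σ * t i + s)) ∂μ ≤
      C * ∫⁻ x, A (σ * r i * x + (σ * t i + s)) ∂μ) :
    ∫⁻ x, A (σ * x + s) * B (σ * x + s) ∂μ ≤ C * ∫⁻ x, A (σ * x + s) ∂μ := by
  have compose (i : ι) (x : ℝ) : σ * (r i * x + t i) + s = σ * r i * x + (σ * t i + s) := by ring
  rw [hμ.lintegral_eq_tsum (G := fun x => A (σ * x + s) * B (σ * x + s)) (by fun_prop),
    hμ.lintegral_eq_tsum (G := fun x => A (σ * x + s)) (by fun_prop), ← ENNReal.tsum_mul_left]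
  simp only [compose]
  exact ENNReal.tsum_le_tsum fun i => by rw [mul_left_comm]; gcongr; exact h i

variable [IsProbabilityMeasure μ]

theorem tsum_weights (hμ : IsSelfSimilar r t p μ) : ∑' i, p i = 1 := by
  simpa only [preimage_univ, measure_univ, mul_one] using (hμ.measure_eq_tsum .univ).symm

theorem nonempty (hμ : IsSelfSimilar r t p μ) : Nonempty ι := by
  by_contra hι
  rw [not_nonempty_iff] at hι
  simpa only [tsum_empty, zero_ne_one] using hμ.tsum_weights

theorem measure_le_of_preimage_subset (hμ : IsSelfSimilar r t p μ) {S S' : Set ℝ}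
    (hS : MeasurableSet S) (h : ∀ i, (fun x => r i * x + t i) ⁻¹' S ⊆ S') : μ S ≤ μ S' :=
  calc μ S = ∑' i, p i * μ ((fun x => r i * x + t i) ⁻¹' S) := hμ.measure_eq_tsum hS
    _ ≤ ∑' i, p i * μ S' := ENNReal.tsum_le_tsum fun i => by gcongr; exact h i
    _ = μ S' := by rw [ENNReal.tsum_mul_right, hμ.tsum_weights, one_mul]

theorem exists_ae_abs_le (hμ : IsSelfSimilar r t p μ) {ρ T : ℝ} (hρ0 : 0 < ρ) (hρ1 : ρ < 1)
    (hr : ∀ i, |r i| ≤ ρ) (ht : ∀ i, |t i| ≤ T) : ∃ D, ∀ᵐ x ∂μ, |x| ≤ D := by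
  set D : ℝ := T / (1 - ρ)
  have hD : ρ * D + T = D := by
    have : 1 - ρ ≠ 0 := by linarith
    simp only [D]; field_simp; ring
  -- every map of the system contracts `|x| - D` by the factor `ρ`
  have contract (R : ℝ) : μ {x | R + D < |x|} ≤ μ {x | ρ⁻¹ * R + D < |x|} := by
    refine hμ.measure_le_of_preimage_subset
      (measurableSet_lt measurable_const continuous_abs.measurable) fun i x hx => ?_
    have hx' : R + D < |r i * x + t i| := hx
    have hle : |r i * x + t i| ≤ ρ * |x| + T := by
      calc |r i * x + t i| ≤ |r i| * |x| + |t i| := by rw [← abs_mul]; exact abs_add_le _ _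
        _ ≤ ρ * |x| + T := by gcongr; exacts [hr i, ht i]
    have : ρ⁻¹ * R < |x| - D := by rw [inv_mul_lt_iff₀ hρ0]; linarith
    change ρ⁻¹ * R + D < |x|
    linarith
  have escape (k : ℕ) : μ {x | 1 + D < |x|} ≤ μ {x | ρ⁻¹ ^ k + D < |x|} := by
    induction k with
    | zero => rw [pow_zero]
    | succ k ih => exact ih.trans ((contract _).trans_eq (by rw [pow_succ']))
  have tail : Tendsto (fun R => μ {x | R < |x|}) atTop (𝓝 0) := by
    simpa using tendsto_measure_norm_gt_of_isTightMeasureSet (isTightMeasureSet_singleton (μ := μ))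
  have radii : Tendsto (fun k : ℕ => ρ⁻¹ ^ k + D) atTop atTop :=
    tendsto_atTop_add_const_right _ _
      (tendsto_pow_atTop_atTop_of_one_lt ((one_lt_inv₀ hρ0).2 hρ1))
  refine ⟨1 + D, ?_⟩
  rw [ae_iff]
  simp only [not_le]
  exact le_antisymm (ge_of_tendsto' (tail.comp radii) escape) zero_le

theorem decouplesScales (hμ : IsSelfSimilar r t p μ) {ρ' ρ D : ℝ} (hρ1 : ρ < 1)
    (hr' : ∀ i, ρ' ≤ |r i|) (hr : ∀ i, |r i| ≤ ρ) (hD : 0 < D) (hsupp : ∀ᵐ x ∂μ, |x| ≤ D) :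
    DecouplesScales μ (ρ' / (2 * D)) := by
  intro A B hA hB η hη c hAc l L hl hlL
  -- the support of an affine image of slope at most `η / (2 * D)` has diameter at most `η`
  have small (σ s : ℝ) (hlσ : l ≤ |σ|) (hσ : |σ| ≤ η / (2 * D)) :
      ∫⁻ x, A (σ * x + s) * B (σ * x + s) ∂μ ≤
        c * affineSup μ l B * ∫⁻ x, A (σ * x + s) ∂μ := by
    have hdiam : ∀ᵐ y ∂μ, ∀ᵐ x ∂μ, A (σ * x + s) ≤ c * A (σ * y + s) := by
      filter_upwards [hsupp] with y hy
      filter_upwards [hsupp] with x hx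
      refine hAc _ _ ?_
      calc |σ * x + s - (σ * y + s)| = |σ| * |x - y| := by rw [← abs_mul]; ring_nf
        _ ≤ η / (2 * D) * (2 * D) := by
          gcongr
          exact (abs_sub x y).trans (by linarith)
        _ = η := by field_simp
    calc ∫⁻ x, A (σ * x + s) * B (σ * x + s) ∂μ
        ≤ c * (∫⁻ x, A (σ * x + s) ∂μ) * ∫⁻ x, B (σ * x + s) ∂μ :=
          lintegral_mul_le_of_ae_le (by fun_prop) (by fun_prop) hdiam
      _ ≤ c * (∫⁻ x, A (σ * x + s) ∂μ) * affineSup μ l B := by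
          gcongr
          exact lintegral_le_affineSup hlσ s B
      _ = c * affineSup μ l B * ∫⁻ x, A (σ * x + s) ∂μ := by ring
  refine affineSup_le fun σ s hσ => ?_
  calc ∫⁻ x, A (σ * x + s) * B (σ * x + s) ∂μ
      ≤ c * affineSup μ l B * ∫⁻ x, A (σ * x + s) ∂μ :=
        affine_induction hρ1 hr' hr (by positivity) (hl.trans_eq (by ring)) small
          (fun _ _ => hμ.lintegral_mul_le_of_forall hA hB) σ s (hlL.trans hσ)
    _ ≤ c * affineSup μ l B * affineSup μ L A := by
        gcongr
        exact lintegral_le_affineSup hσ s A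
    _ = c * affineSup μ L A * affineSup μ l B := by ring

end IsSelfSimilar

end SelfSimilar

/-! ### Exponential moments -/

theorem lintegral_exp_mul_le {Ω : Type*} [MeasurableSpace Ω] {ν : Measure Ω}
    [IsProbabilityMeasure ν] {X : Ω → ℝ} (hX : Measurable X) (hX1 : ∀ ω, |X ω| ≤ 1) {ε : ℝ}
    (hε : 0 ≤ ε) (hmean : ∫ ω, X ω ∂ν ≤ ε) :
    ∫⁻ ω, ENNReal.ofReal (Real.exp (ε * X ω)) ∂ν ≤ ENNReal.ofReal (Real.exp (3 / 2 * ε ^ 2)) := by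
  set m : ℝ := ∫ ω, X ω ∂ν
  have hoeffding : ProbabilityTheory.HasSubgaussianMGF (fun ω => X ω - m) 1 ν := by
    have hconst : (‖(1 : ℝ) - -1‖₊ / 2) ^ 2 = 1 := by norm_num [← NNReal.coe_inj]
    exact hconst ▸ ProbabilityTheory.hasSubgaussianMGF_of_mem_Icc hX.aemeasurable
      (Eventually.of_forall fun ω => abs_le.1 (hX1 ω))
  have factor (ω : Ω) : Real.exp (ε * X ω) = Real.exp (ε * m) * Real.exp (ε * (X ω - m)) := by
    rw [← Real.exp_add]; ring_nf
  have hint : Integrable (fun ω => Real.exp (ε * X ω)) ν := by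
    simp only [factor]
    exact (hoeffding.integrable_exp_mul ε).const_mul _
  rw [← ofReal_integral_eq_lintegral_ofReal hint
    (Eventually.of_forall fun ω => (Real.exp_pos _).le)]
  refine ENNReal.ofReal_le_ofReal ?_
  calc ∫ ω, Real.exp (ε * X ω) ∂ν
      = Real.exp (ε * m) * ∫ ω, Real.exp (ε * (X ω - m)) ∂ν := by
        simp only [factor, integral_const_mul]
    _ ≤ Real.exp (ε * m) * Real.exp (ε ^ 2 / 2) := by
        gcongr
        simpa only [ProbabilityTheory.mgf, NNReal.coe_one, one_mul] using hoeffding.mgf_le ε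
    _ ≤ Real.exp (3 / 2 * ε ^ 2) := by
        rw [← Real.exp_add]
        exact Real.exp_le_exp.2 (by nlinarith)

theorem ae_eventually_lt_pow {Ω : Type*} [MeasurableSpace Ω] {ν : Measure Ω} {X : ℕ → Ω → ℝ≥0∞}
    (hX : ∀ N, AEMeasurable (X N) ν) {θ Θ : ℝ≥0∞} (hθ : θ < Θ) (hΘ : Θ ≠ ∞)
    (h : ∀ N, ∫⁻ ω, X N ω ∂ν ≤ θ ^ N) : ∀ᵐ ω ∂ν, ∀ᶠ N in atTop, X N ω < Θ ^ N := by
  have hΘ0 : Θ ≠ 0 := (bot_le.trans_lt hθ).ne'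
  have markov (N : ℕ) : ν {ω | Θ ^ N ≤ X N ω} ≤ (θ / Θ) ^ N :=
    calc ν {ω | Θ ^ N ≤ X N ω} ≤ (∫⁻ ω, X N ω ∂ν) / Θ ^ N :=
          meas_ge_le_lintegral_div (hX N) (pow_ne_zero N hΘ0) (ENNReal.pow_ne_top hΘ)
      _ ≤ (θ / Θ) ^ N := by
          rw [div_eq_mul_inv θ, mul_pow, ← ENNReal.inv_pow, ← div_eq_mul_inv]
          gcongr
          exact h N
  have summable : ∑' N, ν {ω | Θ ^ N ≤ X N ω} ≠ ∞ := by
    refine ne_top_of_le_ne_top ?_ (ENNReal.tsum_le_tsum markov)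
    rw [ENNReal.tsum_geometric, ENNReal.inv_ne_top]
    exact (tsub_pos_of_lt (ENNReal.div_lt_of_lt_mul (by rwa [one_mul]))).ne'
  filter_upwards [ae_eventually_notMem summable] with ω hω
  filter_upwards [hω] with N hN
  exact not_le.1 hN

theorem ofReal_exp_mul_sum (ε : ℝ) (a : ℕ → ℝ) (N : ℕ) :
    ENNReal.ofReal (Real.exp (ε * ∑ k ∈ Finset.range N, a k)) =
      ∏ k ∈ Finset.range N, ENNReal.ofReal (Real.exp (ε * a k)) := by
  rw [Finset.mul_sum, Real.exp_sum, ENNReal.ofReal_prod_of_nonneg fun _ _ => (Real.exp_pos _).le]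

theorem DecouplesScales.exists_affineSup_exp_sum_le {μ : Measure ℝ} [IsProbabilityMeasure μ] {κ : ℝ}
    (hκ : 0 < κ) (hμ : DecouplesScales μ κ) {F : ℝ → ℝ} (hF : UniformContinuous F)
    (hF1 : ∀ u, |F u| ≤ 1) {ε L : ℝ} (hε : 0 < ε) (hL : 0 ≤ L)
    (hFL : ∀ σ s, L ≤ |σ| → ∫ x, F (σ * x + s) ∂μ ≤ ε) :
    ∃ q₀, ∀ q ≥ q₀, ∀ N : ℕ,
      affineSup μ L (fun u => ENNReal.ofReal
        (Real.exp (ε * ∑ k ∈ Finset.range N, F (q ^ k * u)))) ≤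
        ENNReal.ofReal (Real.exp (5 / 2 * ε ^ 2)) ^ N := by
  have hFm : Measurable F := hF.continuous.measurable
  obtain ⟨δ, hδ, hFδ⟩ := Metric.uniformContinuous_iff.1 hF ε hε
  set A : ℝ → ℝ≥0∞ := fun u => ENNReal.ofReal (Real.exp (ε * F u)) with hA
  have hAm : Measurable A := by fun_prop
  have hAc (u v : ℝ) (huv : |u - v| ≤ δ / 2) : A u ≤ ENNReal.ofReal (Real.exp (ε ^ 2)) * A v := by
    rw [hA, ← ENNReal.ofReal_mul (Real.exp_pos _).le, ← Real.exp_add]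
    have : F u - F v ≤ ε :=
      (le_abs_self _).trans (hFδ (show |u - v| < δ by linarith)).le
    exact ENNReal.ofReal_le_ofReal (Real.exp_le_exp.2 (by nlinarith))
  have hAL : affineSup μ L A ≤ ENNReal.ofReal (Real.exp (3 / 2 * ε ^ 2)) :=
    affineSup_le fun σ s hσ =>
      lintegral_exp_mul_le (by fun_prop) (fun _ => hF1 _) hε.le (hFL σ s hσ)
  refine ⟨max 1 (L / (κ * (δ / 2))), fun q hq N => ?_⟩
  have hLq : L ≤ κ * (δ / 2) * q :=
    (div_le_iff₀' (by positivity)).1 ((le_max_right _ _).trans hq)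
  simp only [ofReal_exp_mul_sum]
  calc affineSup μ L (fun u => ∏ k ∈ Finset.range N, A (q ^ k * u))
      ≤ (ENNReal.ofReal (Real.exp (ε ^ 2)) * affineSup μ L A) ^ N :=
        hμ.affineSup_prod_le hAm (by positivity) hAc hL ((le_max_left _ _).trans hq) hLq N
    _ ≤ (ENNReal.ofReal (Real.exp (ε ^ 2)) * ENNReal.ofReal (Real.exp (3 / 2 * ε ^ 2))) ^ N := by
        gcongr
    _ = ENNReal.ofReal (Real.exp (5 / 2 * ε ^ 2)) ^ N := by
        rw [← ENNReal.ofReal_mul (Real.exp_pos _).le, ← Real.exp_add]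
        ring_nf

theorem DecouplesScales.exists_ae_eventually_sum_lt {μ : Measure ℝ} [IsProbabilityMeasure μ] {κ : ℝ}
    (hκ : 0 < κ) (hμ : DecouplesScales μ κ) {F : ℝ → ℝ} (hF : UniformContinuous F)
    (hF1 : ∀ u, |F u| ≤ 1) {ε L : ℝ} (hε : 0 < ε) (hL : 0 ≤ L)
    (hFL : ∀ σ s, L ≤ |σ| → ∫ x, F (σ * x + s) ∂μ ≤ ε) :
    ∃ q₀, ∀ q ≥ q₀, ∀ σ s, L ≤ |σ| → ∀ᵐ x ∂μ, ∀ᶠ N : ℕ in atTop,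
      ∑ k ∈ Finset.range N, F (q ^ k * (σ * x + s)) < 3 * ε * N := by
  have hFm : Measurable F := hF.continuous.measurable
  obtain ⟨q₀, hq₀⟩ := hμ.exists_affineSup_exp_sum_le hκ hF hF1 hε hL hFL
  refine ⟨q₀, fun q hq σ s hσ => ?_⟩
  have rate : ENNReal.ofReal (Real.exp (5 / 2 * ε ^ 2)) <
      ENNReal.ofReal (Real.exp (3 * ε ^ 2)) := by
    rw [ENNReal.ofReal_lt_ofReal_iff (Real.exp_pos _), Real.exp_lt_exp]
    nlinarith [pow_pos hε 2]
  have moment (N : ℕ) := (lintegral_le_affineSup hσ s _).trans (hq₀ q hq N)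
  filter_upwards [ae_eventually_lt_pow (fun N => by fun_prop) rate ENNReal.ofReal_ne_top moment]
    with x hx
  filter_upwards [hx] with N hN
  rw [← ENNReal.ofReal_pow (Real.exp_pos _).le, ← Real.exp_nat_mul,
    ENNReal.ofReal_lt_ofReal_iff (Real.exp_pos _), Real.exp_lt_exp] at hN
  exact lt_of_mul_lt_mul_left (hN.trans_eq (by ring)) hε.le

/-! ### Cesàro means -/

/-- The Cesàro mean of the first `N` terms of `a`; for `N = 0` it is `0`. -/
def cesaroMean {E : Type*} [AddCommGroup E] [Module ℝ E] (a : ℕ → E) (N : ℕ) : E :=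
  (N : ℝ)⁻¹ • ∑ k ∈ Finset.range N, a k

theorem map_cesaroMean {E E' : Type*} [AddCommGroup E] [Module ℝ E] [AddCommGroup E'] [Module ℝ E']
    {𝓕 : Type*} [FunLike 𝓕 E E'] [LinearMapClass 𝓕 ℝ E E'] (ℓ : 𝓕) (a : ℕ → E) (N : ℕ) :
    ℓ (cesaroMean a N) = cesaroMean (fun k => ℓ (a k)) N := by
  simp only [cesaroMean, map_smul, map_sum]

/-- The upper Cesàro mean `limsup (∑ k < N, a k) / N` is at most `c`. -/
def UpperMeanLE (a : ℕ → ℝ) (c : ℝ) : Prop :=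
  ∀ c' > c, ∀ᶠ N : ℕ in atTop, ∑ k ∈ Finset.range N, a k ≤ c' * N

section UpperMean

variable {a : ℕ → ℝ} {c C : ℝ}

theorem upperMeanLE_of_eventually (h : ∀ᶠ N : ℕ in atTop, ∑ k ∈ Finset.range N, a k ≤ c * N) :
    UpperMeanLE a c := fun c' hc' => by
  filter_upwards [h] with N hN
  exact hN.trans (by gcongr)

theorem abs_sum_range_add_sub_le (ha : ∀ k, |a k| ≤ C) (M r : ℕ) :
    |∑ k ∈ Finset.range (M + r), a k - ∑ k ∈ Finset.range M, a k| ≤ r * C := by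
  rw [Finset.sum_range_add, add_sub_cancel_left]
  refine (Finset.abs_sum_le_sum_abs _ _).trans ?_
  simpa only [Finset.card_range, nsmul_eq_mul] using
    Finset.sum_le_card_nsmul (Finset.range r) _ C fun k _ => ha (M + k)

theorem sum_range_mul_eq_sum_residues {E : Type*} [AddCommMonoid E] (a : ℕ → E) (j M : ℕ) :
    ∑ k ∈ Finset.range (j * M), a k =
      ∑ i ∈ Finset.range j, ∑ k ∈ Finset.range M, a (i + j * k) := by
  rw [Finset.sum_comm]
  induction M with
  | zero => simp
  | succ M ih =>
    rw [Nat.mul_succ, Finset.sum_range_add, ih, Finset.sum_range_succ]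
    simp only [add_comm]

theorem UpperMeanLE.of_residues (ha : ∀ k, |a k| ≤ C) {j : ℕ} (hj : 0 < j)
    (h : ∀ i < j, UpperMeanLE (fun k => a (i + j * k)) c) : UpperMeanLE a c := by
  intro c' hc'
  obtain ⟨b, hcb, hbc'⟩ := exists_between hc'
  have classes : ∀ᶠ M : ℕ in atTop, ∑ k ∈ Finset.range (j * M), a k ≤ b * (j * M : ℕ) := by
    have hall : ∀ᶠ M : ℕ in atTop, ∀ i ∈ Finset.range j,
        ∑ k ∈ Finset.range M, a (i + j * k) ≤ b * M :=
      (Finset.eventually_all _).2 fun i hi => h i (Finset.mem_range.1 hi) b hcb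
    filter_upwards [hall] with M hM
    rw [sum_range_mul_eq_sum_residues]
    calc ∑ i ∈ Finset.range j, ∑ k ∈ Finset.range M, a (i + j * k)
        ≤ ∑ _i ∈ Finset.range j, b * M := Finset.sum_le_sum hM
      _ = b * (j * M : ℕ) := by
          rw [Finset.sum_const, Finset.card_range, nsmul_eq_mul]; push_cast; ring
  have room : ∀ᶠ N : ℕ in atTop, j * C + j * |b| ≤ (c' - b) * N :=
    (tendsto_natCast_atTop_atTop.const_mul_atTop (sub_pos.2 hbc')).eventually_ge_atTop _
  filter_upwards [(Nat.tendsto_div_const_atTop hj.ne').eventually classes, room] with N hN hroom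
  have hdiv : j * (N / j) + N % j = N := Nat.div_add_mod N j
  have hmod : ((N % j : ℕ) : ℝ) ≤ j := by exact_mod_cast (Nat.mod_lt N hj).le
  have hC : 0 ≤ C := (abs_nonneg _).trans (ha 0)
  have hrest : ∑ k ∈ Finset.range N, a k - ∑ k ∈ Finset.range (j * (N / j)), a k ≤ j * C := by
    have hbound := abs_sum_range_add_sub_le ha (j * (N / j)) (N % j)
    rw [hdiv] at hbound
    exact (le_abs_self _).trans (hbound.trans (by gcongr))
  have hlen : b * (j * (N / j) : ℕ) ≤ b * N + j * |b| := by
    have hcast : ((j * (N / j) : ℕ) : ℝ) = N - (N % j : ℕ) := by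
      rw [eq_sub_iff_add_eq]; exact_mod_cast hdiv
    rw [hcast]
    nlinarith [neg_abs_le b, abs_nonneg b, (N % j).cast_nonneg (α := ℝ)]
  linarith

theorem UpperMeanLE.of_shift (ha : ∀ k, |a k| ≤ C) (m : ℕ)
    (h : UpperMeanLE (fun k => a (m + k)) c) : UpperMeanLE a c := by
  intro c' hc'
  obtain ⟨b, hcb, hbc'⟩ := exists_between hc'
  have room : ∀ᶠ N : ℕ in atTop, 2 * (m * C) ≤ (c' - b) * N :=
    (tendsto_natCast_atTop_atTop.const_mul_atTop (sub_pos.2 hbc')).eventually_ge_atTop _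
  filter_upwards [h b hcb, room] with N hN hroom
  have hhead := abs_le.1 (abs_sum_range_add_sub_le ha 0 m)
  have htail := abs_le.1 (abs_sum_range_add_sub_le ha N m)
  rw [add_comm N m, Finset.sum_range_add] at htail
  simp only [zero_add, Finset.range_zero, Finset.sum_empty, sub_zero] at hhead
  linarith

theorem tendsto_cesaroMean_zero (h : UpperMeanLE a 0) (h' : UpperMeanLE (fun k => -a k) 0) :
    Tendsto (cesaroMean a) atTop (𝓝 0) := by
  rw [Metric.tendsto_nhds]
  intro ε hε
  filter_upwards [h (ε / 2) (half_pos hε), h' (ε / 2) (half_pos hε), eventually_gt_atTop 0]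
    with N hN hN' hN0
  have hpos : (0 : ℝ) < N := Nat.cast_pos.2 hN0
  rw [Finset.sum_neg_distrib] at hN'
  rw [dist_zero_right, cesaroMean, smul_eq_mul, Real.norm_eq_abs, abs_mul, abs_inv,
    abs_of_pos hpos, inv_mul_lt_iff₀ hpos]
  have : |∑ k ∈ Finset.range N, a k| ≤ ε / 2 * N := abs_le.2 ⟨by linarith, hN⟩
  nlinarith

end UpperMean

/-! ### Means along geometric orbits -/

/-- The averages of `F` along the affine images `(x ↦ σ * x + s)_* μ` tend to zero as `|σ| → ∞`,
uniformly in the translation `s`. -/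
def HasVanishingAffineMeans {E : Type*} [NormedAddCommGroup E] [NormedSpace ℝ E] (μ : Measure ℝ)
    (F : ℝ → E) : Prop :=
  TendstoUniformly (fun σ s : ℝ => ∫ x, F (σ * x + s) ∂μ) 0 (cocompact ℝ)

section GeometricOrbits

variable {E E' : Type*} [NormedAddCommGroup E] [NormedSpace ℝ E] [NormedAddCommGroup E']
  [NormedSpace ℝ E'] {μ : Measure ℝ}

theorem HasVanishingAffineMeans.exists_forall_norm_lt {F : ℝ → E}
    (hF : HasVanishingAffineMeans μ F) {ε : ℝ} (hε : 0 < ε) :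
    ∃ L, 0 ≤ L ∧ ∀ σ s : ℝ, L ≤ |σ| → ‖∫ x, F (σ * x + s) ∂μ‖ < ε := by
  have hev := Metric.tendstoUniformly_iff.1 hF ε hε
  rw [← Metric.cobounded_eq_cocompact, hasBasis_cobounded_norm.eventually_iff] at hev
  obtain ⟨L, -, hL⟩ := hev
  refine ⟨max L 0, le_max_right _ _, fun σ s hσ => ?_⟩
  simpa only [Pi.zero_apply, dist_zero_left] using hL ((le_max_left L 0).trans hσ) s

theorem HasVanishingAffineMeans.clm_comp [CompleteSpace E] [CompleteSpace E']
    {F : ℝ → E} (hF : HasVanishingAffineMeans μ F)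
    (hFint : ∀ σ s : ℝ, Integrable (fun x => F (σ * x + s)) μ) (ℓ : E →L[ℝ] E') :
    HasVanishingAffineMeans μ fun u => ℓ (F u) := by
  have hcomm (σ s : ℝ) : ∫ x, ℓ (F (σ * x + s)) ∂μ = ℓ (∫ x, F (σ * x + s) ∂μ) :=
    ℓ.integral_comp_comm (hFint σ s)
  simp only [HasVanishingAffineMeans, hcomm]
  simpa [Function.comp_def, Pi.zero_def] using ℓ.uniformContinuous.comp_tendstoUniformly hF

variable [IsProbabilityMeasure μ] {κ : ℝ}

theorem DecouplesScales.ae_upperMeanLE_zero (hκ : 0 < κ) (hμ : DecouplesScales μ κ) {F : ℝ → ℝ}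
    (hF : UniformContinuous F) (hF1 : ∀ u, |F u| ≤ 1) (hmean : HasVanishingAffineMeans μ F)
    {β σ : ℝ} (hβ : 1 < β) (hσ : σ ≠ 0) (s : ℝ) :
    ∀ᵐ x ∂μ, UpperMeanLE (fun k => F (β ^ k * (σ * x + s))) 0 := by
  have small (ε : ℝ) (hε : 0 < ε) :
      ∀ᵐ x ∂μ, UpperMeanLE (fun k => F (β ^ k * (σ * x + s))) (3 * ε) := by
    obtain ⟨L, hL0, hL⟩ := hmean.exists_forall_norm_lt hε
    obtain ⟨q₀, hq₀⟩ := hμ.exists_ae_eventually_sum_lt hκ hF hF1 hε hL0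
      fun σ s h => (le_abs_self _).trans (hL σ s h).le
    obtain ⟨m, hm⟩ := pow_unbounded_of_one_lt (L / |σ|) hβ
    obtain ⟨j, hj⟩ := pow_unbounded_of_one_lt (max q₀ 1) hβ
    have hj0 : 0 < j := pos_of_ne_zero (by rintro rfl; simp at hj)
    have hclass (i : ℕ) : ∀ᵐ x ∂μ,
        UpperMeanLE (fun k => F (β ^ (m + (i + j * k)) * (σ * x + s))) (3 * ε) := by
      have hslope : L ≤ |β ^ (m + i) * σ| := by
        rw [abs_mul, abs_of_pos (by positivity), ← div_le_iff₀ (abs_pos.2 hσ)]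
        exact hm.le.trans (pow_le_pow_right₀ hβ.le (m.le_add_right i))
      filter_upwards [hq₀ (β ^ j) ((le_max_left _ _).trans hj.le) _ (β ^ (m + i) * s) hslope]
        with x hx
      refine upperMeanLE_of_eventually ?_
      filter_upwards [hx] with N hN
      refine le_of_eq_of_le (Finset.sum_congr rfl fun k _ => ?_) hN.le
      congr 1
      ring
    filter_upwards [ae_all_iff.2 hclass] with x hx
    exact .of_shift (fun _ => hF1 _) m <|
      .of_residues (fun _ => hF1 _) hj0 fun i _ => hx i
  filter_upwards [ae_all_iff.2 fun n : ℕ => small (1 / ((n : ℝ) + 1)) Nat.one_div_pos_of_nat]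
    with x hx
  intro c hc
  obtain ⟨n, hn⟩ := exists_nat_one_div_lt (show 0 < c / 3 by linarith)
  exact hx n c (by linarith)

theorem DecouplesScales.ae_tendsto_cesaroMean (hκ : 0 < κ) (hμ : DecouplesScales μ κ) {F : ℝ → ℂ}
    (hF : UniformContinuous F) (hF1 : ∀ u, ‖F u‖ ≤ 1) (hmean : HasVanishingAffineMeans μ F)
    {β σ : ℝ} (hβ : 1 < β) (hσ : σ ≠ 0) (s : ℝ) :
    ∀ᵐ x ∂μ, Tendsto (cesaroMean fun k => F (β ^ k * (σ * x + s))) atTop (𝓝 0) := by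
  have hint (σ s : ℝ) : Integrable (fun x => F (σ * x + s)) μ :=
    .of_bound (hF.continuous.comp (by fun_prop)).aestronglyMeasurable 1 (.of_forall fun _ => hF1 _)
  have component (ℓ : ℂ →L[ℝ] ℝ) (hℓ : ∀ z, |ℓ z| ≤ ‖z‖) :
      ∀ᵐ x ∂μ, UpperMeanLE (fun k => ℓ (F (β ^ k * (σ * x + s)))) 0 :=
    hμ.ae_upperMeanLE_zero hκ (ℓ.uniformContinuous.comp hF) (fun u => (hℓ _).trans (hF1 u))
      (hmean.clm_comp hint ℓ) hβ hσ s
  have projection (ℓ : ℂ →L[ℝ] ℝ) (hℓ : ∀ z, |ℓ z| ≤ ‖z‖) :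
      ∀ᵐ x ∂μ, Tendsto (fun N => ℓ (cesaroMean (fun k => F (β ^ k * (σ * x + s))) N)) atTop
        (𝓝 0) := by
    filter_upwards [component ℓ hℓ, component (-ℓ) fun z => by simpa using hℓ z] with x hx hx'
    simp only [map_cesaroMean]
    exact tendsto_cesaroMean_zero hx hx'
  filter_upwards [projection Complex.reCLM Complex.abs_re_le_norm,
    projection Complex.imCLM Complex.abs_im_le_norm] with x hre him
  rw [← map_zero Complex.equivRealProdCLM.symm]
  exact (Complex.equivRealProdCLM.symm.continuous.tendsto (0, 0)).comp (hre.prodMk_nhds him)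

end GeometricOrbits

/-! ### Equidistribution on the circle -/

theorem norm_cesaroMean_le {E : Type*} [SeminormedAddCommGroup E] [NormedSpace ℝ E] {a : ℕ → E}
    {C : ℝ} (hC : 0 ≤ C) (ha : ∀ k, ‖a k‖ ≤ C) (N : ℕ) : ‖cesaroMean a N‖ ≤ C := by
  rcases N.eq_zero_or_pos with rfl | hN
  · simpa [cesaroMean] using hC
  rw [cesaroMean, norm_smul, norm_inv, Real.norm_natCast, inv_mul_le_iff₀ (Nat.cast_pos.2 hN)]
  simpa using norm_sum_le_of_le (Finset.range N) fun k _ => ha k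

theorem tendsto_cesaroMean_const {E : Type*} [AddCommGroup E] [Module ℝ E] [TopologicalSpace E]
    (c : E) : Tendsto (cesaroMean fun _ => c) atTop (𝓝 c) := by
  refine tendsto_const_nhds.congr' ?_
  filter_upwards [eventually_ne_atTop 0] with N hN
  rw [cesaroMean, Finset.sum_const, Finset.card_range, ← Nat.cast_smul_eq_nsmul ℝ,
    inv_smul_smul₀ (Nat.cast_ne_zero.2 hN)]

theorem tendsto_clm_of_span_dense {𝕜 V W : Type*} [NontriviallyNormedField 𝕜]
    [SeminormedAddCommGroup V] [NormedSpace 𝕜 V] [SeminormedAddCommGroup W] [NormedSpace 𝕜 W]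
    {α : Type*} {l : Filter α} {A : α → V →L[𝕜] W} {Λ : V →L[𝕜] W} {C : NNReal}
    (hA : ∀ N, ‖A N‖₊ ≤ C) {S : Set V} (hS : (Submodule.span 𝕜 S).topologicalClosure = ⊤)
    (h : ∀ f ∈ S, Tendsto (A · f) l (𝓝 (Λ f))) (f : V) : Tendsto (A · f) l (𝓝 (Λ f)) := by
  have hclosed : IsClosed {f | Tendsto (A · f) l (𝓝 (Λ f))} :=
    (LipschitzWith.uniformEquicontinuous (fun N => A N) C fun N =>
      (A N).lipschitz.weaken (hA N)).equicontinuous.isClosed_setOfPred_tendsto Λ.continuous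
  have hspan : (Submodule.span 𝕜 S : Set V) ⊆ {f | Tendsto (A · f) l (𝓝 (Λ f))} := fun f hf => by
    induction hf using Submodule.span_induction with
    | mem f hf => exact h f hf
    | zero => simpa only [map_zero, mem_ofPred_eq] using tendsto_const_nhds
    | add f g _ _ hf hg => simpa only [map_add, mem_ofPred_eq] using Tendsto.add hf hg
    | smul c f _ hf => simpa only [map_smul, mem_ofPred_eq] using Tendsto.const_smul hf c
  exact closure_minimal hspan hclosed (Submodule.dense_iff_topologicalClosure_eq_top.2 hS f)

theorem exists_clm_eq_integral {X : Type*} [TopologicalSpace X] [CompactSpace X]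
    [MeasurableSpace X] [BorelSpace X] (ν : Measure X) [IsFiniteMeasure ν] :
    ∃ Λ : C(X, ℂ) →L[ℂ] ℂ, ∀ f, Λ f = ∫ x, f x ∂ν := by
  refine ⟨L1.integralCLM' ℂ ∘L ContinuousMap.toLp 1 ν ℂ, fun f => ?_⟩
  rw [← integral_congr_ae (ContinuousMap.coeFn_toLp (p := 1) (𝕜 := ℂ) ν f),
    ← L1.integral_eq_integral, L1.integral_eq' ℂ]
  rfl

theorem tendsto_cesaroMean_integral_of_span_dense {X : Type*} [TopologicalSpace X] [CompactSpace X]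
    [MeasurableSpace X] [BorelSpace X] {ν : Measure X} [IsFiniteMeasure ν] {u : ℕ → X}
    {S : Set C(X, ℂ)} (hS : (Submodule.span ℂ S).topologicalClosure = ⊤)
    (h : ∀ f ∈ S, Tendsto (cesaroMean fun k => f (u k)) atTop (𝓝 (∫ x, f x ∂ν))) (f : C(X, ℂ)) :
    Tendsto (cesaroMean fun k => f (u k)) atTop (𝓝 (∫ x, f x ∂ν)) := by
  obtain ⟨Λ, hΛ⟩ := exists_clm_eq_integral ν
  set A : ℕ → C(X, ℂ) →L[ℂ] ℂ := cesaroMean fun k => ContinuousMap.evalCLM ℂ (u k) with hA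
  have hAf (f : C(X, ℂ)) : (A · f) = cesaroMean fun k => f (u k) := by
    funext N
    simp [hA, cesaroMean]
  have hA1 (N : ℕ) : ‖A N‖₊ ≤ 1 :=
    norm_cesaroMean_le zero_le_one (fun k => ContinuousLinearMap.opNorm_le_bound _ zero_le_one
      fun f => (f.norm_coe_le_norm (u k)).trans_eq (one_mul _).symm) N
  simp only [← hAf, ← hΛ] at h ⊢
  exact tendsto_clm_of_span_dense hA1 hS h f

theorem integral_fourier_eq_zero {m : ℤ} (hm : m ≠ 0) :
    ∫ z : UnitAddCircle, fourier m z = 0 := by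
  have h := integral_add_right_eq_self (μ := (volume : Measure UnitAddCircle))
    (fun z : UnitAddCircle => fourier m z) ((1 / 2 / m : ℝ) : UnitAddCircle)
  simp only [fourier_add_half_inv_index hm one_pos, integral_neg] at h
  exact self_eq_neg.1 h.symm

theorem tendsto_cesaroMean_integral_of_fourier {u : ℕ → UnitAddCircle}
    (h : ∀ m : ℤ, m ≠ 0 → Tendsto (cesaroMean fun k => fourier m (u k)) atTop (𝓝 0))
    (g : C(UnitAddCircle, ℂ)) :
    Tendsto (cesaroMean fun k => g (u k)) atTop (𝓝 (∫ z, g z)) := by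
  refine tendsto_cesaroMean_integral_of_span_dense span_fourier_closure_eq_top ?_ g
  rintro _ ⟨m, rfl⟩
  rcases eq_or_ne m 0 with rfl | hm
  · simpa [measureReal_def] using tendsto_cesaroMean_const (1 : ℂ)
  · rw [integral_fourier_eq_zero hm]
    exact h m hm

theorem pNormal_of_fourier {P : ℕ} {x : ℝ} (h : ∀ m : ℤ, m ≠ 0 → Tendsto
      (cesaroMean fun k => fourier m ((P ^ k * (P * x) : ℝ) : UnitAddCircle)) atTop (𝓝 0)) :
    PNormal P x := by
  intro g
  have hg := (Complex.continuous_re.tendsto _).comp <|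
    tendsto_cesaroMean_integral_of_fourier h ⟨fun z => (g z : ℂ), by fun_prop⟩
  have hmean (N : ℕ) : Complex.reCLM
      (cesaroMean (fun k => (g ((P ^ k * (P * x) : ℝ) : UnitAddCircle) : ℂ)) N) =
        (N : ℝ)⁻¹ * ∑ k ∈ Finset.Icc 1 N, g ((P ^ k * x : ℝ) : UnitAddCircle) := by
    rw [map_cesaroMean]
    simp only [cesaroMean, smul_eq_mul, Complex.reCLM_apply, Complex.ofReal_re]
    have hshift := Finset.sum_Ico_add'
      (fun k => g ((P ^ k * x : ℝ) : UnitAddCircle)) 0 N 1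
    rw [zero_add, Finset.Ico_add_one_right_eq_Icc] at hshift
    rw [← hshift, Finset.range_eq_Ico]
    simp only [pow_succ, mul_assoc]
  have hint : (∫ z, (g z : ℂ)).re = ∫ z, g z := by
    rw [integral_complex_ofReal, Complex.ofReal_re]
  simp only [← hmean, ← hint]
  exact hg

/-! ### Normality of Rajchman measures -/

theorem uniformContinuous_fourier (m : ℤ) :
    UniformContinuous fun u : ℝ => fourier m (u : UnitAddCircle) :=
  (CompactSpace.uniformContinuous_of_continuous (fourier m).continuous).comp <|
    uniformContinuous_addMonoidHom_of_continuous
      (f := QuotientAddGroup.mk' (AddSubgroup.zmultiples (1 : ℝ))) continuous_quotient_mk'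

theorem Rajchman.hasVanishingAffineMeans_fourier {μ : Measure ℝ} (hμ : Rajchman μ) {m : ℤ}
    (hm : m ≠ 0) : HasVanishingAffineMeans μ fun u => fourier m (u : UnitAddCircle) := by
  have hnorm (σ s : ℝ) : ‖∫ x, fourier m ((σ * x + s : ℝ) : UnitAddCircle) ∂μ‖ =
      ‖fourierTransform μ (m * σ)‖ := by
    have translate (x : ℝ) : fourier m ((σ * x + s : ℝ) : UnitAddCircle) =
        fourier m (s : UnitAddCircle) *
          Complex.exp (((2 * Real.pi * (m * σ) * x : ℝ) : ℂ) * Complex.I) := by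
      simp only [fourier_coe_apply, ← Complex.exp_add]
      push_cast
      ring_nf
    simp only [translate, integral_const_mul, norm_mul, fourier_apply, Circle.norm_coe, one_mul,
      fourierTransform]
  refine Metric.tendstoUniformly_iff.2 fun ε hε => ?_
  have hlim : Tendsto (fun σ : ℝ => fourierTransform μ (m * σ)) (cocompact ℝ) (𝓝 0) :=
    hμ.comp (tendsto_cocompact_mul_left₀ (Int.cast_ne_zero.2 hm))
  filter_upwards [Metric.tendsto_nhds.1 hlim ε hε] with σ hσ s
  rwa [Pi.zero_apply, dist_zero_left, hnorm, ← dist_zero_right]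

theorem DecouplesScales.pointwiseAbsolutelyNormal {μ : Measure ℝ} [IsProbabilityMeasure μ] {κ : ℝ}
    (hκ : 0 < κ) (hμ : DecouplesScales μ κ) (hRaj : Rajchman μ) : PointwiseAbsolutelyNormal μ := by
  have characters (P : ℕ) (m : ℤ) : ∀ᵐ x ∂μ, 2 ≤ P → m ≠ 0 → Tendsto
      (cesaroMean fun k => fourier m ((P ^ k * (P * x) : ℝ) : UnitAddCircle)) atTop (𝓝 0) := by
    by_cases hPm : 2 ≤ P ∧ m ≠ 0
    · have hP1 : (1 : ℝ) < P := Nat.one_lt_cast.2 hPm.1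
      filter_upwards [hμ.ae_tendsto_cesaroMean hκ (uniformContinuous_fourier m)
        (fun u => (Circle.norm_coe _).le) (hRaj.hasVanishingAffineMeans_fourier hPm.2) hP1
        (zero_lt_one.trans hP1).ne' 0] with x hx _ _
      simpa only [add_zero] using hx
    · exact .of_forall fun x hP hm => (hPm ⟨hP, hm⟩).elim
  filter_upwards [ae_all_iff.2 fun P => ae_all_iff.2 (characters P)] with x hx P hP
  exact pNormal_of_fourier fun m hm => hx P m hP hm

theorem exists_forall_mem_Icc_of_forall_mem_Ioo {ι α : Type*} [Finite ι] [LinearOrder α]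
    [NoMinOrder α] [NoMaxOrder α] {a b : α} {f : ι → α} (hf : ∀ i, f i ∈ Ioo a b) :
    ∃ a' > a, ∃ b' < b, ∀ i, f i ∈ Icc a' b' := by
  rcases isEmpty_or_nonempty ι with _ | _
  · obtain ⟨a', ha'⟩ := exists_gt a
    obtain ⟨b', hb'⟩ := exists_lt b
    exact ⟨a', ha', b', hb', isEmptyElim⟩
  · obtain ⟨i, hi⟩ := Finite.exists_min f
    obtain ⟨j, hj⟩ := Finite.exists_max f
    exact ⟨f i, (hf i).1, f j, (hf j).2, fun k => ⟨hi k, hj k⟩⟩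

theorem stmt7_general {ι : Type*} {r t : ι → ℝ} {p : ι → ℝ≥0∞} {μ : Measure ℝ}
    [IsProbabilityMeasure μ] (hμ : IsSelfSimilar r t p μ)
    (hr : ∃ ρ' > 0, ∃ ρ < 1, ∀ i, |r i| ∈ Icc ρ' ρ) (ht : Bornology.IsBounded (range t))
    (hRaj : Rajchman μ) : PointwiseAbsolutelyNormal μ := by
  obtain ⟨ρ', hρ', ρ, hρ1, hrI⟩ := hr
  obtain ⟨T, hT⟩ := isBounded_iff_forall_norm_le.1 ht
  obtain ⟨i⟩ := hμ.nonempty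
  have hρ0 : 0 < ρ := hρ'.trans_le ((hrI i).1.trans (hrI i).2)
  obtain ⟨D, hD⟩ := hμ.exists_ae_abs_le hρ0 hρ1 (fun i => (hrI i).2) fun i => hT _ ⟨i, rfl⟩
  have hsupp : ∀ᵐ x ∂μ, |x| ≤ max D 1 := hD.mono fun x hx => hx.trans (le_max_left D 1)
  have hpos : 0 < max D 1 := zero_lt_one.trans_le (le_max_right D 1)
  have decouples : DecouplesScales μ (ρ' / (2 * max D 1)) :=
    hμ.decouplesScales hρ1 (fun i => (hrI i).1) (fun i => (hrI i).2) hpos hsupp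
  exact decouples.pointwiseAbsolutelyNormal (by positivity) hRaj

theorem stmt7 {n : ℕ} (hn : 2 ≤ n) (r t : Fin n → ℝ) (f : Fin n → ℝ → ℝ)
    (hf : ∀ i x, f i x = r i * x + t i)
    (hr : ∀ i, 0 < |r i| ∧ |r i| < 1)
    (a b : ℝ) (hab : a < b)
    (hmaps : ∀ i, MapsTo (f i) (Icc a b) (Icc a b))
    (hfix : ∃ i j : Fin n, ∃ y ∈ Icc a b, ∃ z ∈ Icc a b, f i y = y ∧ f j z = z ∧ y ≠ z)
    (p : Fin n → ℝ≥0∞) (hp : ∀ i, 0 < p i) (hp1 : ∑ i, p i = 1)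
    (μ : Measure ℝ) (hμP : IsProbabilityMeasure μ)
    (hμ : μ = ∑ i, p i • μ.map (f i))
    (hRaj : Rajchman μ) :
    PointwiseAbsolutelyNormal μ := by
  have hself : IsSelfSimilar r t p μ := by
    simpa only [IsSelfSimilar, Measure.sum_fintype, ← hf] using hμ
  exact stmt7_general hself (exists_forall_mem_Icc_of_forall_mem_Ioo hr) (finite_range t).isBounded
    hRaj
end
end
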